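/- arXiv:2106.05821 — 2 statements merged into one kernel-verified Lean document; each statement's English description precedes it below -/
import Mathlib

section
/- (Classical Hanna Neumann conjecture.) For any nontrivial finitely generated subgroups A and B of a free group F, one has rank(A ∩ B) − 1 ≤ (rank(A) − 1) · (rank(B) − 1). -/
/-- The rank of a group `H` (as an element of `ℕ∞`): the minimal cardinality of a finite
generating set of `H`, or `⊤` if `H` is not finitely generated. -/
noncomputable def grank (H : Type*) [Group H] : ℕ∞ :=
  sInf {n : ℕ∞ | ∃ s : Finset H, Subgroup.closure (s : Set H) = ⊤ ∧ n = s.card}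

namespace HannaNeumann

open FreeGroup

/-! ### A left-invariant linear order on a free group -/

section Order

variable {α : Type*}

/-- The inverse of a letter. -/
def inverseLetter (a : α × Bool) : α × Bool := (a.1, !a.2)

open Classical in
/-- The comparison of two letters with respect to a fixed well-order, as a sign. -/
noncomputable def compareSign (a b : α × Bool) : ℤ :=
  if WellOrderingRel a b then 1 else if a = b then 0 else -1

/-- The exponent of a letter. -/
def exponentSign (a : α × Bool) : ℤ := if a.2 then 1 else -1

/-- The contribution of the turn between two consecutive words. -/
noncomputable def turn (A B : List (α × Bool)) : ℤ :=
  match A.getLast?, B.head? with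
  | some a, some b => compareSign (inverseLetter a) b
  | _, _ => 0

/-- The sum of all exponents and all turns of a word. -/
noncomputable def weight : List (α × Bool) → ℤ
  | [] => 0
  | a :: L => exponentSign a + turn [a] L + weight L

lemma inverseLetter_inverseLetter (a : α × Bool) : inverseLetter (inverseLetter a) = a := by
  simp [inverseLetter]

lemma compareSign_swap (a b : α × Bool) : compareSign b a = -compareSign a b := by
  unfold compareSign
  rcases trichotomous_of WellOrderingRel a b with h | h | h
  · have h1 : ¬ WellOrderingRel b a := asymm_of _ h
    have h2 : b ≠ a := by rintro rfl; exact h1 h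
    simp [h, h1, h2]
  · subst h; simp [irrefl_of WellOrderingRel a]
  · have h1 : ¬ WellOrderingRel a b := asymm_of _ h
    have h2 : a ≠ b := by rintro rfl; exact h1 h
    simp [h, h1, h2]

lemma abs_compareSign_cycle_le (a b c : α × Bool) :
    |compareSign a b + compareSign b c - compareSign a c| ≤ 1 := by
  have key : ∀ p q r : α × Bool, WellOrderingRel p q → WellOrderingRel q r → WellOrderingRel p r :=
    fun p q r => trans_of WellOrderingRel
  have irr : ∀ p : α × Bool, ¬ WellOrderingRel p p := irrefl_of WellOrderingRel
  unfold compareSign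
  rcases trichotomous_of WellOrderingRel a b with h | h | h <;>
  rcases trichotomous_of WellOrderingRel b c with h' | h' | h' <;>
  rcases trichotomous_of WellOrderingRel a c with h'' | h'' | h'' <;>
  grind

lemma abs_compareSign_le (a b : α × Bool) : |compareSign a b| ≤ 1 := by
  unfold compareSign; split_ifs <;> simp

lemma odd_compareSign {a b : α × Bool} (h : a ≠ b) : Odd (compareSign a b) := by
  unfold compareSign; split_ifs <;> simp_all

lemma odd_exponentSign (a : α × Bool) : Odd (exponentSign a) := by
  unfold exponentSign; split_ifs <;> simp

lemma weight_append (A B : List (α × Bool)) :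
    weight (A ++ B) = weight A + turn A B + weight B := by
  induction A with
  | nil => simp [weight, turn]
  | cons a A ih =>
    rcases List.eq_nil_or_concat A with rfl | ⟨A', c, rfl⟩
    · simp [weight, turn]
    · rw [List.cons_append, weight, ih, weight]
      have h1 : turn (a :: (A' ++ [c])) B = turn (A' ++ [c]) B := by
        have : (a :: (A' ++ [c])).getLast? = some c := by
          rw [← List.cons_append, List.getLast?_concat]
        simp [turn, this]
      have h2 : turn [a] (A' ++ [c] ++ B) = turn [a] (A' ++ [c]) := by
        cases A' <;> simp [turn]
      simp only [List.concat_eq_append, h1, h2]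
      ring

lemma weight_invRev (L : List (α × Bool)) : weight (invRev L) = -weight L := by
  induction L with
  | nil => simp [weight]
  | cons a L ih =>
    have h1 : turn (invRev L) [inverseLetter a] = -turn [a] L := by
      cases L with
      | nil => simp [turn]
      | cons b L =>
        rw [invRev_cons]
        simp only [turn, invRev, List.map_cons, List.map_nil, List.reverse_cons, List.reverse_nil,
          List.nil_append, List.getLast?_append, List.getLast?_singleton, List.head?_cons,
          Option.some_or]
        rw [← compareSign_swap]
        congr 1
        simp [inverseLetter]
    have h2 : invRev [a] = [inverseLetter a] := by simp [invRev, inverseLetter]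
    rw [invRev_cons, weight_append, ih, h2, h1, weight, weight]
    have h3 : exponentSign (inverseLetter a) = -exponentSign a := by
      rcases a with ⟨a, _ | _⟩ <;> simp [exponentSign, inverseLetter]
    simp [h3, turn, weight]
    ring

lemma odd_weight {L : List (α × Bool)} (h : IsReduced L) (hL : L ≠ []) : Odd (weight L) := by
  induction L with
  | nil => simp at hL
  | cons a L ih =>
    cases L with
    | nil => simpa [weight, turn] using odd_exponentSign a
    | cons b L =>
      have hb := ih (List.IsChain.tail h) (by simp)
      have hab : inverseLetter a ≠ b := by
        rintro rfl
        have := (List.isChain_cons_cons.1 h).1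
        simp [inverseLetter] at this
      have h1 : turn [a] (b :: L) = compareSign (inverseLetter a) b := by simp [turn]
      rw [weight, h1]
      exact ((odd_exponentSign a).add_odd (odd_compareSign hab)).add_odd hb

/-- Two reduced words multiply by cancelling a maximal common piece. -/
lemma exists_cancellation (A B : List (α × Bool)) (hA : IsReduced A) (hB : IsReduced B) :
    ∃ A' B' C, A = A' ++ C ∧ B = invRev C ++ B' ∧ IsReduced (A' ++ B') := by
  induction B generalizing A with
  | nil => exact ⟨A, [], [], by simp, by simp, by simpa⟩
  | cons b B ih =>
    by_cases hc : A.getLast? = some (inverseLetter b)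
    · obtain ⟨A₁, rfl⟩ : ∃ A₁, A = A₁ ++ [inverseLetter b] := by
        rcases List.eq_nil_or_concat A with rfl | ⟨A', c, rfl⟩
        · simp at hc
        · exact ⟨A', by simpa using hc⟩
      obtain ⟨A', B', C, rfl, rfl, h⟩ := ih A₁ (List.IsChain.left_of_append hA)
        (List.IsChain.tail hB)
      exact ⟨A', B', C ++ [inverseLetter b], by simp, by simp [invRev, inverseLetter], h⟩
    · refine ⟨A, b :: B, [], by simp, by simp, ?_⟩
      refine List.isChain_append.2 ⟨hA, hB, ?_⟩
      intro x hx y hy hxy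
      simp only [List.head?_cons, Option.mem_def, Option.some.injEq] at hy
      subst hy
      by_contra hne
      apply hc
      rw [Option.mem_def.1 hx]
      congr 1
      ext
      · simp [inverseLetter, hxy]
      · simp only [inverseLetter]
        revert hne; cases x.2 <;> cases b.2 <;> simp

variable [DecidableEq α]

lemma weight_toWord_mul_ge (g h : FreeGroup α) :
    weight g.toWord + weight h.toWord - 1 ≤ weight (g * h).toWord := by
  obtain ⟨A, B, C, hA, hB, hred⟩ :=
    exists_cancellation g.toWord h.toWord isReduced_toWord isReduced_toWord
  have hgh : (g * h).toWord = A ++ B := by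
    rw [← hred.reduce_eq, ← toWord_mk]
    congr 1
    rw [← mk_toWord (x := g), ← mk_toWord (x := h), hA, hB, ← mul_mk, ← mul_mk, ← mul_mk, ← inv_mk]
    group
  rw [hgh, hA, hB, weight_append, weight_append, weight_append, weight_invRev]
  suffices turn A C + turn (invRev C) B - turn A B ≤ 1 by linarith
  refine (le_abs_self _).trans ?_
  have hC : (invRev C).getLast? = C.head?.map inverseLetter := by
    cases C with
    | nil => simp
    | cons c C => rw [invRev_cons]; simp [invRev, inverseLetter]
  unfold turn
  rw [hC]
  rcases A.getLast? with _ | a <;> rcases C.head? with _ | c <;> rcases B.head? with _ | b <;>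
    simp [inverseLetter_inverseLetter, abs_compareSign_le, abs_compareSign_cycle_le]

/-- Every free group carries a left-invariant linear order. -/
lemma exists_leftInvariant_order (α : Type*) :
    ∃ o : LinearOrder (FreeGroup α), ∀ a b c : FreeGroup α, o.lt b c → o.lt (a * b) (a * c) := by
  classical
  let pos : FreeGroup α → Prop := fun g => 0 < weight g.toWord
  have pos_mul : ∀ g h, pos g → pos h → pos (g * h) := by
    intro g h hg hh
    have := weight_toWord_mul_ge g h
    simp only [pos] at *
    lia
  have not_pos_one : ¬ pos 1 := by simp [pos, weight]
  have pos_or : ∀ g, g ≠ 1 → pos g ∨ pos g⁻¹ := by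
    intro g hg
    have h := odd_weight (isReduced_toWord (x := g)) (by simpa using hg)
    simp only [pos, toWord_inv, weight_invRev]
    rcases h with ⟨k, hk⟩
    lia
  let r : FreeGroup α → FreeGroup α → Prop := fun g h => pos (g⁻¹ * h)
  have : IsStrictTotalOrder (FreeGroup α) r :=
    { irrefl := fun g => by simpa [r] using not_pos_one
      trans := fun g h k h1 h2 => by
        have := pos_mul _ _ h1 h2
        simpa [r, mul_assoc] using this
      trichotomous := fun g h h1 h2 => by
        by_contra hne
        rcases pos_or (g⁻¹ * h) (by rwa [ne_eq, inv_mul_eq_one]) with h | h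
        · exact h1 h
        · exact h2 (by simpa [r] using h) }
  refine ⟨linearOrderOfSTO r, fun a b c h => ?_⟩
  change pos _
  have h' : pos (b⁻¹ * c) := h
  simpa [mul_assoc] using h'

end Order

/-! ### The Cayley tree of a free group -/

section Tree

variable {α : Type*}

/-- An edge of the Cayley tree of `FreeGroup α`, from `src` to `src * of label`. -/
@[ext] structure Edge (α : Type*) where
  /-- the initial vertex -/
  src : FreeGroup α
  /-- the generator labelling the edge -/
  label : α

/-- The terminal vertex of an edge. -/
def Edge.tgt (e : Edge α) : FreeGroup α := e.src * of e.label

instance : MulAction (FreeGroup α) (Edge α) where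
  smul g e := ⟨g * e.src, e.label⟩
  one_smul e := by ext <;> simp [HSMul.hSMul]
  mul_smul g h e := by ext <;> simp [HSMul.hSMul, mul_assoc]

@[simp] lemma smul_src (g : FreeGroup α) (e : Edge α) : (g • e).src = g * e.src := rfl

@[simp] lemma smul_label (g : FreeGroup α) (e : Edge α) : (g • e).label = e.label := rfl

@[simp] lemma smul_tgt (g : FreeGroup α) (e : Edge α) : (g • e).tgt = g * e.tgt := by
  simp [Edge.tgt, mul_assoc]

lemma smul_edge_cancel {g h : FreeGroup α} {e : Edge α} (H : g • e = h • e) : g = h := by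
  simpa using congrArg Edge.src H

/-- The edge `e` joins the vertices `g` and `h`. -/
def Edge.Joins (e : Edge α) (g h : FreeGroup α) : Prop :=
  (e.src = g ∧ e.tgt = h) ∨ (e.src = h ∧ e.tgt = g)

lemma Edge.Joins.symm {e : Edge α} {g h : FreeGroup α} (H : e.Joins g h) : e.Joins h g :=
  Or.symm H

lemma Edge.Joins.smul {e : Edge α} {g h : FreeGroup α} (H : e.Joins g h) (k : FreeGroup α) :
    (k • e).Joins (k * g) (k * h) := by
  rcases H with ⟨rfl, rfl⟩ | ⟨rfl, rfl⟩ <;> simp [Edge.Joins]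

lemma edge_induction {P : FreeGroup α → Prop} (one : P 1)
    (step : ∀ (e : Edge α) (g h : FreeGroup α), e.Joins g h → P g → P h) (g : FreeGroup α) :
    P g := by
  suffices ∀ k, P k → P (k * g) by simpa using this 1 one
  induction g using FreeGroup.induction_on with
  | C1 => simp
  | of x => exact fun k hk => step ⟨k, x⟩ _ _ (Or.inl ⟨rfl, rfl⟩) hk
  | inv_of x _ =>
    exact fun k hk => step ⟨k * (of x)⁻¹, x⟩ k _ (Or.inr ⟨rfl, by simp [Edge.tgt]⟩) hk
  | mul x y hx hy => exact fun k hk => by rw [← mul_assoc]; exact hy _ (hx _ hk)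

variable [DecidableEq α]

/-- The vertices that are separated from `e.src` by the edge `e`. -/
def Edge.beyond (e : Edge α) : Set (FreeGroup α) :=
  {g | (g⁻¹ * e.src).toWord.getLast? = some (e.label, false)}

/-- The set of edges separating two vertices, that is, the edges of the geodesic joining them. -/
def cross (g h : FreeGroup α) : Set (Edge α) :=
  {e | ¬(g ∈ e.beyond ↔ h ∈ e.beyond)}

lemma smul_mem_beyond (g h : FreeGroup α) (e : Edge α) :
    g * h ∈ (g • e).beyond ↔ h ∈ e.beyond := by
  simp [Edge.beyond, mul_assoc]

lemma smul_mem_cross {g a b : FreeGroup α} {e : Edge α} :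
    g • e ∈ cross (g * a) (g * b) ↔ e ∈ cross a b := by
  simp [cross, smul_mem_beyond]

lemma mem_cross_mul_left {g a b : FreeGroup α} {e : Edge α} :
    e ∈ cross (g * a) (g * b) ↔ g⁻¹ • e ∈ cross a b := by
  rw [← smul_mem_cross (g := g) (e := g⁻¹ • e), smul_inv_smul]

@[simp] lemma cross_self (g : FreeGroup α) : cross g g = ∅ := by simp [cross]

lemma cross_comm (g h : FreeGroup α) : cross g h = cross h g := by
  ext e; simp only [cross, Set.mem_ofPred_eq]; tauto

lemma mem_cross_iff_xor (a b c : FreeGroup α) (e : Edge α) :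
    e ∈ cross a c ↔ (e ∈ cross a b ↔ e ∉ cross b c) := by
  simp only [cross, Set.mem_ofPred_eq]; tauto

lemma cross_subset_union (a b c : FreeGroup α) : cross a c ⊆ cross a b ∪ cross b c := by
  intro e; simp only [cross, Set.mem_ofPred_eq, Set.mem_union]; tauto

lemma toWord_letter_mul (x : α × Bool) (g : FreeGroup α) :
    (mk [x] * g).toWord = if g.toWord.head? = some (inverseLetter x) then g.toWord.tail
      else x :: g.toWord := by
  have h : (mk [x] * g).toWord = reduce (x :: g.toWord) := by
    rw [toWord_mul, toWord_mk, reduce_singleton, List.singleton_append]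
  rw [h, reduce.cons, reduce_toWord]
  cases g.toWord with
  | nil => simp
  | cons y L =>
    simp only [List.head?_cons, Option.some.injEq, List.tail_cons]
    congr 1
    simp only [inverseLetter, Prod.ext_iff, eq_iff_iff]
    constructor
    · rintro ⟨h1, h2⟩; simp [h1, h2]
    · rintro ⟨h1, h2⟩; simp [h1, h2]

lemma mem_cross_src_tgt {e e' : Edge α} : e' ∈ cross e.src e.tgt ↔ e' = e := by
  have hinv : (e.tgt)⁻¹ * e'.src = mk [(e.label, false)] * (e.src⁻¹ * e'.src) := by
    have : mk [(e.label, false)] = (of e.label)⁻¹ := by simp [of, inv_mk, invRev]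
    rw [this, Edge.tgt]; group
  simp only [cross, Edge.beyond, Set.mem_ofPred_eq, hinv, toWord_letter_mul]
  have hnil : (e.src⁻¹ * e'.src).toWord = [] ↔ e.src = e'.src := by
    rw [toWord_eq_nil_iff, inv_mul_eq_one]
  generalize (e.src⁻¹ * e'.src).toWord = w at hnil
  cases w with
  | nil =>
    have hs : e.src = e'.src := by simpa using hnil
    simp only [List.getLast?_nil, List.head?_nil]
    constructor
    · intro h
      ext
      · exact hs.symm
      · simpa [eq_comm] using h
    · rintro rfl; simp
  | cons y L =>
    have hs : e.src ≠ e'.src := by simpa using hnil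
    have hne : e' ≠ e := fun h => hs (by rw [h])
    simp only [hne, iff_false, not_not]
    split_ifs with h
    · have hy : y = (e.label, true) := by simpa [inverseLetter] using h
      cases L with
      | nil => simp [hy]
      | cons z L => simp [List.getLast?_cons_cons]
    · rw [List.getLast?_cons_cons]

lemma Edge.Joins.mem_cross_iff {e e' : Edge α} {g h : FreeGroup α} (H : e.Joins g h) :
    e' ∈ cross g h ↔ e' = e := by
  rcases H with ⟨rfl, rfl⟩ | ⟨rfl, rfl⟩
  · exact mem_cross_src_tgt
  · rw [cross_comm]; exact mem_cross_src_tgt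

lemma Edge.Joins.mem_cross_iff_of_ne {e e' : Edge α} {g h k : FreeGroup α} (H : e.Joins g h)
    (hne : e' ≠ e) : e' ∈ cross g k ↔ e' ∈ cross h k := by
  rw [mem_cross_iff_xor g h k, H.mem_cross_iff]; simp [hne]

lemma Edge.Joins.self_mem_cross_iff {e : Edge α} {g h k : FreeGroup α} (H : e.Joins g h) :
    e ∈ cross g k ↔ e ∉ cross h k := by
  rw [mem_cross_iff_xor g h k, H.mem_cross_iff]; tauto

lemma exists_joins_mem_cross {g h : FreeGroup α} (hne : g ≠ h) :
    ∃ e z, Edge.Joins e g z ∧ e ∈ cross g h := by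
  have hw : (h⁻¹ * g).toWord ≠ [] := by
    rw [ne_eq, toWord_eq_nil_iff, inv_mul_eq_one]; exact fun H => hne H.symm
  obtain ⟨L, ⟨x, b⟩, hL⟩ := (List.eq_nil_or_concat (h⁻¹ * g).toWord).resolve_left hw
  rw [List.concat_eq_append] at hL
  cases b with
  | false =>
    refine ⟨⟨g, x⟩, _, Or.inl ⟨rfl, rfl⟩, ?_⟩
    simp [cross, Edge.beyond, hL]
  | true =>
    refine ⟨⟨g * (of x)⁻¹, x⟩, g * (of x)⁻¹, Or.inr ⟨rfl, by simp [Edge.tgt]⟩, ?_⟩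
    have hred : IsReduced (L ++ [(x, true)]) := hL ▸ isReduced_toWord
    have h1 : (h⁻¹ * (g * (of x)⁻¹)).toWord = L := by
      have : h⁻¹ * (g * (of x)⁻¹) = mk L := by
        rw [← mul_assoc, ← mk_toWord (x := h⁻¹ * g), hL, ← mul_mk]
        rw [mul_inv_eq_iff_eq_mul]; rfl
      rw [this, toWord_mk, IsReduced.reduce_eq (List.IsChain.left_of_append hred)]
    have h2 : (g⁻¹ * (g * (of x)⁻¹)).toWord = [(x, false)] := by
      simp [toWord_inv, invRev]
    have h3 : L.getLast? ≠ some (x, false) := by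
      intro H
      have := (List.isChain_append.1 hred).2.2 (x, false) H (x, true) (by simp)
      simp at this
    simp only [cross, Edge.beyond, Set.mem_ofPred_eq, h1, h2]
    simpa using h3

lemma finite_cross (g h : FreeGroup α) : (cross g h).Finite := by
  suffices ∀ k : FreeGroup α, (cross 1 k).Finite from
    ((this g).union (this h)).subset (by rw [cross_comm 1 g]; exact cross_subset_union g 1 h)
  intro k
  induction k using edge_induction with
  | one => simp
  | step e a b hab ha =>
    refine (ha.union (Set.finite_singleton e)).subset ((cross_subset_union 1 a b).trans ?_)
    exact Set.union_subset_union_right _ fun e' he' => hab.mem_cross_iff.1 he'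

/-- Induction along the geodesic from a vertex to `h`. -/
lemma geodesic_induction (h : FreeGroup α) {P : FreeGroup α → Prop} (base : P h)
    (step : ∀ (e : Edge α) (g z : FreeGroup α), e.Joins g z → e ∈ cross g h →
      cross z h = cross g h \ {e} → P z → P g) (g : FreeGroup α) : P g := by
  induction hn : (cross g h).ncard using Nat.strong_induction_on generalizing g with
  | _ n ih =>
    by_cases hgh : g = h
    · exact hgh ▸ base
    obtain ⟨e, z, hj, he⟩ := exists_joins_mem_cross hgh
    have hz : cross z h = cross g h \ {e} := by
      ext e'
      by_cases h' : e' = e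
      · subst h'; simpa using hj.self_mem_cross_iff.1 he
      · simp [h', hj.mem_cross_iff_of_ne h']
    refine step e g z hj he hz (ih _ ?_ z rfl)
    rw [← hn, hz]
    exact Set.ncard_sdiff_singleton_lt_of_mem he (finite_cross g h)

/-- An edge of a geodesic splits it into two geodesics avoiding that edge. -/
lemma exists_joins_of_mem_cross {g h : FreeGroup α} {e : Edge α} (he : e ∈ cross g h) :
    ∃ u u', e.Joins u u' ∧ cross g u ⊆ cross g h \ {e} ∧ cross u' h ⊆ cross g h \ {e} := by
  induction g using geodesic_induction (h := h) with
  | base => simp at he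
  | step e₁ g z hj he₁ hz ih =>
    by_cases hee : e = e₁
    · subst hee
      exact ⟨g, z, hj, by simp, hz.subset⟩
    · obtain ⟨u, u', hu, h1, h2⟩ := ih (by rw [hz]; exact ⟨he, hee⟩)
      rw [hz] at h1 h2
      refine ⟨u, u', hu, ?_, fun e' he' => ⟨(h2 he').1.1, (h2 he').2⟩⟩
      intro e' he'
      rcases cross_subset_union g z u he' with h' | h'
      · rw [hj.mem_cross_iff] at h'
        subst h'
        exact ⟨he₁, fun h => hee h.symm⟩
      · exact ⟨(h1 h').1.1, (h1 h').2⟩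

/-- If a geodesic meets a set of edges, there is a first edge of that set on it. -/
lemma exists_first_mem_cross {g h : FreeGroup α} {S : Set (Edge α)}
    (hS : ¬Disjoint (cross g h) S) :
    ∃ e ∈ cross g h, e ∈ S ∧ ∃ u u', e.Joins u u' ∧ Disjoint (cross g u) S := by
  induction g using geodesic_induction (h := h) with
  | base => simp at hS
  | step e₁ g z hj he₁ hz ih =>
    by_cases h₁ : e₁ ∈ S
    · exact ⟨e₁, he₁, h₁, g, z, hj, by simp⟩
    · have hS' : ¬Disjoint (cross z h) S := by
        rw [Set.not_disjoint_iff] at hS ⊢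
        obtain ⟨e, h1, h2⟩ := hS
        exact ⟨e, by rw [hz]; exact ⟨h1, fun h => h₁ (h ▸ h2)⟩, h2⟩
      obtain ⟨e, he, heS, u, u', hu, hd⟩ := ih hS'
      rw [hz] at he
      refine ⟨e, he.1, heS, u, u', hu, ?_⟩
      rw [Set.disjoint_left] at hd ⊢
      intro e' he'
      rcases cross_subset_union g z u he' with h' | h'
      · rw [hj.mem_cross_iff] at h'
        exact h' ▸ h₁
      · exact hd h'

/-- A geodesic ending where another one begins either continues it or backtracks immediately. -/
lemma exists_joins_mem_cross_inter {a c d : FreeGroup α} (h : ¬Disjoint (cross c a) (cross c d)) :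
    ∃ e z, Edge.Joins e c z ∧ e ∈ cross c a ∧ e ∈ cross c d := by
  obtain ⟨e, ha, hd⟩ := Set.not_disjoint_iff.1 h
  obtain ⟨u, u', hu, h1, -⟩ := exists_joins_of_mem_cross ha
  obtain ⟨w, w', hw, h2, -⟩ := exists_joins_of_mem_cross hd
  have huw : u = w := by
    have hcu : e ∉ cross c u := fun H => (h1 H).2 rfl
    have hcw : e ∉ cross c w := fun H => (h2 H).2 rfl
    have h3 : e ∉ cross u w := by
      rw [mem_cross_iff_xor u c w, cross_comm u c]; tauto
    have h4 : e ∈ cross u u' := hu.mem_cross_iff.2 rfl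
    rcases hu with ⟨rfl, rfl⟩ | ⟨rfl, rfl⟩ <;> rcases hw with ⟨rfl, rfl⟩ | ⟨rfl, rfl⟩ <;>
      first | rfl | exact absurd h4 h3
  subst huw
  by_cases hcu : c = u
  · exact ⟨e, u', hcu ▸ hu, ha, hd⟩
  · obtain ⟨e', z, hj, he'⟩ := exists_joins_mem_cross hcu
    exact ⟨e', z, hj, (h1 he').1, (h2 he').1⟩

/-- Locally geodesic concatenations are geodesic. -/
lemma disjoint_cross_of_local {a b c d : FreeGroup α} (h1 : Disjoint (cross a b) (cross b c))
    (h2 : Disjoint (cross b c) (cross c d)) (hbc : b ≠ c) :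
    Disjoint (cross a c) (cross c d) := by
  rw [cross_comm a c]
  by_contra hcon
  obtain ⟨e, z, hj, hea, hed⟩ := exists_joins_mem_cross_inter hcon
  have hbc' : e ∉ cross b c := fun H => Set.disjoint_left.1 h2 H hed
  have hba : e ∈ cross b a := by
    rw [mem_cross_iff_xor b c a]; tauto
  obtain ⟨u, u', hu, h3, -⟩ := exists_joins_of_mem_cross hba
  have huc : u = c := by
    have hbu : e ∉ cross b u := fun H => (h3 H).2 rfl
    have h5 : e ∉ cross u c := by
      rw [mem_cross_iff_xor u b c, cross_comm u b]; tauto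
    have h4 : e ∈ cross u u' := hu.mem_cross_iff.2 rfl
    rcases hu with ⟨rfl, rfl⟩ | ⟨rfl, rfl⟩ <;> rcases hj with ⟨rfl, rfl⟩ | ⟨rfl, rfl⟩ <;>
      first | rfl | exact absurd h4 h5
  subst huc
  obtain ⟨e', -, -, he'⟩ := exists_joins_mem_cross hbc
  exact Set.disjoint_left.1 h1 (cross_comm b a ▸ (h3 he').1) he'

/-- Every function on edges is the coboundary of a function on vertices. -/
lemma exists_potential (φ : Edge α → ℚ) :
    ∃ G : FreeGroup α → ℚ, ∀ e : Edge α, G e.tgt - G e.src = φ e := by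
  classical
  let ι : FreeGroup α → Edge α → ℚ := fun g e => if g ∈ e.beyond then 1 else 0
  have hfin : ∀ g, (Function.support fun e => φ e * (ι g e - ι 1 e)).Finite := by
    intro g
    refine (finite_cross g 1).subset fun e he => ?_
    simp only [cross, Set.mem_ofPred_eq]
    intro H
    apply he
    simp [ι, H]
  refine ⟨fun g => ∑ᶠ e, φ e * (ι g e - ι 1 e), fun e => ?_⟩
  simp only
  rw [← finsum_sub_distrib (hfin _) (hfin _), finsum_eq_single _ e]
  · have h := (mem_cross_src_tgt (e := e)).2 rfl
    have h1 : e.src ∉ e.beyond := by simp [Edge.beyond]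
    have h2 : e.tgt ∈ e.beyond := by
      by_contra H; exact h (iff_of_false h1 H)
    simp only [ι, h1, h2, if_true, if_false]; ring
  · intro e' he'
    have h : e'∉ cross e.src e.tgt := fun H => he' (mem_cross_src_tgt.1 H)
    have h' : e.src ∈ e'.beyond ↔ e.tgt ∈ e'.beyond := not_not.1 h
    simp [ι, h']

/-- A function on vertices is determined along geodesics by its coboundary. -/
lemma sub_eq_sub_of_coboundary {G G' : FreeGroup α → ℚ} {g h : FreeGroup α}
    (H : ∀ e ∈ cross g h, G e.tgt - G e.src = G' e.tgt - G' e.src) :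
    G g - G h = G' g - G' h := by
  induction g using geodesic_induction (h := h) with
  | base => simp
  | step e g z hj he hz ih =>
    have h1 := ih fun e' he' => H e' (by rw [hz] at he'; exact he'.1)
    have h2 := H e he
    rcases hj with ⟨rfl, rfl⟩ | ⟨rfl, rfl⟩ <;> linarith

end Tree

/-! ### Homomorphisms to the rationals and collapsed trees -/

section Orbits

variable {α : Type*}

/-- The orbits under `A` of the edges in `S`. -/
def edgeOrbits (A : Subgroup (FreeGroup α)) (S : Set (Edge α)) :
    Set (MulAction.orbitRel.Quotient A (Edge α)) :=
  Quotient.mk _ '' S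

lemma edgeOrbits_choose {A : Subgroup (FreeGroup α)} {S : Set (Edge α)} (e : Edge α)
    (o : edgeOrbits A S) (ho : o.1 = Quotient.mk _ e) : ∃ a ∈ A, a • o.2.choose = e := by
  have h := o.2.choose_spec.2.trans ho
  obtain ⟨a, ha⟩ := MulAction.orbitRel_apply.1 (Quotient.exact h.symm)
  exact ⟨a, a.2, ha⟩

lemma exists_equivariant (K : Subgroup (FreeGroup α)) (ρ : Additive K →+ ℚ) :
    ∃ g : FreeGroup α → ℚ, ∀ (s : K) v, g (s * v) = ρ (.ofMul s) + g v := by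
  let q : FreeGroup α → Quotient (QuotientGroup.rightRel K) := Quotient.mk _
  have hmem : ∀ v, v * (q v).out⁻¹ ∈ K := fun v =>
    QuotientGroup.rightRel_apply.1 (Quotient.mk_out (s := QuotientGroup.rightRel K) v)
  refine ⟨fun v => ρ (.ofMul ⟨_, hmem v⟩), fun s v => ?_⟩
  have hq : q (s * v) = q v := by
    refine Quotient.sound (s := QuotientGroup.rightRel K) ?_
    rw [← Quotient.eq_iff_equiv, Quotient.eq, QuotientGroup.rightRel_apply]
    simp
  have hmul : (⟨_, hmem (s * v)⟩ : K) = s * ⟨_, hmem v⟩ := by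
    apply Subtype.ext
    simp [hq, mul_assoc]
  rw [← map_add, ← ofMul_mul, ← hmul]

end Orbits

section Collapse

variable {α : Type*} [DecidableEq α]

/-- Two vertices are near if no edge of `S` separates them. -/
def Near (S : Set (Edge α)) (v w : FreeGroup α) : Prop := Disjoint (cross v w) S

variable {A : Subgroup (FreeGroup α)} {S : Set (Edge α)}

lemma Near.refl (v : FreeGroup α) : Near S v v := by simp [Near]

lemma Near.symm {v w : FreeGroup α} (h : Near S v w) : Near S w v := by
  rwa [Near, cross_comm]

lemma Near.trans {u v w : FreeGroup α} (h : Near S u v) (h' : Near S v w) : Near S u w :=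
  Set.disjoint_of_subset_left (cross_subset_union u v w) (h.union_left h')

lemma Near.of_joins {e : Edge α} {v w : FreeGroup α} (h : e.Joins v w) (he : e ∉ S) :
    Near S v w :=
  Set.disjoint_left.2 fun e' he' => by rwa [h.mem_cross_iff.1 he']

lemma Near.endpoints {v w : FreeGroup α} (h : Near S v w) {e : Edge α} (he : e ∈ cross v w) :
    Near S v e.src ∧ Near S v e.tgt := by
  obtain ⟨u, u', hu, h1, -⟩ := exists_joins_of_mem_cross he
  have hvu : Near S v u := Set.disjoint_of_subset_left (h1.trans Set.sdiff_subset) h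
  have huu : Near S u u' := .of_joins hu (Set.disjoint_left.1 h he)
  rcases hu with ⟨rfl, rfl⟩ | ⟨rfl, rfl⟩
  · exact ⟨hvu, hvu.trans huu⟩
  · exact ⟨hvu.trans huu, hvu⟩

lemma Near.smul (hS : ∀ a ∈ A, ∀ e ∈ S, a • e ∈ S) {a : FreeGroup α} (ha : a ∈ A)
    {v w : FreeGroup α} (h : Near S v w) : Near S (a * v) (a * w) := by
  refine Set.disjoint_left.2 fun e he heS => ?_
  rw [mem_cross_mul_left] at he
  exact Set.disjoint_left.1 h he (hS _ (A.inv_mem ha) _ heS)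

/-- The elements of `A` that stabilize the component of `v` in the complement of `S`. -/
def componentStabilizer (hS : ∀ a ∈ A, ∀ e ∈ S, a • e ∈ S) (v : FreeGroup α) :
    Subgroup (FreeGroup α) where
  carrier := {a | a ∈ A ∧ Near S v (a * v)}
  one_mem' := ⟨A.one_mem, by simpa using Near.refl v⟩
  mul_mem' := by
    rintro a b ⟨ha, ha'⟩ ⟨hb, hb'⟩
    exact ⟨A.mul_mem ha hb, ha'.trans (by rw [mul_assoc]; exact hb'.smul hS ha)⟩
  inv_mem' := by
    rintro a ⟨ha, ha'⟩
    refine ⟨A.inv_mem ha, ?_⟩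
    simpa using (ha'.smul hS (A.inv_mem ha)).symm

/-- Two vertices are equivalent if their components have a common translate under `A`. -/
def componentSetoid (hS : ∀ a ∈ A, ∀ e ∈ S, a • e ∈ S) : Setoid (FreeGroup α) where
  r v w := ∃ a ∈ A, Near S (a * v) w
  iseqv :=
    { refl := fun v => ⟨1, A.one_mem, by simpa using Near.refl v⟩
      symm := by
        rintro v w ⟨a, ha, h⟩
        exact ⟨a⁻¹, A.inv_mem ha, by simpa using (h.smul hS (A.inv_mem ha)).symm⟩
      trans := by
        rintro u v w ⟨a, ha, h⟩ ⟨b, hb, h'⟩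
        exact ⟨b * a, A.mul_mem hb ha, by rw [mul_assoc]; exact (h.smul hS hb).trans h'⟩ }

/-- An invariant function on edges integrates to an equivariant function on vertices. -/
lemma exists_hom_of_invariant {φ : Edge α → ℚ} (hφ : ∀ a ∈ A, ∀ e, φ (a • e) = φ e) :
    ∃ (χ : Additive A →+ ℚ) (G : FreeGroup α → ℚ), (∀ e : Edge α, G e.tgt - G e.src = φ e) ∧
      ∀ (a : A) v, G (a * v) = χ (.ofMul a) + G v := by
  obtain ⟨G, hG⟩ := exists_potential φ
  have key : ∀ a ∈ A, ∀ v, G (a * v) = (G a - G 1) + G v := by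
    intro a ha v
    have := sub_eq_sub_of_coboundary (G := fun v => G (a * v)) (G' := G) (g := v) (h := 1)
      fun e _ => by rw [← smul_tgt, ← smul_src, hG, hG, hφ a ha]
    simp only [mul_one] at this
    linarith
  refine ⟨AddMonoidHom.mk' (fun a => G (a.toMul : A) - G 1) fun a b => ?_, G, hG,
    fun a v => key a a.2 v⟩
  have := key (a.toMul : A) (a.toMul).2 (b.toMul : A)
  simp only [toMul_add, Subgroup.coe_mul, this]
  ring

/-- A homomorphism on the stabilizer of one component extends to a homomorphism on `A` that
vanishes on the stabilizers of all inequivalent components. -/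
lemma exists_extension (hS : ∀ a ∈ A, ∀ e ∈ S, a • e ∈ S) (v : FreeGroup α)
    (ρ : Additive (componentStabilizer hS v) →+ ℚ) :
    ∃ χ : Additive A →+ ℚ,
      (∀ s (hs : s ∈ componentStabilizer hS v), χ (.ofMul ⟨s, hs.1⟩) = ρ (.ofMul ⟨s, hs⟩)) ∧
      ∀ w, ¬componentSetoid hS v w → ∀ s (hs : s ∈ componentStabilizer hS w),
        χ (.ofMul ⟨s, hs.1⟩) = 0 := by
  classical
  obtain ⟨g, hg⟩ := exists_equivariant _ ρ
  let P : FreeGroup α → Edge α → Prop := fun a e =>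
    a ∈ A ∧ Near S v (a * e.src) ∧ Near S v (a * e.tgt)
  let φ : Edge α → ℚ := fun e =>
    if h : ∃ a, P a e then g (h.choose * e.tgt) - g (h.choose * e.src) else 0
  have hφ : ∀ a e, P a e → φ e = g (a * e.tgt) - g (a * e.src) := by
    intro a e ha
    have h : ∃ a, P a e := ⟨a, ha⟩
    have hb := h.choose_spec
    simp only [φ, dif_pos h]
    generalize h.choose = b at hb
    have hs : b * a⁻¹ ∈ componentStabilizer hS v := by
      have hba := A.mul_mem hb.1 (A.inv_mem ha.1)
      refine ⟨hba, hb.2.1.trans ?_⟩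
      simpa [mul_assoc] using (ha.2.1.smul hS hba).symm
    have h1 := hg ⟨_, hs⟩ (a * e.tgt)
    have h2 := hg ⟨_, hs⟩ (a * e.src)
    simp only [mul_assoc, inv_mul_cancel_left] at h1 h2
    linarith
  have hP : ∀ a ∈ A, ∀ b e, P b (a • e) ↔ P (b * a) e := by
    intro a ha b e
    simp only [P, smul_src, smul_tgt, mul_assoc, A.mul_mem_cancel_right ha]
  have hinv : ∀ a ∈ A, ∀ e, φ (a • e) = φ e := by
    intro a ha e
    by_cases h : ∃ b, P b (a • e)
    · obtain ⟨b, hb⟩ := h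
      rw [hφ b _ hb, hφ (b * a) e ((hP a ha b e).1 hb)]
      simp [mul_assoc]
    · have h' : ¬∃ b, P b e := by
        rintro ⟨b, hb⟩
        exact h ⟨b * a⁻¹, (hP a ha _ e).2 (by simpa using hb)⟩
      simp only [φ, dif_neg h, dif_neg h']
  obtain ⟨χ, G, hG, hχ⟩ := exists_hom_of_invariant hinv
  refine ⟨χ, fun s hs => ?_, fun w hw s hs => ?_⟩
  · have h1 := hχ ⟨s, hs.1⟩ v
    have h2 := hg ⟨s, hs⟩ v
    have h3 := sub_eq_sub_of_coboundary (G := G) (G' := g) (g := v) (h := s * v) fun e he => by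
      have := hs.2.endpoints he
      rw [hG, hφ 1 e ⟨A.one_mem, by simpa using this⟩]
      simp
    simp only at h1 h2
    linarith
  · have h1 := hχ ⟨s, hs.1⟩ w
    have h3 := sub_eq_sub_of_coboundary (G := G) (G' := 0) (g := w) (h := s * w) fun e he => by
      have hwe := hs.2.endpoints he
      have : ¬∃ a, P a e := by
        rintro ⟨a, ha⟩
        refine hw ((componentSetoid hS).symm ⟨a, ha.1, ?_⟩)
        exact (hwe.1.smul hS ha.1).trans ha.2.1.symm
      rw [hG]
      simp [φ, dif_neg this]
    simp only [Pi.zero_apply, sub_zero] at h1 h3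
    linarith

/-- Pairs of a homomorphism `A → ℚ` and a function on vertices, constant on components, that is
equivariant along this homomorphism. -/
def equivariantPairs (A : Subgroup (FreeGroup α)) (S : Set (Edge α)) :
    Submodule ℚ ((Additive A →+ ℚ) × (FreeGroup α → ℚ)) where
  carrier := {p | (∀ (a : A) v, p.2 (a * v) = p.1 (.ofMul a) + p.2 v) ∧
    ∀ v w, Near S v w → p.2 v = p.2 w}
  zero_mem' := by simp
  add_mem' := by
    rintro p q ⟨h1, h2⟩ ⟨h3, h4⟩
    refine ⟨fun a v => ?_, fun v w hvw => ?_⟩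
    · simp only [Prod.snd_add, Pi.add_apply, h1, h3, Prod.fst_add, AddMonoidHom.add_apply]; ring
    · simp only [Prod.snd_add, Pi.add_apply, h2 v w hvw, h4 v w hvw]
  smul_mem' := by
    rintro c p ⟨h1, h2⟩
    refine ⟨fun a v => ?_, fun v w hvw => ?_⟩
    · simp only [Prod.smul_snd, Pi.smul_apply, h1, Prod.smul_fst, AddMonoidHom.smul_apply,
        smul_add]
    · simp only [Prod.smul_snd, Pi.smul_apply, h2 v w hvw]

/-- The value at the root and the coboundary on representatives of the edge orbits. -/
noncomputable def boundaryValues (A : Subgroup (FreeGroup α)) (S : Set (Edge α)) :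
    equivariantPairs A S →ₗ[ℚ] ℚ × (edgeOrbits A S → ℚ) where
  toFun p := (p.1.2 1, fun o => p.1.2 o.2.choose.tgt - p.1.2 o.2.choose.src)
  map_add' p q := by
    ext
    · simp
    · simp; ring
  map_smul' c p := by
    ext
    · simp
    · simp; ring

lemma boundaryValues_injective :
    Function.Injective (boundaryValues A S) := by
  rw [← LinearMap.ker_eq_bot, LinearMap.ker_eq_bot']
  rintro ⟨⟨χ, g⟩, h1, h2⟩ h
  simp only at h1 h2
  have hroot : g 1 = 0 := congrArg Prod.fst h
  have horb : ∀ o : edgeOrbits A S, g o.2.choose.tgt - g o.2.choose.src = 0 :=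
    fun o => congrFun (congrArg Prod.snd h) o
  have hzero : ∀ v, g v = 0 := by
    intro v
    have := sub_eq_sub_of_coboundary (G := g) (G' := 0) (g := v) (h := 1) fun e _ => by
      simp only [Pi.zero_apply, sub_zero]
      by_cases he : e ∈ S
      · obtain ⟨a, ha, hae⟩ := edgeOrbits_choose e (A := A) ⟨Quotient.mk _ e, e, he, rfl⟩ rfl
        rw [← hae, smul_tgt, smul_src, h1 ⟨a, ha⟩, h1 ⟨a, ha⟩]
        simpa using horb ⟨Quotient.mk _ e, e, he, rfl⟩
      · rw [h2 e.src e.tgt (.of_joins (Or.inl ⟨rfl, rfl⟩) he), sub_self]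
    simpa [hroot] using this
  ext a
  · have := h1 a 1
    simpa [hzero] using this.symm
  · exact hzero _

lemma boundaryValues_surjective (hS : ∀ a ∈ A, ∀ e ∈ S, a • e ∈ S) :
    Function.Surjective (boundaryValues A S) := by
  classical
  rintro ⟨c, f⟩
  let φ : Edge α → ℚ := fun e => if h : e ∈ S then f ⟨Quotient.mk _ e, e, h, rfl⟩ else 0
  have hφ : ∀ a ∈ A, ∀ e, φ (a • e) = φ e := by
    intro a ha e
    have hiff : a • e ∈ S ↔ e ∈ S :=
      ⟨fun h => by simpa using hS _ (A.inv_mem ha) _ h, hS a ha e⟩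
    by_cases he : e ∈ S
    · simp only [φ, dif_pos he, dif_pos (hiff.2 he)]
      congr 2
      exact Quotient.sound (MulAction.orbitRel_apply.2 ⟨⟨a, ha⟩, rfl⟩)
    · simp only [φ, dif_neg he, dif_neg (hiff.not.2 he)]
  obtain ⟨χ, G, hG, hχ⟩ := exists_hom_of_invariant hφ
  refine ⟨⟨(χ, fun v => G v - G 1 + c), fun a v => ?_, fun v w hvw => ?_⟩, ?_⟩
  · simp only [hχ]; ring
  · have := sub_eq_sub_of_coboundary (G := G) (G' := 0) (g := v) (h := w) fun e he => by
      rw [hG]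
      simp [φ, dif_neg (Set.disjoint_left.1 hvw he)]
    simp only [Pi.zero_apply, sub_zero] at this ⊢
    linarith
  · ext o
    · simp [boundaryValues]
    · have h1 := o.2.choose_spec
      simp only [boundaryValues, LinearMap.coe_mk, AddHom.coe_mk]
      have h2 : φ o.2.choose = f o := by
        simp only [φ, dif_pos h1.1]
        congr 1
        exact Subtype.ext h1.2
      rw [← h2, ← hG]
      ring

/-- If the component of `v₀` has trivial stabilizer, finitely many edges of `S` end in it. -/
lemma finite_component_boundary (hS : ∀ a ∈ A, ∀ e ∈ S, a • e ∈ S) (hfin : (edgeOrbits A S).Finite) {v₀ : FreeGroup α}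
    (h : componentStabilizer hS v₀ = ⊥) (endpoint : Edge α → FreeGroup α)
    (hend : ∀ (a : FreeGroup α) e, endpoint (a • e) = a * endpoint e) :
    {e ∈ S | Near S v₀ (endpoint e)}.Finite := by
  refine .of_injOn (f := Quotient.mk (MulAction.orbitRel A (Edge α)))
    (t := edgeOrbits A S) (fun e he => ⟨e, he.1, rfl⟩) ?_ hfin
  rintro e he e' he' hee'
  obtain ⟨⟨a, ha⟩, rfl⟩ := Quotient.exact hee'
  change a • e' = e'
  have h1 : a ∈ componentStabilizer hS v₀ := by
    refine ⟨ha, he.2.trans ?_⟩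
    have h2 := (he'.2.smul hS ha).symm
    rwa [← hend] at h2
  rw [h, Subgroup.mem_bot] at h1
  rw [h1, one_smul]

end Collapse

/-! ### Ranks and spaces of homomorphisms -/

section FreeRank

variable {G : Type*} [Group G]

/-- Evaluation of homomorphisms to `ℚ` at a family of elements. -/
def homEval {ι : Type*} (s : ι → G) : (Additive G →+ ℚ) →ₗ[ℚ] (ι → ℚ) where
  toFun χ i := χ (.ofMul (s i))
  map_add' _ _ := rfl
  map_smul' _ _ := rfl

lemma hom_eq_zero_of_closure {s : Set G} (hs : Subgroup.closure s = ⊤) {χ : Additive G →+ ℚ}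
    (h : ∀ x ∈ s, χ (.ofMul x) = 0) : χ = 0 := by
  ext a
  induction (hs ▸ Subgroup.mem_top a : a ∈ Subgroup.closure s) using
    Subgroup.closure_induction with
  | mem x hx => exact h x hx
  | one => exact map_zero χ
  | mul x y _ _ hx hy => simp_all
  | inv x _ hx => simp_all

lemma homEval_injective {s : Set G} (hs : Subgroup.closure s = ⊤) :
    Function.Injective (homEval (Subtype.val : s → G)) := by
  rw [← LinearMap.ker_eq_bot, LinearMap.ker_eq_bot']
  exact fun χ h => hom_eq_zero_of_closure hs fun x hx => congrFun h ⟨x, hx⟩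

lemma finrank_hom_le_grank [Group.FG G] :
    Module.Finite ℚ (Additive G →+ ℚ) ∧
      (Module.finrank ℚ (Additive G →+ ℚ) : ℕ∞) ≤ grank G := by
  obtain ⟨s₀, hs₀⟩ := Group.fg_def.1 ‹Group.FG G›
  refine ⟨Module.Finite.of_injective _ (homEval_injective hs₀), le_sInf ?_⟩
  rintro _ ⟨s, hs, rfl⟩
  have := LinearMap.finrank_le_finrank_of_injective (homEval_injective hs)
  simpa using this

variable [IsFreeGroup G]

lemma homEval_of_surjective :
    Function.Surjective (homEval (IsFreeGroup.of : IsFreeGroup.Generators G → G)) := by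
  intro f
  refine ⟨MonoidHom.toAdditiveLeft (IsFreeGroup.lift fun i => Multiplicative.ofAdd (f i)), ?_⟩
  ext i
  simp [homEval]

lemma closure_range_of_generators :
    Subgroup.closure (Set.range (IsFreeGroup.of : IsFreeGroup.Generators G → G)) = ⊤ := by
  have h : (IsFreeGroup.of : IsFreeGroup.Generators G → G) =
      (IsFreeGroup.mulEquiv G).toMonoidHom ∘ FreeGroup.of := rfl
  rw [h, Set.range_comp, ← MonoidHom.map_closure, FreeGroup.closure_range_of,
    Subgroup.map_top_of_surjective _ (IsFreeGroup.mulEquiv G).surjective]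

lemma grank_le_of_rank_hom_le {n : ℕ} (h : Module.rank ℚ (Additive G →+ ℚ) ≤ n) :
    grank G ≤ n := by
  have hY : Cardinal.mk (IsFreeGroup.Generators G) ≤ n := by
    have h1 := LinearMap.rank_le_of_injective
      (Finsupp.lcoeFun : (IsFreeGroup.Generators G →₀ ℚ) →ₗ[ℚ] _) DFunLike.coe_injective
    rw [rank_finsupp_self, Cardinal.lift_uzero] at h1
    exact h1.trans ((LinearMap.rank_le_of_surjective _ homEval_of_surjective).trans h)
  have hfin : Finite (IsFreeGroup.Generators G) :=
    Cardinal.lt_aleph0_iff_finite.1 (hY.trans_lt (Cardinal.natCast_lt_aleph0))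
  classical
  have := Fintype.ofFinite (IsFreeGroup.Generators G)
  rw [Cardinal.mk_fintype, Nat.cast_le] at hY
  refine (sInf_le ⟨Finset.univ.image IsFreeGroup.of, ?_, rfl⟩ : grank G ≤ _).trans ?_
  · simpa using closure_range_of_generators
  · exact_mod_cast Finset.card_image_le.trans hY

lemma exists_hom_ne_zero [Nontrivial G] :
    ∃ (s : G) (ρ : Additive G →+ ℚ), ρ (.ofMul s) ≠ 0 := by
  by_cases hY : Nonempty (IsFreeGroup.Generators G)
  · obtain ⟨y⟩ := hY
    obtain ⟨ρ, hρ⟩ := homEval_of_surjective (G := G) fun _ => 1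
    exact ⟨IsFreeGroup.of y, ρ, by
      have := congrFun hρ y
      simp only [homEval, LinearMap.coe_mk, AddHom.coe_mk] at this
      simp [this]⟩
  · have := closure_range_of_generators (G := G)
    rw [not_nonempty_iff] at hY
    rw [Set.range_eq_empty, Subgroup.closure_empty] at this
    exact absurd this bot_ne_top

end FreeRank

section Dimension

variable {α : Type*} [DecidableEq α] {A : Subgroup (FreeGroup α)} {S : Set (Edge α)}

/-- The homomorphism underlying an equivariant pair. -/
def homPart (A : Subgroup (FreeGroup α)) (S : Set (Edge α)) :
    equivariantPairs A S →ₗ[ℚ] (Additive A →+ ℚ) :=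
  (LinearMap.fst ℚ _ _).comp (equivariantPairs A S).subtype

/-- The equivariant pair with trivial homomorphism defined by a function on component orbits. -/
def invariantPair (hS : ∀ a ∈ A, ∀ e ∈ S, a • e ∈ S) :
    (Quotient (componentSetoid hS) → ℚ) →ₗ[ℚ] equivariantPairs A S where
  toFun f := ⟨(0, fun v => f (Quotient.mk _ v)), fun a v => by
      simp only [AddMonoidHom.zero_apply, zero_add]
      refine congrArg f (Quotient.sound ((componentSetoid hS).symm ⟨a, a.2, Near.refl _⟩)),
    fun v w h => congrArg f (Quotient.sound ⟨1, A.one_mem, by simpa using h⟩)⟩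
  map_add' _ _ := by ext <;> simp
  map_smul' _ _ := by ext <;> simp

lemma invariantPair_injective (hS : ∀ a ∈ A, ∀ e ∈ S, a • e ∈ S) :
    Function.Injective (invariantPair hS) := by
  intro f f' h
  ext i
  induction i using Quotient.inductionOn with
  | h v => exact congrFun (congrArg (fun p => p.1.2) h) v

lemma range_invariantPair (hS : ∀ a ∈ A, ∀ e ∈ S, a • e ∈ S) :
    LinearMap.range (invariantPair hS) = LinearMap.ker (homPart A S) := by
  ext p
  rw [LinearMap.mem_range, LinearMap.mem_ker]
  constructor
  · rintro ⟨f, rfl⟩; rfl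
  · obtain ⟨⟨χ, g⟩, h1, h2⟩ := p
    intro h
    change χ = 0 at h
    subst h
    refine ⟨Quotient.lift g ?_, rfl⟩
    rintro v w ⟨a, ha, haw⟩
    refine Eq.trans ?_ (h2 _ _ haw)
    simpa using (h1 ⟨a, ha⟩ v).symm

/-- Counting dimensions in the space of equivariant pairs. -/
lemma finrank_homPart (hS : ∀ a ∈ A, ∀ e ∈ S, a • e ∈ S) (hfin : (edgeOrbits A S).Finite) :
    Module.Finite ℚ (equivariantPairs A S) ∧ Finite (Quotient (componentSetoid hS)) ∧
      Module.finrank ℚ (LinearMap.range (homPart A S)) + Nat.card (Quotient (componentSetoid hS)) =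
        (edgeOrbits A S).ncard + 1 := by
  have := hfin.to_subtype
  have := Fintype.ofFinite (edgeOrbits A S)
  let E := LinearEquiv.ofBijective (boundaryValues A S)
    ⟨boundaryValues_injective, boundaryValues_surjective hS⟩
  have hZ : Module.Finite ℚ (equivariantPairs A S) := Module.Finite.equiv E.symm
  have hM : Finite (Quotient (componentSetoid hS)) := by
    have h : Module.Finite ℚ (Quotient (componentSetoid hS) →₀ ℚ) :=
      Module.Finite.of_injective ((invariantPair hS).comp Finsupp.lcoeFun)
        ((invariantPair_injective hS).comp DFunLike.coe_injective)
    exact (Module.finite_finsupp_self_iff.1 h).resolve_left (not_subsingleton ℚ)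
  refine ⟨hZ, hM, ?_⟩
  have := Fintype.ofFinite (Quotient (componentSetoid hS))
  have h1 := LinearMap.finrank_range_add_finrank_ker (homPart A S)
  rw [← range_invariantPair hS, LinearMap.finrank_range_of_inj (invariantPair_injective hS),
    E.finrank_eq] at h1
  simp only [Module.finrank_prod, Module.finrank_self, Module.finrank_fintype_fun_eq_card] at h1
  rw [Nat.card_eq_fintype_card, h1, Set.ncard_eq_toFinset_card', Set.toFinset_card, add_comm]

lemma mem_range_homPart (hS : ∀ a ∈ A, ∀ e ∈ S, a • e ∈ S) {χ : Additive A →+ ℚ}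
    (h : ∀ i : Quotient (componentSetoid hS), ∀ s (hs : s ∈ componentStabilizer hS i.out),
      χ (.ofMul ⟨s, hs.1⟩) = 0) : χ ∈ LinearMap.range (homPart A S) := by
  have hex : ∀ v, ∃ a : A, Near S (a * (Quotient.mk (componentSetoid hS) v).out) v := fun v => by
    obtain ⟨a, ha, hav⟩ := Quotient.mk_out (s := componentSetoid hS) v
    exact ⟨⟨a, ha⟩, hav⟩
  choose c hc using hex
  have key : ∀ (i : Quotient (componentSetoid hS)) (a b : A),
      Near S (a * i.out) (b * i.out) → χ (.ofMul a) = χ (.ofMul b) := by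
    intro i a b hab
    have hs : (a⁻¹ * b : FreeGroup α) ∈ componentStabilizer hS i.out :=
      ⟨A.mul_mem (A.inv_mem a.2) b.2, by
        simpa [mul_assoc] using hab.smul hS (A.inv_mem a.2)⟩
    have h0 := h i _ hs
    have : (⟨_, hs.1⟩ : A) = a⁻¹ * b := rfl
    rw [this, ofMul_mul, map_add, ofMul_inv, map_neg] at h0
    linarith
  refine ⟨⟨(χ, fun v => χ (.ofMul (c v))), fun a v => ?_, fun v w hvw => ?_⟩, rfl⟩
  · have hq : (Quotient.mk (componentSetoid hS) (a * v)) = Quotient.mk _ v :=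
      Quotient.sound ((componentSetoid hS).symm ⟨a, a.2, Near.refl _⟩)
    have h1 := hc (a * v)
    rw [hq] at h1
    simp only [← map_add, ← ofMul_mul]
    refine key _ _ _ (h1.trans ?_)
    simpa [mul_assoc] using ((hc v).smul hS a.2).symm
  · have hq : (Quotient.mk (componentSetoid hS) v) = Quotient.mk _ w :=
      Quotient.sound ⟨1, A.one_mem, by simpa using hvw⟩
    have h1 := hc v
    rw [hq] at h1
    exact key _ _ _ ((h1.trans hvw).trans (hc w).symm)

lemma hom_eq_zero_of_mem_range_homPart (hS : ∀ a ∈ A, ∀ e ∈ S, a • e ∈ S) {χ : Additive A →+ ℚ}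
    (hχ : χ ∈ LinearMap.range (homPart A S)) (v s : FreeGroup α)
    (hs : s ∈ componentStabilizer hS v) : χ (.ofMul ⟨s, hs.1⟩) = 0 := by
  obtain ⟨⟨⟨χ, g⟩, h1, h2⟩, rfl⟩ := hχ
  have h3 := h1 ⟨s, hs.1⟩ v
  have h4 := h2 _ _ hs.2
  simp only at h3 h4
  change χ _ = 0
  linarith

theorem rank_hom_le_of_cyclic (hS : ∀ a ∈ A, ∀ e ∈ S, a • e ∈ S)
    (hfin : (edgeOrbits A S).Finite)
    (hcyc : ∀ v, ∃ s ∈ componentStabilizer hS v, componentStabilizer hS v ≤ Subgroup.zpowers s) :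
    Module.rank ℚ (Additive A →+ ℚ) ≤ ((edgeOrbits A S).ncard + 1 : ℕ) := by
  obtain ⟨hZ, hM, hcard⟩ := finrank_homPart hS hfin
  have := Fintype.ofFinite (Quotient (componentSetoid hS))
  choose s hs hgen using hcyc
  let R : (Additive A →+ ℚ) →ₗ[ℚ] (Quotient (componentSetoid hS) → ℚ) :=
    homEval fun i => ⟨s i.out, (hs i.out).1⟩
  have hker : LinearMap.ker R ≤ LinearMap.range (homPart A S) := by
    intro χ hχ
    refine mem_range_homPart hS fun i t ht => ?_
    obtain ⟨n, rfl⟩ := Subgroup.mem_zpowers_iff.1 (hgen _ ht)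
    have h0 : χ (.ofMul ⟨s i.out, (hs i.out).1⟩) = 0 := congrFun (LinearMap.mem_ker.1 hχ) i
    have h1 : (⟨s i.out ^ n, ht.1⟩ : A) = ⟨s i.out, (hs i.out).1⟩ ^ n := rfl
    rw [h1, ofMul_zpow, map_zsmul, h0, smul_zero]
  rw [← LinearMap.rank_range_add_rank_ker R, ← hcard, Nat.cast_add, add_comm,
    Module.finrank_eq_rank]
  refine add_le_add (Submodule.rank_mono hker) ((Submodule.rank_le _).trans ?_)
  simp

theorem le_finrank_hom_of_nontrivial (hS : ∀ a ∈ A, ∀ e ∈ S, a • e ∈ S)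
    (hfin : (edgeOrbits A S).Finite) [Module.Finite ℚ (Additive A →+ ℚ)]
    (hne : ∀ v, componentStabilizer hS v ≠ ⊥) :
    (edgeOrbits A S).ncard + 1 ≤ Module.finrank ℚ (Additive A →+ ℚ) := by
  classical
  obtain ⟨hZ, hM, hcard⟩ := finrank_homPart hS hfin
  have := Fintype.ofFinite (Quotient (componentSetoid hS))
  have hρ : ∀ v, ∃ (s : componentStabilizer hS v)
      (ρ : Additive (componentStabilizer hS v) →+ ℚ), ρ (.ofMul s) ≠ 0 := by
    intro v
    have := (Subgroup.nontrivial_iff_ne_bot _).2 (hne v)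
    exact exists_hom_ne_zero
  choose s ρ hρs using hρ
  choose χ hχ hχ' using fun v => exists_extension hS v (ρ v)
  let R : (Additive A →+ ℚ) →ₗ[ℚ] (Quotient (componentSetoid hS) → ℚ) :=
    homEval fun i => ⟨s i.out, (s i.out).2.1⟩
  have hR : ∀ i j, R (χ (Quotient.out i)) j = if i = j then ρ _ (.ofMul (s i.out)) else 0 := by
    intro i j
    split_ifs with h
    · subst h; exact hχ _ _ (s _).2
    · exact hχ' _ _ (fun hij => h (Quotient.out_equiv_out.1 hij)) _ (s _).2
  have hsurj : Function.Surjective R := by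
    intro f
    refine ⟨∑ i, (f i / ρ _ (.ofMul (s i.out))) • χ i.out, ?_⟩
    ext j
    rw [map_sum, Finset.sum_apply]
    simp only [map_smul, Pi.smul_apply, hR, smul_eq_mul, mul_ite, mul_zero,
      Finset.sum_ite_eq', Finset.mem_univ, if_true]
    exact div_mul_cancel₀ _ (hρs _)
  have hker : LinearMap.range (homPart A S) ≤ LinearMap.ker R := fun χ hχ => by
    rw [LinearMap.mem_ker]
    ext i
    exact hom_eq_zero_of_mem_range_homPart hS hχ _ _ (s _).2
  have h1 := LinearMap.finrank_range_add_finrank_ker R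
  rw [LinearMap.range_eq_top.2 hsurj, finrank_top, Module.finrank_fintype_fun_eq_card] at h1
  rw [← hcard, ← h1, add_comm, Nat.card_eq_fintype_card]
  gcongr
  exact Submodule.finrank_mono hker

end Dimension

/-! ### Bridges with respect to an invariant order on edges -/

lemma exists_invariant_edge_order (α : Type*) :
    ∃ _ : LinearOrder (Edge α), CovariantClass (FreeGroup α) (Edge α) (· • ·) (· < ·) := by
  obtain ⟨o, ho⟩ := exists_leftInvariant_order α
  classical
  let _ : LinearOrder α := linearOrderOfSTO WellOrderingRel
  refine ⟨LinearOrder.lift' (fun e : Edge α => toLex (e.src, e.label)) fun e e' h => ?_, ⟨?_⟩⟩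
  · have := Prod.ext_iff.1 (toLex.injective h)
    exact Edge.ext this.1 this.2
  · intro g e e' h
    rcases Prod.Lex.toLex_lt_toLex.1 h with h | ⟨h, h'⟩
    · exact Prod.Lex.toLex_lt_toLex.2 (Or.inl (ho _ _ _ h))
    · exact Prod.Lex.toLex_lt_toLex.2 (Or.inr ⟨congrArg (g * ·) h, h'⟩)

section EdgeOrder

variable {α : Type*} [LinearOrder (Edge α)]
  [CovariantClass (FreeGroup α) (Edge α) (· • ·) (· < ·)]

lemma smul_edge_lt {g : FreeGroup α} {e e' : Edge α} (h : e < e') : g • e < g • e' :=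
  CovariantClass.elim g h

lemma inv_smul_edge_lt_iff {g : FreeGroup α} {e e' : Edge α} : g⁻¹ • e < e' ↔ e < g • e' :=
  ⟨fun h => by simpa using smul_edge_lt (g := g) h,
    fun h => by simpa using smul_edge_lt (g := g⁻¹) h⟩

lemma smul_edge_lt_iff {g : FreeGroup α} {e e' : Edge α} : g • e < g • e' ↔ e < e' := by
  rw [← inv_smul_edge_lt_iff, inv_smul_smul]

lemma smul_edge_le_iff {g : FreeGroup α} {e e' : Edge α} : g • e ≤ g • e' ↔ e ≤ e' := by
  rw [← not_lt, smul_edge_lt_iff, not_lt]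

lemma pow_succ_smul_lt {s : FreeGroup α} {μ : Edge α} (hs : s • μ < μ) (n : ℕ) :
    s ^ (n + 1) • μ < s ^ n • μ := by
  rw [pow_succ, mul_smul]
  exact smul_edge_lt hs

lemma pow_smul_le {s : FreeGroup α} {μ : Edge α} (hs : s • μ < μ) (n : ℕ) : s ^ n • μ ≤ μ := by
  induction n with
  | zero => simp
  | succ n ih => exact (pow_succ_smul_lt hs n).le.trans ih

end EdgeOrder

section Bridges

variable {α : Type*} [DecidableEq α] [LinearOrder (Edge α)]

/-- From `u`, using only edges less than `e`, one reaches two vertices in the same `A`-orbit. -/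
def Half (A : Subgroup (FreeGroup α)) (e : Edge α) (u : FreeGroup α) : Prop :=
  ∃ v, ∃ s ∈ A, s ≠ 1 ∧ (∀ e' ∈ cross u v, e' < e) ∧ ∀ e' ∈ cross u (s * v), e' < e

/-- The edges for which both endpoints satisfy `Half`. -/
def bridges (A : Subgroup (FreeGroup α)) : Set (Edge α) :=
  {e | Half A e e.src ∧ Half A e e.tgt}

lemma Half.mono {A B : Subgroup (FreeGroup α)} (hAB : A ≤ B) {e : Edge α} {u : FreeGroup α}
    (h : Half A e u) : Half B e u := by
  obtain ⟨v, s, hs, h⟩ := h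
  exact ⟨v, s, hAB hs, h⟩

lemma bridges_mono {A B : Subgroup (FreeGroup α)} (hAB : A ≤ B) : bridges A ⊆ bridges B :=
  fun _ he => ⟨he.1.mono hAB, he.2.mono hAB⟩

lemma exists_max_cross {v w : FreeGroup α} (h : v ≠ w) :
    ∃ μ ∈ cross v w, ∀ e ∈ cross v w, e ≤ μ := by
  obtain ⟨e, -, -, he⟩ := exists_joins_mem_cross h
  exact Set.exists_max_image _ id (finite_cross v w) ⟨e, he⟩

/-- Orbits of bridges of `A ⊓ B` inject into pairs of orbits of bridges of `A` and of `B`. -/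
lemma edgeOrbits_bridges_inf (A B : Subgroup (FreeGroup α))
    (hA : (edgeOrbits A (bridges A)).Finite) (hB : (edgeOrbits B (bridges B)).Finite) :
    (edgeOrbits (A ⊓ B) (bridges (A ⊓ B))).Finite ∧
      (edgeOrbits (A ⊓ B) (bridges (A ⊓ B))).ncard ≤
        (edgeOrbits A (bridges A)).ncard * (edgeOrbits B (bridges B)).ncard := by
  let f : MulAction.orbitRel.Quotient ↥(A ⊓ B) (Edge α) →
      MulAction.orbitRel.Quotient A (Edge α) × MulAction.orbitRel.Quotient B (Edge α) :=
    Quotient.lift (fun e => (Quotient.mk _ e, Quotient.mk _ e)) <| by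
      rintro e e' ⟨⟨c, hcA, hcB⟩, rfl⟩
      exact Prod.ext (Quotient.sound ⟨⟨c, hcA⟩, rfl⟩) (Quotient.sound ⟨⟨c, hcB⟩, rfl⟩)
  have hmaps : Set.MapsTo f (edgeOrbits (A ⊓ B) (bridges (A ⊓ B)))
      (edgeOrbits A (bridges A) ×ˢ edgeOrbits B (bridges B)) := by
    rintro _ ⟨e, he, rfl⟩
    exact ⟨⟨e, bridges_mono inf_le_left he, rfl⟩, ⟨e, bridges_mono inf_le_right he, rfl⟩⟩
  have hinj : Function.Injective f := by
    intro o o' h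
    induction o using Quotient.inductionOn with | h e => ?_
    induction o' using Quotient.inductionOn with | h e' => ?_
    obtain ⟨⟨a, ha⟩, rfl⟩ := Quotient.exact (Prod.ext_iff.1 h).1
    obtain ⟨⟨b, hb⟩, hab⟩ := Quotient.exact (Prod.ext_iff.1 h).2
    have hba : b = a := smul_edge_cancel hab
    exact Quotient.sound ⟨⟨a, ha, hba ▸ hb⟩, rfl⟩
  refine ⟨.of_injOn hmaps hinj.injOn (hA.prod hB), ?_⟩
  rw [← Set.ncard_prod]
  exact Set.ncard_le_ncard_of_injOn f hmaps hinj.injOn (hA.prod hB)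

variable [CovariantClass (FreeGroup α) (Edge α) (· • ·) (· < ·)]

lemma cross_le_smul {g v w : FreeGroup α} {μ : Edge α} (h : ∀ e ∈ cross v w, e ≤ μ) :
    ∀ e ∈ cross (g * v) (g * w), e ≤ g • μ := by
  intro e he
  rw [mem_cross_mul_left] at he
  have := smul_edge_le_iff (g := g).2 (h _ he)
  rwa [smul_inv_smul] at this

lemma Half.smul {A : Subgroup (FreeGroup α)} {e : Edge α} {u a : FreeGroup α} (ha : a ∈ A)
    (h : Half A e u) : Half A (a • e) (a * u) := by
  obtain ⟨v, s, hs, hs1, h1, h2⟩ := h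
  refine ⟨a * v, a * s * a⁻¹, A.mul_mem (A.mul_mem ha hs) (A.inv_mem ha), ?_, ?_, ?_⟩
  · simpa using hs1
  · intro e' he'
    rw [mem_cross_mul_left] at he'
    exact inv_smul_edge_lt_iff.1 (h1 _ he')
  · intro e' he'
    rw [show a * s * a⁻¹ * (a * v) = a * (s * v) by group, mem_cross_mul_left] at he'
    exact inv_smul_edge_lt_iff.1 (h2 _ he')

lemma smul_mem_bridges (A : Subgroup (FreeGroup α)) :
    ∀ a ∈ A, ∀ e ∈ bridges A, a • e ∈ bridges A := fun a ha e he =>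
  ⟨he.1.smul ha, by rw [smul_tgt]; exact he.2.smul ha⟩

lemma cross_pow_le {s v : FreeGroup α} {μ : Edge α} (h : ∀ e ∈ cross v (s * v), e ≤ μ)
    (hs : s • μ < μ) (n : ℕ) : ∀ e ∈ cross v (s ^ n * v), e ≤ μ := by
  induction n with
  | zero => simp
  | succ n ih =>
    intro e he
    rcases cross_subset_union _ (s ^ n * v) _ he with he | he
    · exact ih e he
    · rw [pow_succ, mul_assoc] at he
      exact (cross_le_smul h e he).trans (pow_smul_le hs n)

lemma Half.exists_ray {A : Subgroup (FreeGroup α)} {e : Edge α} {u : FreeGroup α}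
    (h : Half A e u) :
    ∃ v, ∃ s ∈ A, s ≠ 1 ∧ ∀ n : ℕ, ∀ e' ∈ cross u (s ^ n * v), e' < e := by
  obtain ⟨v, s, hs, hs1, h1, h2⟩ := h
  obtain ⟨μ, hμ, hmax⟩ := exists_max_cross (v := v) (w := s * v) (by simpa using hs1)
  have hμe : μ < e := by
    rcases cross_subset_union v u (s * v) hμ with h | h
    · exact h1 _ (cross_comm u v ▸ h)
    · exact h2 _ h
  rcases lt_trichotomy (s • μ) μ with h | h | h
  · refine ⟨v, s, hs, hs1, fun n e' he' => ?_⟩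
    rcases cross_subset_union u v _ he' with he' | he'
    · exact h1 _ he'
    · exact (cross_pow_le hmax h n e' he').trans_lt hμe
  · exact absurd (smul_edge_cancel (h.trans (one_smul _ μ).symm)) hs1
  · refine ⟨s * v, s⁻¹, A.inv_mem hs, by simpa using hs1, fun n e' he' => ?_⟩
    rcases cross_subset_union u (s * v) _ he' with he' | he'
    · exact h2 _ he'
    · refine (cross_pow_le ?_ (inv_smul_edge_lt_iff.2 h) n e' he').trans_lt hμe
      rwa [inv_mul_cancel_left, cross_comm]

lemma exists_mem_cross_of_half {A : Subgroup (FreeGroup α)} {e : Edge α} {w : FreeGroup α}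
    (h : Half A e w) (he : e ∈ cross w 1) : ∃ a ∈ A, e ∈ cross 1 a := by
  by_contra! hA
  obtain ⟨v, s, hs, hs1, hray⟩ := h.exists_ray
  have hmem : ∀ n : ℕ, (s ^ n)⁻¹ • e ∈ cross 1 v := by
    intro n
    rw [← mem_cross_mul_left, mul_one]
    have h1 : e ∉ cross w (s ^ n * v) := fun H => (hray n e H).false
    have h2 := hA _ (A.pow_mem hs n)
    rw [mem_cross_iff_xor w 1, mem_cross_iff_xor 1 (s ^ n)] at h1
    simpa [he, h2] using h1
  refine Set.infinite_of_injective_forall_mem (fun m n hmn => ?_) hmem (finite_cross 1 v)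
  exact IsMulTorsionFree.pow_right_injective hs1 (inv_injective (smul_edge_cancel hmn))

theorem finite_edgeOrbits_bridges (A : Subgroup (FreeGroup α)) [Group.FG A] :
    (edgeOrbits A (bridges A)).Finite := by
  obtain ⟨s, hs⟩ := (Group.fg_iff_subgroup_fg A).1 ‹_›
  let T : Set (Edge α) := ⋃ x ∈ s, cross 1 x
  have hT : T.Finite := s.finite_toSet.biUnion fun x _ => finite_cross 1 x
  have key : ∀ a ∈ A, ∀ e ∈ cross 1 a, ∃ b ∈ A, b • e ∈ T := by
    intro a ha
    have ha' : a ∈ Subgroup.closure (s : Set (FreeGroup α)) := by rwa [hs]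
    clear ha
    induction ha' using Subgroup.closure_induction with
    | mem x hx => exact fun e he => ⟨1, A.one_mem, by rw [one_smul]; exact Set.mem_biUnion hx he⟩
    | one => simp
    | mul x y hx hy ihx ihy =>
      intro e he
      rcases cross_subset_union 1 x _ he with he | he
      · exact ihx e he
      · nth_rw 1 [← mul_one x] at he
        rw [mem_cross_mul_left] at he
        obtain ⟨b, hb, hbe⟩ := ihy _ he
        rw [hs] at hx
        exact ⟨b * x⁻¹, A.mul_mem hb (A.inv_mem hx), by rwa [mul_smul]⟩
    | inv x hx ihx =>
      intro e he
      have hxe := smul_mem_cross (g := x).2 he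
      rw [mul_one, mul_inv_cancel, cross_comm] at hxe
      obtain ⟨b, hb, hbe⟩ := ihx _ hxe
      rw [hs] at hx
      exact ⟨b * x, A.mul_mem hb hx, by rwa [mul_smul]⟩
  refine (hT.image (Quotient.mk (MulAction.orbitRel A (Edge α)))).subset ?_
  rintro _ ⟨e, he, rfl⟩
  obtain ⟨a, ha, hea⟩ : ∃ a ∈ A, e ∈ cross 1 a := by
    by_cases h : e ∈ cross e.src 1
    · exact exists_mem_cross_of_half he.1 h
    · refine exists_mem_cross_of_half he.2 (by_contra fun h' => h ?_)
      exact (Edge.Joins.self_mem_cross_iff (Or.inl ⟨rfl, rfl⟩)).2 h'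
  obtain ⟨b, hb, hbe⟩ := key a ha e hea
  exact ⟨b • e, hbe, Quotient.sound ⟨⟨b, hb⟩, rfl⟩⟩

theorem componentStabilizer_bridges_ne_bot {A : Subgroup (FreeGroup α)} (hA : A ≠ ⊥)
    (hfin : (edgeOrbits A (bridges A)).Finite) (v₀ : FreeGroup α) :
    componentStabilizer (smul_mem_bridges A) v₀ ≠ ⊥ := by
  intro hbot
  let D : Set (Edge α) := {e ∈ bridges A | Near (bridges A) v₀ e.src} ∪
    {e ∈ bridges A | Near (bridges A) v₀ e.tgt}
  have hD : D.Finite :=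
    (finite_component_boundary _ hfin hbot _ smul_src).union
      (finite_component_boundary _ hfin hbot _ smul_tgt)
  have hfirst : ∀ u w, Near (bridges A) v₀ u → ¬Near (bridges A) v₀ w →
      ∃ e ∈ cross u w, e ∈ D := by
    intro u w hu hw
    obtain ⟨e, he, heS, x, x', hx, hux⟩ :=
      exists_first_mem_cross fun h : Near (bridges A) u w => hw (hu.trans h)
    refine ⟨e, he, ?_⟩
    have hvx := hu.trans hux
    rcases hx with ⟨rfl, rfl⟩ | ⟨rfl, rfl⟩
    · exact Or.inl ⟨heS, hvx⟩
    · exact Or.inr ⟨heS, hvx⟩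
  suffices ∃ s ∈ A, s ≠ 1 ∧ ∃ v, Near (bridges A) v₀ v ∧ Near (bridges A) v₀ (s * v) by
    obtain ⟨s, hs, hs1, v, h1, h2⟩ := this
    have : s ∈ componentStabilizer (smul_mem_bridges A) v₀ :=
      ⟨hs, h2.trans (h1.smul (smul_mem_bridges A) hs).symm⟩
    rw [hbot] at this
    exact hs1 this
  rcases D.eq_empty_or_nonempty with hD0 | hD0
  · have hall : ∀ w, Near (bridges A) v₀ w := fun w => by
      by_contra hw
      obtain ⟨e, -, he⟩ := hfirst v₀ w (.refl _) hw
      simp [hD0] at he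
    obtain ⟨s, hs, hs1⟩ := (Subgroup.bot_or_exists_ne_one A).resolve_left hA
    exact ⟨s, hs, hs1, v₀, hall _, hall _⟩
  · obtain ⟨e, he, hmin⟩ := Set.exists_min_image D id hD hD0
    obtain ⟨u, hu, hue⟩ : ∃ u, Near (bridges A) v₀ u ∧ Half A e u := by
      rcases he with he | he
      · exact ⟨_, he.2, he.1.1⟩
      · exact ⟨_, he.2, he.1.2⟩
    have hnear : ∀ w, (∀ e' ∈ cross u w, e' < e) → Near (bridges A) v₀ w := fun w hw => by
      by_contra hcon
      obtain ⟨e', he', heD⟩ := hfirst u w hu hcon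
      exact (hw e' he').not_ge (hmin e' heD)
    obtain ⟨v, s, hs, hs1, h1, h2⟩ := hue
    exact ⟨s, hs, hs1, v, hnear _ h1, hnear _ h2⟩

end Bridges

/-! ### Components of the complement of the bridges have cyclic stabilizers -/

section Translation

variable {α : Type*} [DecidableEq α]

lemma disjoint_cross_smul {a b c d : FreeGroup α} (g : FreeGroup α)
    (h : Disjoint (cross a b) (cross c d)) :
    Disjoint (cross (g * a) (g * b)) (cross (g * c) (g * d)) := by
  rw [Set.disjoint_left] at h ⊢
  simp only [mem_cross_mul_left]
  exact fun _ he => h he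

lemma mem_cross_pow {s v : FreeGroup α} {e : Edge α} {n : ℕ} (h : e ∈ cross v (s ^ n * v)) :
    ∃ j : ℕ, (s ^ j)⁻¹ • e ∈ cross v (s * v) := by
  induction n with
  | zero => simp at h
  | succ n ih =>
    rcases cross_subset_union _ (s ^ n * v) _ h with h | h
    · exact ih h
    · rw [pow_succ, mul_assoc, mem_cross_mul_left] at h
      exact ⟨n, h⟩

/-- Elements of a component stabilizer have an axis meeting the component. -/
lemma exists_disjoint_cross_translates {A : Subgroup (FreeGroup α)} {S : Set (Edge α)}
    (hS : ∀ a ∈ A, ∀ e ∈ S, a • e ∈ S) {v₀ s : FreeGroup α}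
    (hs : s ∈ componentStabilizer hS v₀) (hs1 : s ≠ 1) :
    ∃ v, Near S v₀ v ∧ Disjoint (cross v (s * v)) (cross (s * v) (s * (s * v))) := by
  obtain ⟨c, hc, hmin⟩ : ∃ c, Near S v₀ c ∧
      ∀ z, Near S v₀ z → (cross c (s * c)).ncard ≤ (cross z (s * z)).ncard := by
    obtain ⟨c, hc, h⟩ := (measure fun z => (cross z (s * z)).ncard).wf.has_min {z | Near S v₀ z}
      ⟨v₀, Near.refl v₀⟩
    exact ⟨c, hc, fun z hz => not_lt.1 (h z hz)⟩
  have hnear : ∀ {v}, Near S v₀ v → Near S v (s * v) := fun hv =>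
    hv.symm.trans (hs.2.trans (hv.smul hS hs.1))
  have hsc : Near S v₀ (s⁻¹ * c) :=
    ((componentStabilizer hS v₀).inv_mem hs).2.trans (hc.smul hS (A.inv_mem hs.1))
  refine ⟨s⁻¹ * c, hsc, ?_⟩
  rw [mul_inv_cancel_left]
  by_contra hcon
  rw [cross_comm] at hcon
  obtain ⟨e, z, hez, he1, he2⟩ := exists_joins_mem_cross_inter hcon
  have hse : s • e ∈ cross c (s * c) := by
    have := smul_mem_cross (g := s).2 he1
    rwa [mul_inv_cancel_left, cross_comm] at this
  have hne : s • e ≠ e := fun h => hs1 (smul_edge_cancel (h.trans (one_smul _ e).symm))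
  have hz : Near S v₀ z := hc.trans (.of_joins hez (Set.disjoint_left.1 (hnear hc) he2))
  have hcross : ∀ e', e' ≠ e → (e' ∈ cross z (s * z) ↔ e' ∈ cross c (s * z)) := fun e' h =>
    (hez.mem_cross_iff_of_ne h).symm
  have hcross' : ∀ e' k, e' ≠ s • e → (e' ∈ cross k (s * z) ↔ e' ∈ cross k (s * c)) :=
    fun e' k h => by
      rw [cross_comm k, cross_comm k, (hez.smul s).mem_cross_iff_of_ne h]
  have hsub : cross z (s * z) ⊆ cross c (s * c) \ {e} := by
    intro e' he'
    have h1 : e' ≠ e := by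
      rintro rfl
      rw [hcross' _ _ hne.symm] at he'
      exact hez.self_mem_cross_iff.1 he2 he'
    have h2 : e' ≠ s • e := by
      rintro rfl
      rw [hcross _ hne, cross_comm] at he'
      rw [cross_comm] at hse
      exact (hez.smul s).self_mem_cross_iff.1 hse he'
    exact ⟨(hcross' _ _ h2).1 ((hcross _ h1).1 he'), h1⟩
  exact (hmin z hz).not_gt ((Set.ncard_le_ncard hsub ((finite_cross _ _).sdiff)).trans_lt
    (Set.ncard_sdiff_singleton_lt_of_mem he2 (finite_cross _ _)))

end Translation

section Cyclic

variable {α : Type*} [DecidableEq α] [LinearOrder (Edge α)]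

/-- The element `s` translates along a ray from `v`, on which `μ` is the maximal edge. -/
structure IsAxis (s v : FreeGroup α) (μ : Edge α) : Prop where
  le : ∀ e ∈ cross v (s * v), e ≤ μ
  lt : s • μ < μ
  mem_pow : ∀ i n : ℕ, i < n → s ^ i • μ ∈ cross v (s ^ n * v)

lemma isAxis_of_disjoint {s v : FreeGroup α} {μ : Edge α} (hs1 : s ≠ 1)
    (hd : Disjoint (cross v (s * v)) (cross (s * v) (s * (s * v))))
    (hμ : μ ∈ cross v (s * v)) (le : ∀ e ∈ cross v (s * v), e ≤ μ) (lt : s • μ < μ) :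
    IsAxis s v μ := by
  have hdisj : ∀ n : ℕ, Disjoint (cross v (s ^ n * v)) (cross (s ^ n * v) (s ^ (n + 1) * v)) := by
    intro n
    induction n with
    | zero => simp
    | succ n ih =>
      refine disjoint_cross_of_local ih ?_ ?_
      · simpa only [pow_succ, mul_assoc] using disjoint_cross_smul (s ^ n) hd
      · simpa [pow_succ] using hs1
  refine ⟨le, lt, fun i n hin => ?_⟩
  induction n with
  | zero => omega
  | succ n ih =>
    rw [mem_cross_iff_xor v (s ^ n * v)]
    rcases Nat.lt_succ_iff_lt_or_eq.1 hin with h | rfl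
    · exact iff_of_true (ih h) (Set.disjoint_left.1 (hdisj n) (ih h))
    · have h : s ^ i • μ ∈ cross (s ^ i * v) (s ^ (i + 1) * v) := by
        rw [pow_succ, mul_assoc]; exact smul_mem_cross.2 hμ
      exact iff_of_false (Set.disjoint_right.1 (hdisj i) h) (not_not.2 h)

/-- Two independent axes share only finitely many edges. -/
lemma IsAxis.exists_mem_cross {s t v w : FreeGroup α} {μ : Edge α} (h : IsAxis s v μ)
    (hst : ∀ p q : ℤ, s ^ p = t ^ q → p = 0) :
    ∃ i : ℕ, ∀ n m : ℕ, i < n → s ^ i • μ ∈ cross (s ^ n * v) (t ^ m * w) := by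
  have hs : ∀ i j : ℕ, s ^ i = s ^ j → i = j := fun i j hij => by
    have := hst (i - j) 0 (by simp [zpow_sub, hij])
    omega
  have h1 : {i : ℕ | s ^ i • μ ∈ cross v w}.Finite :=
    .of_injOn (f := fun i => s ^ i • μ) (fun _ hi => hi)
      (fun i _ j _ hij => hs i j (smul_edge_cancel hij)) (finite_cross v w)
  have h2 : {i : ℕ | ∃ j : ℕ, (t ^ j)⁻¹ • s ^ i • μ ∈ cross w (t * w)}.Finite := by
    choose! j hj using fun (i : ℕ) (hi : ∃ j : ℕ, (t ^ j)⁻¹ • s ^ i • μ ∈ cross w (t * w)) => hi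
    refine .of_injOn (f := fun i => (t ^ j i)⁻¹ • s ^ i • μ) (fun i hi => hj i hi) ?_
      (finite_cross w (t * w))
    intro i _ k _ hik
    simp only [← mul_smul] at hik
    have hik' := smul_edge_cancel hik
    have h0 := hst (i - k) (j i - j k) (by
      rw [zpow_sub, zpow_sub, zpow_natCast, zpow_natCast, zpow_natCast, zpow_natCast,
        mul_inv_eq_iff_eq_mul, mul_assoc, ← hik', mul_inv_cancel_left])
    omega
  obtain ⟨i, hi⟩ := (h1.union h2).infinite_compl.nonempty
  refine ⟨i, fun n m hin => ?_⟩
  rw [Set.mem_compl_iff, Set.mem_union, not_or] at hi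
  have h3 : s ^ i • μ ∉ cross w (t ^ m * w) := fun h => hi.2 (mem_cross_pow h)
  have h4 := h.mem_pow i n hin
  rw [cross_comm, mem_cross_iff_xor _ w, mem_cross_iff_xor w v, cross_comm w v, cross_comm _ w]
  have h5 : s ^ i • μ ∉ cross v w := hi.1
  simp [h3, h4, h5]

variable [CovariantClass (FreeGroup α) (Edge α) (· • ·) (· < ·)]

lemma exists_isAxis {A : Subgroup (FreeGroup α)} {S : Set (Edge α)}
    (hS : ∀ a ∈ A, ∀ e ∈ S, a • e ∈ S) {v₀ s : FreeGroup α}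
    (hs : s ∈ componentStabilizer hS v₀) (hs1 : s ≠ 1) :
    ∃ σ ∈ componentStabilizer hS v₀, (σ = s ∨ σ = s⁻¹) ∧
      ∃ v μ, Near S v₀ v ∧ IsAxis σ v μ := by
  obtain ⟨v, hv, hd⟩ := exists_disjoint_cross_translates hS hs hs1
  obtain ⟨μ, hμ, hmax⟩ := exists_max_cross (v := v) (w := s * v) (by simpa using hs1)
  rcases lt_trichotomy (s • μ) μ with h | h | h
  · exact ⟨s, hs, Or.inl rfl, v, μ, hv, isAxis_of_disjoint hs1 hd hμ hmax h⟩
  · exact absurd (smul_edge_cancel (h.trans (one_smul _ μ).symm)) hs1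
  · have hc : cross v (s⁻¹ * v) = cross (s⁻¹ * v) (s⁻¹ * (s * v)) := by
      rw [inv_mul_cancel_left, cross_comm]
    refine ⟨s⁻¹, inv_mem hs, Or.inr rfl, v, s⁻¹ • μ, hv,
      isAxis_of_disjoint (inv_ne_one.2 hs1) ?_ ?_ ?_ ?_⟩
    · have := (disjoint_cross_smul (s⁻¹ * s⁻¹) hd).symm
      simp only [mul_assoc, inv_mul_cancel_left] at this
      rwa [cross_comm v, cross_comm (s⁻¹ * v) (s⁻¹ * (s⁻¹ * v))]
    · rw [hc]; exact smul_mem_cross.2 hμ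
    · rw [hc]; exact cross_le_smul hmax
    · exact smul_edge_lt (inv_smul_edge_lt_iff.2 h)

lemma IsAxis.cross_le {A : Subgroup (FreeGroup α)} {s t v w : FreeGroup α} {μ ν : Edge α}
    (hs : IsAxis s v μ) (ht : IsAxis t w ν) (hsA : s ∈ A) (htA : t ∈ A)
    (n m : ℕ) (hnear : Near (bridges A) (s ^ n * v) (t ^ m * w)) {e : Edge α}
    (he : e ∈ cross (s ^ n * v) (t ^ m * w)) : e ≤ s ^ n • μ ∨ e ≤ t ^ m • ν := by
  obtain ⟨e₁, he₁, hmax⟩ := Set.exists_max_image _ id (finite_cross _ _) ⟨e, he⟩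
  by_contra! hlt
  have hs1 : s ≠ 1 := fun h => by simpa [h] using hs.lt
  have ht1 : t ≠ 1 := fun h => by simpa [h] using ht.lt
  have hlt' := And.intro (hlt.1.trans_le (hmax e he)) (hlt.2.trans_le (hmax e he))
  simp only [id] at hlt'
  obtain ⟨u, u', hu, h1, h2⟩ := exists_joins_of_mem_cross he₁
  have hbelow : ∀ e' ∈ cross (s ^ n * v) (t ^ m * w) \ {e₁}, e' < e₁ := fun e' he' =>
    lt_of_le_of_ne (hmax e' he'.1) he'.2
  have hu1 : Half A e₁ u := by
    have h3 : ∀ e' ∈ cross u (s ^ n * v), e' < e₁ := fun e' he' =>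
      hbelow e' (h1 (cross_comm u _ ▸ he'))
    refine ⟨s ^ n * v, s, hsA, hs1, h3, fun e' he' => ?_⟩
    rcases cross_subset_union _ (s ^ n * v) _ he' with h | h
    · exact h3 _ h
    · rw [← mul_assoc, ← pow_succ', pow_succ, mul_assoc] at h
      exact (cross_le_smul hs.le _ h).trans_lt hlt'.1
  have hu2 : Half A e₁ u' := by
    have h3 : ∀ e' ∈ cross u' (t ^ m * w), e' < e₁ := fun e' he' => hbelow e' (h2 he')
    refine ⟨t ^ m * w, t, htA, ht1, h3, fun e' he' => ?_⟩
    rcases cross_subset_union _ (t ^ m * w) _ he' with h | h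
    · exact h3 _ h
    · rw [← mul_assoc, ← pow_succ', pow_succ, mul_assoc] at h
      exact (cross_le_smul ht.le _ h).trans_lt hlt'.2
  refine Set.disjoint_left.1 hnear he₁ ?_
  rcases hu with ⟨rfl, rfl⟩ | ⟨rfl, rfl⟩
  · exact ⟨hu1, hu2⟩
  · exact ⟨hu2, hu1⟩

lemma not_independent_of_mem_componentStabilizer {A : Subgroup (FreeGroup α)}
    {v₀ s t : FreeGroup α} (hs : s ∈ componentStabilizer (smul_mem_bridges A) v₀)
    (ht : t ∈ componentStabilizer (smul_mem_bridges A) v₀) :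
    ¬∀ p q : ℤ, s ^ p = t ^ q → p = 0 ∧ q = 0 := by
  intro hst
  have hs1 : s ≠ 1 := fun h => by simpa using (hst 1 0 (by simp [h])).1
  have ht1 : t ≠ 1 := fun h => by simpa using (hst 0 1 (by simp [h])).2
  obtain ⟨σ, hσ, hσs, v, μ, hv, hμ⟩ := exists_isAxis _ hs hs1
  obtain ⟨τ, hτ, hτt, w, ν, hw, hν⟩ := exists_isAxis _ ht ht1
  have hστ : ∀ p q : ℤ, σ ^ p = τ ^ q → p = 0 ∧ q = 0 := by
    intro p q h
    rcases hσs with rfl | rfl <;> rcases hτt with rfl | rfl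
    · exact hst p q h
    · simpa using hst p (-q) (by simpa using h)
    · simpa using hst (-p) q (by simpa using h)
    · simpa using hst (-p) (-q) (by simpa using h)
  obtain ⟨i, hi⟩ := hμ.exists_mem_cross (w := w) fun p q h => (hστ p q h).1
  obtain ⟨j, hj⟩ := hν.exists_mem_cross (w := v) fun p q h => (hστ q p h.symm).2
  have hnear : Near (bridges A) (σ ^ (i + 1) * v) (τ ^ (j + 1) * w) := by
    have h1 := (pow_mem hσ (i + 1)).2.trans (hv.smul (smul_mem_bridges A) (pow_mem hσ.1 (i + 1)))
    have h2 := (pow_mem hτ (j + 1)).2.trans (hw.smul (smul_mem_bridges A) (pow_mem hτ.1 (j + 1)))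
    exact h1.symm.trans h2
  have h1 := hμ.cross_le hν hσ.1 hτ.1 _ _ hnear (hi (i + 1) (j + 1) i.lt_succ_self)
  have h2 := hμ.cross_le hν hσ.1 hτ.1 _ _ hnear
    (cross_comm (τ ^ (j + 1) * w) _ ▸ hj (j + 1) (i + 1) j.lt_succ_self)
  have h3 := pow_succ_smul_lt hμ.lt i
  have h4 := pow_succ_smul_lt hν.lt j
  rcases h1 with h1 | h1
  · exact h3.not_ge h1
  rcases h2 with h2 | h2
  · exact lt_irrefl _ (((h1.trans_lt h4).trans_le h2).trans h3)
  · exact h4.not_ge h2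

/-- In a free group that is not cyclic, some two elements are independent. -/
lemma exists_zpowers_eq_top_or_independent (G : Type*) [Group G] [IsFreeGroup G] :
    (∃ s : G, Subgroup.zpowers s = ⊤) ∨
      ∃ s t : G, ∀ p q : ℤ, s ^ p = t ^ q → p = 0 ∧ q = 0 := by
  classical
  by_cases hY : Subsingleton (IsFreeGroup.Generators G)
  · left
    have htop := closure_range_of_generators (G := G)
    rcases isEmpty_or_nonempty (IsFreeGroup.Generators G) with hE | ⟨⟨y⟩⟩
    · refine ⟨1, ?_⟩
      rw [Set.range_eq_empty, Subgroup.closure_empty] at htop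
      simpa using htop
    · refine ⟨IsFreeGroup.of y, ?_⟩
      rw [Subgroup.zpowers_eq_closure, ← htop]
      congr 1
      ext x
      simp only [Set.mem_singleton_iff, Set.mem_range]
      exact ⟨fun h => ⟨y, h.symm⟩, fun ⟨y', h⟩ => by rw [← h, Subsingleton.elim y' y]⟩
  · right
    rw [not_subsingleton_iff_nontrivial] at hY
    obtain ⟨y, z, hyz⟩ := exists_pair_ne (IsFreeGroup.Generators G)
    refine ⟨IsFreeGroup.of y, IsFreeGroup.of z, fun p q h => ?_⟩
    have key : ∀ f : IsFreeGroup.Generators G → ℚ, p * f y = q * f z := by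
      intro f
      obtain ⟨χ, hχ⟩ := homEval_of_surjective f
      have h1 : ∀ x, χ (.ofMul (IsFreeGroup.of x)) = f x := fun x => congrFun hχ x
      have h2 := congrArg (fun g => χ (.ofMul g)) h
      simpa [h1] using h2
    have h1 := key (Pi.single y 1)
    have h2 := key (Pi.single z 1)
    simp [hyz, hyz.symm] at h1 h2
    exact ⟨h1, by exact_mod_cast h2.symm⟩

theorem componentStabilizer_bridges_cyclic (A : Subgroup (FreeGroup α)) (v : FreeGroup α) :
    ∃ s ∈ componentStabilizer (smul_mem_bridges A) v,
      componentStabilizer (smul_mem_bridges A) v ≤ Subgroup.zpowers s := by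
  rcases exists_zpowers_eq_top_or_independent
    (componentStabilizer (smul_mem_bridges A) v) with ⟨s, hs⟩ | ⟨s, t, hst⟩
  · refine ⟨s, s.2, fun x hx => ?_⟩
    obtain ⟨n, hn⟩ := Subgroup.mem_zpowers_iff.1 (hs ▸ Subgroup.mem_top (⟨x, hx⟩ :
      componentStabilizer (smul_mem_bridges A) v))
    exact Subgroup.mem_zpowers_iff.2 ⟨n, by simpa using congrArg Subtype.val hn⟩
  · refine absurd (fun p q h => hst p q (Subtype.ext ?_))
      (not_independent_of_mem_componentStabilizer s.2 t.2)
    simpa using h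

end Cyclic

/-! ### The Hanna Neumann inequality -/

lemma grank_inf_le {α : Type*} (A B : Subgroup (FreeGroup α)) [Group.FG A] [Group.FG B]
    (hA : A ≠ ⊥) (hB : B ≠ ⊥) : grank ↥(A ⊓ B) - 1 ≤ (grank A - 1) * (grank B - 1) := by
  classical
  obtain ⟨_, _⟩ := exists_invariant_edge_order α
  have key : ∀ (C : Subgroup (FreeGroup α)) [Group.FG C], C ≠ ⊥ →
      ((edgeOrbits C (bridges C)).ncard : ℕ∞) ≤ grank C - 1 := by
    intro C _ hC
    obtain ⟨_, hr⟩ := finrank_hom_le_grank (G := C)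
    have hfin := finite_edgeOrbits_bridges C
    have := le_finrank_hom_of_nontrivial (smul_mem_bridges C) hfin
      (componentStabilizer_bridges_ne_bot hC hfin)
    refine ENat.le_sub_of_add_le_right (by simp) (le_trans ?_ hr)
    exact_mod_cast this
  obtain ⟨hfin, hle⟩ := edgeOrbits_bridges_inf A B (finite_edgeOrbits_bridges A)
    (finite_edgeOrbits_bridges B)
  have h1 := grank_le_of_rank_hom_le (rank_hom_le_of_cyclic (smul_mem_bridges (A ⊓ B)) hfin
    (componentStabilizer_bridges_cyclic (A ⊓ B)))
  calc grank ↥(A ⊓ B) - 1 ≤ ((edgeOrbits (A ⊓ B) (bridges (A ⊓ B))).ncard : ℕ∞) := by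
        rw [tsub_le_iff_right]; exact_mod_cast h1
    _ ≤ (edgeOrbits A (bridges A)).ncard * (edgeOrbits B (bridges B)).ncard := by
        exact_mod_cast hle
    _ ≤ _ := mul_le_mul' (key A hA) (key B hB)

lemma grank_le_of_mulEquiv {G H : Type*} [Group G] [Group H] (φ : G ≃* H) :
    grank H ≤ grank G := by
  classical
  refine le_sInf ?_
  rintro _ ⟨s, hs, rfl⟩
  refine (sInf_le ⟨s.image φ, ?_, rfl⟩ : grank H ≤ _).trans ?_
  · have := MonoidHom.map_closure φ.toMonoidHom (s : Set G)
    rw [hs, Subgroup.map_top_of_surjective _ φ.surjective] at this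
    simpa using this.symm
  · exact_mod_cast Finset.card_image_le

lemma grank_congr {G H : Type*} [Group G] [Group H] (φ : G ≃* H) : grank G = grank H :=
  (grank_le_of_mulEquiv φ.symm).antisymm (grank_le_of_mulEquiv φ)

end HannaNeumann

/-- The classical Hanna Neumann conjecture: for nontrivial finitely generated subgroups
`A, B` of a free group `F`, `rank (A ∩ B) - 1 ≤ (rank A - 1) * (rank B - 1)`. -/
theorem classical_hanna_neumann {F : Type*} [Group F] [IsFreeGroup F]
    (A B : Subgroup F) [Group.FG A] [Group.FG B] (hA : A ≠ ⊥) (hB : B ≠ ⊥) :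
    grank ↥(A ⊓ B) - 1 ≤ (grank A - 1) * (grank B - 1) := by
  let φ := (IsFreeGroup.toFreeGroup F).toMonoidHom
  have hφ : Function.Injective φ := (IsFreeGroup.toFreeGroup F).injective
  have e := fun C : Subgroup F => C.equivMapOfInjective φ hφ
  have : Group.FG (A.map φ) := Group.fg_of_surjective (f := (e A).toMonoidHom) (e A).surjective
  have : Group.FG (B.map φ) := Group.fg_of_surjective (f := (e B).toMonoidHom) (e B).surjective
  rw [HannaNeumann.grank_congr (e A), HannaNeumann.grank_congr (e B),
    HannaNeumann.grank_congr (e (A ⊓ B)), Subgroup.map_inf _ _ _ hφ]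
  exact HannaNeumann.grank_inf_le _ _ (by rwa [ne_eq, Subgroup.map_eq_bot_iff_of_injective _ hφ])
    (by rwa [ne_eq, Subgroup.map_eq_bot_iff_of_injective _ hφ])
end

section
/- Let G be a group containing a free subgroup F of finite index, and let A and B be finitely generated free subgroups of G. Then r̄ank(A ∩ B) ≤ [G:F] · r̄ank(A) · r̄ank(B). -/
/-- A multigraph with vertex type `V` and edge type `E`; every edge carries an orientation. -/
structure EdgeGraph (V E : Type*) where
  /-- The initial vertex of an edge. -/
  src : E → V
  /-- The terminal vertex of an edge. -/
  tgt : E → V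

namespace EdgeGraph

variable {V E : Type*} (X : EdgeGraph V E)

/-- The edge `e` joins the vertices `a` and `b`, in either direction. -/
def Joins (e : E) (a b : V) : Prop :=
  (X.src e = a ∧ X.tgt e = b) ∨ (X.src e = b ∧ X.tgt e = a)

/-- The vertices `a` and `b` are joined by a path with all edges in `P`. -/
def Conn (P : Set E) : V → V → Prop :=
  Relation.ReflTransGen fun a b => ∃ e ∈ P, X.Joins e a b

/-- The set of vertices reachable from `v` along edges in `P`. -/
def cluster (P : Set E) (v : V) : Set V := {w | X.Conn P v w}

/-- The edges both of whose ends lie in infinite clusters of the graph of smaller edges. -/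
def bridges [LinearOrder E] : Set E :=
  {e | (X.cluster (Set.Iio e) (X.src e)).Infinite ∧ (X.cluster (Set.Iio e) (X.tgt e)).Infinite}

variable {X} {P Q : Set E} {e : E} {a b c u v w : V}

theorem Joins.symm (h : X.Joins e a b) : X.Joins e b a := Or.symm h

theorem joins_src_tgt (e : E) : X.Joins e (X.src e) (X.tgt e) := Or.inl ⟨rfl, rfl⟩

theorem Joins.right_unique (h : X.Joins e a b) (h' : X.Joins e a c) : b = c := by
  rcases h with ⟨rfl, rfl⟩ | ⟨rfl, rfl⟩ <;> rcases h' with ⟨h1, h2⟩ | ⟨h1, h2⟩ <;> simp_all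

theorem Joins.eq_or_eq (h : X.Joins e a b) (h' : X.Joins e u v) :
    (u = a ∧ v = b) ∨ (u = b ∧ v = a) := by
  rcases h with ⟨rfl, rfl⟩ | ⟨rfl, rfl⟩ <;> rcases h' with ⟨rfl, rfl⟩ | ⟨rfl, rfl⟩ <;> simp

namespace Conn

theorem refl (v : V) : X.Conn P v v := Relation.ReflTransGen.refl

theorem trans (h : X.Conn P a b) (h' : X.Conn P b c) : X.Conn P a c :=
  Relation.ReflTransGen.trans h h'

theorem symm (h : X.Conn P a b) : X.Conn P b a := by
  induction h with
  | refl => exact refl a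
  | tail _ hbc ih =>
    obtain ⟨e, he, hj⟩ := hbc
    exact Relation.ReflTransGen.head ⟨e, he, hj.symm⟩ ih

theorem mono (hPQ : P ⊆ Q) (h : X.Conn P a b) : X.Conn Q a b := by
  induction h with
  | refl => exact refl a
  | tail _ hbc ih =>
    obtain ⟨e, he, hj⟩ := hbc
    exact Relation.ReflTransGen.tail ih ⟨e, hPQ he, hj⟩

theorem of_joins (he : e ∈ P) (h : X.Joins e a b) : X.Conn P a b :=
  Relation.ReflTransGen.single ⟨e, he, h⟩

theorem tail (h : X.Conn P a b) (he : e ∈ P) (hj : X.Joins e b c) : X.Conn P a c :=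
  h.trans (of_joins he hj)

/-- A map of graphs preserves connectedness. -/
theorem map {V' E' : Type*} {X' : EdgeGraph V' E'} {Q : Set E'} (f : V → V') (g : E → E')
    (hs : ∀ e, X'.src (g e) = f (X.src e)) (ht : ∀ e, X'.tgt (g e) = f (X.tgt e))
    (hPQ : ∀ e ∈ P, g e ∈ Q) (h : X.Conn P a b) : X'.Conn Q (f a) (f b) := by
  induction h with
  | refl => exact refl _
  | tail _ hbc ih =>
    obtain ⟨e, he, hj⟩ := hbc
    refine ih.tail (hPQ e he) ?_
    rcases hj with ⟨rfl, rfl⟩ | ⟨rfl, rfl⟩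
    · exact Or.inl ⟨hs e, ht e⟩
    · exact Or.inr ⟨hs e, ht e⟩

/-- Along a path that uses at least one edge there is a largest edge. -/
theorem exists_max [LinearOrder E] (h : X.Conn P a b) :
    a = b ∨ ∃ y ∈ P, X.Conn P a (X.src y) ∧ X.Conn {x ∈ P | x ≤ y} a b := by
  induction h with
  | refl => exact Or.inl rfl
  | @tail b c hab hbc ih =>
    obtain ⟨e, he, hj⟩ := hbc
    have hsrc : X.Conn P a (X.src e) := by
      rcases hj with ⟨rfl, -⟩ | ⟨rfl, h2⟩
      · exact hab
      · exact tail hab he (Or.inr ⟨rfl, h2⟩)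
    right
    rcases ih with rfl | ⟨y, hy, hay, hconn⟩
    · exact ⟨e, he, hsrc, of_joins ⟨he, le_rfl⟩ hj⟩
    · rcases le_total e y with hey | hye
      · exact ⟨y, hy, hay, hconn.tail ⟨he, hey⟩ hj⟩
      · exact ⟨e, he, hsrc, (hconn.mono (Q := {x ∈ P | x ≤ e})
          fun x hx => ⟨hx.1, hx.2.trans hye⟩).tail ⟨he, le_rfl⟩ hj⟩

/-- A path that starts at an end of `e` can be cut at its last passage through `e`. -/
theorem sdiff_or (hj : X.Joins e v u) (h : X.Conn P v w) :
    X.Conn (P \ {e}) v w ∨ X.Conn (P \ {e}) u w := by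
  induction h with
  | refl => exact Or.inl (refl v)
  | @tail b c _ hbc ih =>
    obtain ⟨x, hx, hxj⟩ := hbc
    by_cases hxe : x = e
    · subst hxe
      rcases hj.eq_or_eq hxj with ⟨-, rfl⟩ | ⟨-, rfl⟩
      · exact Or.inr (refl _)
      · exact Or.inl (refl _)
    · exact ih.imp (fun h => h.tail ⟨hx, hxe⟩ hxj) fun h => h.tail ⟨hx, hxe⟩ hxj

/-- A path starting at `v` may be assumed to leave `v` once and for all along its first edge. -/
theorem eq_or_exists_star (h : X.Conn P v w) :
    w = v ∨ ∃ x ∈ P, ∃ z, X.Joins x v z ∧ X.Conn (P \ {x}) z w := by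
  induction h with
  | refl => exact Or.inl rfl
  | @tail b c _ hbc ih =>
    obtain ⟨y, hy, hyj⟩ := hbc
    rcases ih with rfl | ⟨x, hx, z, hxj, hconn⟩
    · exact Or.inr ⟨y, hy, c, hyj, refl c⟩
    · by_cases hyx : y = x
      · subst hyx
        rcases hxj.eq_or_eq hyj with ⟨-, rfl⟩ | ⟨-, rfl⟩
        · exact Or.inr ⟨y, hx, c, hxj, refl _⟩
        · exact Or.inl rfl
      · exact Or.inr ⟨x, hx, z, hxj, hconn.tail ⟨hy, hyx⟩ hyj⟩

/-- A path uses finitely many edges. -/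
theorem exists_finite (h : X.Conn P a b) : ∃ Q ⊆ P, Q.Finite ∧ X.Conn Q a b := by
  induction h with
  | refl => exact ⟨∅, Set.empty_subset _, Set.finite_empty, refl a⟩
  | tail _ hbc ih =>
    obtain ⟨e, he, hj⟩ := hbc
    obtain ⟨Q, hQP, hQ, hconn⟩ := ih
    exact ⟨insert e Q, Set.insert_subset he hQP, hQ.insert e,
      (hconn.mono (Set.subset_insert e Q)).tail (Set.mem_insert e Q) hj⟩

end Conn

theorem cluster_mono (hPQ : P ⊆ Q) : X.cluster P v ⊆ X.cluster Q v := fun _ h => Conn.mono hPQ h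

/-- If no edge of `Q` leaves `cluster P v` except along `P`, then `cluster Q v` is no larger. -/
theorem cluster_subset_of_forall
    (h : ∀ x ∈ Q, ∀ a b, a ∈ X.cluster P v → X.Joins x a b → x ∈ P) :
    X.cluster Q v ⊆ X.cluster P v := by
  intro w hw
  induction hw with
  | refl => exact Conn.refl v
  | tail _ hbc ih =>
    obtain ⟨x, hx, hj⟩ := hbc
    exact Conn.tail ih (h x hx _ _ ih hj) hj

/-- A graph is acyclic if every edge separates its ends. -/
def IsAcyclic (X : EdgeGraph V E) : Prop := ∀ e, ¬ X.Conn {e}ᶜ (X.src e) (X.tgt e)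

theorem IsAcyclic.not_conn (hX : X.IsAcyclic) (hj : X.Joins e a b) : ¬ X.Conn {e}ᶜ a b := by
  rcases hj with ⟨rfl, rfl⟩ | ⟨rfl, rfl⟩
  · exact hX e
  · exact fun h => hX e h.symm

/-- In an acyclic graph, two connecting paths share a connecting path. -/
theorem IsAcyclic.conn_inter (hX : X.IsAcyclic) (hP : X.Conn P a b) (hQ : X.Conn Q a b) :
    X.Conn (P ∩ Q) a b := by
  obtain ⟨R, hRP, hR, hconn⟩ := hP.exists_finite
  obtain ⟨M, hM⟩ := (hR.finite_subsets.subset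
    (fun T hT => hT.1 : {T | T ⊆ R ∧ X.Conn T a b} ⊆ {T | T ⊆ R})).exists_minimal
    ⟨R, subset_rfl, hconn⟩
  refine hM.prop.2.mono fun e he => ⟨hRP (hM.prop.1 he), by_contra fun heQ => ?_⟩
  have hcut : ¬ X.Conn (M \ {e}) a b := fun h =>
    (hM.le_of_le ⟨Set.sdiff_subset.trans hM.prop.1, h⟩ Set.sdiff_subset he).2 rfl
  have hQe : X.Conn {e}ᶜ a b := hQ.mono fun x hx hxe => heQ (hxe ▸ hx)
  have hsub : M \ {e} ⊆ {e}ᶜ := fun x hx => hx.2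
  have key : ∀ w, X.Conn M a w → X.Conn (M \ {e}) a w ∨
      ∃ u v, X.Joins e u v ∧ X.Conn (M \ {e}) a u ∧ X.Conn (M \ {e}) v w := by
    intro w hw
    induction hw with
    | refl => exact Or.inl (Conn.refl a)
    | @tail p q _ hpq ih =>
      obtain ⟨x, hx, hj⟩ := hpq
      by_cases hxe : x = e
      · subst hxe
        rcases ih with h | ⟨u, v, hj', hau, hvp⟩
        · exact Or.inr ⟨p, q, hj, h, Conn.refl q⟩
        · rcases hj'.eq_or_eq hj with ⟨rfl, rfl⟩ | ⟨rfl, rfl⟩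
          · exact Or.inr ⟨p, q, hj', hau, Conn.refl q⟩
          · exact Or.inl hau
      · refine ih.imp (fun h => h.tail ⟨hx, hxe⟩ hj) ?_
        rintro ⟨u, v, hj', hau, hvp⟩
        exact ⟨u, v, hj', hau, hvp.tail ⟨hx, hxe⟩ hj⟩
  rcases key b hM.prop.2 with h | ⟨u, v, hj, hau, hvb⟩
  · exact hcut h
  · exact hX.not_conn hj ((hau.mono hsub).symm.trans (hQe.trans (hvb.mono hsub).symm))

end EdgeGraph

/-- A forest with a free action of a group `H`, together with a linear order of its edges that is
`H`-invariant on every component. The map `comp` labels the components, and acyclicity is expressed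
by the existence of potentials. -/
structure OrderedForest (H V E ι : Type*) [Group H] [MulAction H V] [MulAction H E] [MulAction H ι]
    [LinearOrder E] extends EdgeGraph V E where
  /-- The component of a vertex. -/
  comp : V → ι
  src_smul : ∀ (h : H) (e : E), src (h • e) = h • src e
  tgt_smul : ∀ (h : H) (e : E), tgt (h • e) = h • tgt e
  comp_smul : ∀ (h : H) (v : V), comp (h • v) = h • comp v
  comp_tgt : ∀ e, comp (tgt e) = comp (src e)
  comp_surjective : Function.Surjective comp
  conn : ∀ u v, comp u = comp v → toEdgeGraph.Conn Set.univ u v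
  eq_one_of_smul_eq : ∀ (h : H) (v : V), h • v = v → h = 1
  exists_potential : ∀ ω : E → ℚ, ∃ f : V → ℚ, ∀ e, f (tgt e) = f (src e) + ω e
  smul_lt_smul : ∀ (h : H) (e f : E), comp (src e) = comp (src f) → e < f → h • e < h • f

namespace EdgeGraph

theorem eq_of_conn {V E α : Type*} {X : EdgeGraph V E} {P : Set E} {u v : V} (f : V → α)
    (hf : ∀ e ∈ P, f (X.src e) = f (X.tgt e)) (h : X.Conn P u v) : f u = f v := by
  induction h with
  | refl => rfl
  | tail _ hbc ih =>
    obtain ⟨e, he, ⟨rfl, rfl⟩ | ⟨rfl, rfl⟩⟩ := hbc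
    · exact ih.trans (hf e he)
    · exact ih.trans (hf e he).symm

theorem isAcyclic_of_exists_potential {V E : Type*} {X : EdgeGraph V E}
    (hX : ∀ ω : E → ℚ, ∃ f : V → ℚ, ∀ e, f (X.tgt e) = f (X.src e) + ω e) : X.IsAcyclic := by
  classical
  intro e h
  obtain ⟨f, hf⟩ := hX (Pi.single e 1)
  have := eq_of_conn f (fun x hx => by simp [hf x, Pi.single_eq_of_ne hx]) h
  simp [hf e] at this

end EdgeGraph

namespace OrderedForest

open MulAction EdgeGraph

variable {H V E ι : Type*} [Group H] [MulAction H V] [MulAction H E] [MulAction H ι]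
  [LinearOrder E] (X : OrderedForest H V E ι)

theorem isAcyclic : X.IsAcyclic := isAcyclic_of_exists_potential X.exists_potential

variable {X} {P : Set E} {e e' f g : E} {a b u v w z : V}

theorem comp_eq_of_conn (h : X.Conn P u v) : X.comp u = X.comp v :=
  eq_of_conn X.comp (fun e _ => (X.comp_tgt e).symm) h

theorem comp_eq_of_joins (h : X.Joins e u v) : X.comp u = X.comp v :=
  comp_eq_of_conn (Conn.of_joins (Set.mem_univ e) h)

theorem comp_src_eq_of_joins (h : X.Joins e u v) : X.comp (X.src e) = X.comp u := by
  rcases h with ⟨rfl, -⟩ | ⟨rfl, rfl⟩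
  · rfl
  · exact (X.comp_tgt e).symm

/-- A path only uses edges of its component. -/
theorem conn_comp (h : X.Conn P u v) :
    X.Conn {x | x ∈ P ∧ X.comp (X.src x) = X.comp u} u v := by
  induction h with
  | refl => exact Conn.refl u
  | tail hab hbc ih =>
    obtain ⟨x, hx, hj⟩ := hbc
    exact ih.tail ⟨hx, (comp_src_eq_of_joins hj).trans (comp_eq_of_conn hab).symm⟩ hj

theorem joins_smul (h : H) (hj : X.Joins e u v) : X.Joins (h • e) (h • u) (h • v) := by
  rcases hj with ⟨rfl, rfl⟩ | ⟨rfl, rfl⟩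
  · exact Or.inl ⟨X.src_smul h e, X.tgt_smul h e⟩
  · exact Or.inr ⟨X.src_smul h e, X.tgt_smul h e⟩

theorem eq_one_of_smul_edge_eq (X : OrderedForest H V E ι) (h : H) (e : E) (he : h • e = e) :
    h = 1 :=
  X.eq_one_of_smul_eq h (X.src e) (by rw [← X.src_smul, he])

theorem smul_le_smul (h : H) (hc : X.comp (X.src e) = X.comp (X.src f)) (hle : e ≤ f) :
    h • e ≤ h • f := by
  rcases hle.eq_or_lt with rfl | hlt
  · exact le_rfl
  · exact (X.smul_lt_smul h e f hc hlt).le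

variable (X) in
theorem finite_star [Finite (orbitRel.Quotient H E)] (v : V) :
    {e | ∃ w, X.Joins e v w}.Finite := by
  have key : ∀ p : E → V, (∀ (h : H) e, p (h • e) = h • p e) → {e | p e = v}.Finite := by
    intro p hp
    refine Set.Finite.of_finite_image (f := Quotient.mk (orbitRel H E)) (Set.toFinite _) ?_
    intro e he e' he' hee
    obtain ⟨h, rfl⟩ : ∃ h : H, h • e' = e := Quotient.exact hee
    have : h • v = v := by
      have h1 : p (h • e') = v := he
      rwa [hp, show p e' = v from he'] at h1
    rw [X.eq_one_of_smul_eq h v this, one_smul]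
  refine ((key X.src X.src_smul).union (key X.tgt X.tgt_smul)).subset ?_
  rintro e ⟨w, ⟨h, -⟩ | ⟨-, h⟩⟩
  · exact Or.inl h
  · exact Or.inr h

variable (X) in
/-- The end `v` of the edge `e` lies in an infinite cluster of edges other than `e` and no larger
than `f`. -/
def Escapes (e : E) (v : V) (f : E) : Prop := (X.cluster (Set.Iic f \ {e}) v).Infinite

theorem Escapes.mono (h : X.Escapes e v f) (hfg : f ≤ g) : X.Escapes e v g :=
  Set.Infinite.mono (cluster_mono fun _ hx => ⟨le_trans hx.1 hfg, hx.2⟩) h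

theorem mem_bridges_iff (hj : X.Joins e u v) :
    e ∈ X.bridges ↔ X.Escapes e u e ∧ X.Escapes e v e := by
  unfold Escapes bridges
  rw [Set.Iic_sdiff_right]
  rcases hj with ⟨rfl, rfl⟩ | ⟨rfl, rfl⟩
  · rfl
  · exact and_comm

/-- An infinite set of vertices contains two distinct vertices of the same orbit. -/
theorem exists_smul_mem [Finite (orbitRel.Quotient H V)] {K : Set V} (hK : K.Infinite) :
    ∃ w ∈ K, ∃ h : H, h • w ∈ K ∧ h ≠ 1 := by
  obtain ⟨a, ha, b, hb, hne, hab⟩ := hK.exists_ne_map_eq_of_mapsTo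
    (f := Quotient.mk (orbitRel H V)) (t := Set.univ) (fun _ _ => Set.mem_univ _) Set.finite_univ
  obtain ⟨h, rfl⟩ : ∃ h : H, h • b = a := Quotient.exact hab
  refine ⟨b, hb, h, ha, ?_⟩
  rintro rfl
  exact hne (one_smul H b)

/-- If a path from `w` to `h • w` has largest edge `y` and `h • y < y`, then the translates of the
path stay below `y` and reach infinitely many vertices. -/
theorem infinite_cluster_of_smul_lt {h : H} {y : E}
    (hw : X.Conn {x | x ≤ y} w (h • w)) (hc : X.comp (X.src y) = X.comp w) (hy : h • y < y) :
    (X.cluster (Set.Iic y) w).Infinite := by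
  have hhw : h • X.comp w = X.comp w := by rw [← X.comp_smul, comp_eq_of_conn hw]
  have hpow : ∀ k : ℕ, h ^ k • X.comp w = X.comp w := by
    intro k
    induction k with
    | zero => simp
    | succ k ih => rw [pow_succ, mul_smul, hhw, ih]
  have hanti : StrictAnti fun k : ℕ => h ^ k • y := by
    refine strictAnti_nat_of_succ_lt fun k => ?_
    simp only [pow_succ, mul_smul]
    refine X.smul_lt_smul _ _ _ ?_ hy
    rw [X.src_smul, X.comp_smul, hc, hhw]
  have hle : ∀ k : ℕ, h ^ k • y ≤ y := fun k => by simpa using hanti.antitone (Nat.zero_le k)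
  have hconn : ∀ k : ℕ, X.Conn (Set.Iic y) w (h ^ k • w) := by
    intro k
    induction k with
    | zero => simpa using Conn.refl w
    | succ k ih =>
      refine ih.trans ?_
      have := (conn_comp hw).map (X' := X.toEdgeGraph) (Q := Set.Iic y) (fun v => h ^ k • v)
        (fun x => h ^ k • x) (X.src_smul _) (X.tgt_smul _)
        fun x hx => (smul_le_smul _ (hx.2.trans hc.symm) hx.1).trans (hle k)
      simpa [pow_succ, mul_smul] using this
  refine Set.infinite_of_injective_forall_mem (f := fun k : ℕ => h ^ k • w) ?_ hconn
  intro j k hjk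
  have h1 : (h ^ k)⁻¹ * h ^ j = 1 := X.eq_one_of_smul_eq _ w (by
    rw [mul_smul]; exact inv_smul_eq_iff.2 hjk)
  exact hanti.injective (by simp only [inv_mul_eq_one.1 h1])

/-- An infinite cluster contains, among its edges, a bound for an infinite cluster around the same
vertex. -/
theorem exists_infinite_cluster_Iic [Finite (orbitRel.Quotient H V)]
    (hP : (X.cluster P v).Infinite) :
    ∃ f ∈ P, X.Conn P v (X.src f) ∧ (X.cluster (Set.Iic f) v).Infinite := by
  obtain ⟨w, hw, h, hhw, hh⟩ := exists_smul_mem (H := H) hP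
  have hwh : X.Conn P w (h • w) := Conn.trans (Conn.symm hw) hhw
  have hne : w ≠ h • w := fun heq => hh (X.eq_one_of_smul_eq h w heq.symm)
  obtain ⟨y, hy, hwy, hconn⟩ := hwh.exists_max.resolve_left hne
  have hyv : X.Conn P v (X.src y) := Conn.trans hw hwy
  have hIic : X.Conn {x | x ≤ y} w (h • w) := hconn.mono fun _ hx => hx.2
  have hc : X.comp (X.src y) = X.comp w := (comp_eq_of_conn hwy).symm
  have hchw : X.comp (h • w) = X.comp w := (comp_eq_of_conn hIic).symm
  have hinf : (X.cluster (Set.Iic y) w).Infinite := by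
    rcases lt_trichotomy (h • y) y with hlt | heq | hgt
    · exact infinite_cluster_of_smul_lt hIic hc hlt
    · exact absurd (X.eq_one_of_smul_edge_eq h y heq) hh
    · have hcy : X.comp (X.src y) = X.comp (X.src (h • y)) := by
        rw [X.src_smul, X.comp_smul, hc, ← X.comp_smul, hchw]
      have hlt : h⁻¹ • y < y := by
        simpa using X.smul_lt_smul h⁻¹ _ _ hcy hgt
      have := infinite_cluster_of_smul_lt (X := X) (w := h • w) (h := h⁻¹) (y := y)
        (by simpa using hIic.symm) (hc.trans hchw.symm) hlt
      exact this.mono fun z hz => Conn.trans hIic hz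
  rcases Conn.exists_max hw with rfl | ⟨y', hy', hvy', hconn'⟩
  · exact ⟨y, hy, hyv, hinf⟩
  · rcases le_total y y' with hle | hle
    · refine ⟨y', hy', hvy', hinf.mono fun z hz => ?_⟩
      exact Conn.trans (hconn'.mono fun _ hx => hx.2) (Conn.mono (Set.Iic_subset_Iic.2 hle) hz)
    · refine ⟨y, hy, hyv, hinf.mono fun z hz => ?_⟩
      exact Conn.trans (hconn'.mono fun _ hx => hx.2.trans hle) hz

end OrderedForest

namespace OrderedForest

open MulAction EdgeGraph

variable {H V E ι : Type*} [Group H] [MulAction H V] [MulAction H E] [MulAction H ι]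
  [LinearOrder E] {X : OrderedForest H V E ι} {P : Set E} {e e' f g : E} {a b u v w z : V}

/-- If `v` lies in an infinite cluster below every level of `L`, then it lies in an infinite
cluster below all levels of `L` simultaneously. -/
theorem infinite_cluster_lowerBounds [Finite (orbitRel.Quotient H E)] {L : Set E} (hL : L.Nonempty)
    (hv : ∀ f ∈ L, X.Escapes e v f) : (X.cluster (lowerBounds L \ {e}) v).Infinite := by
  intro hfin
  set K := X.cluster (lowerBounds L \ {e}) v
  have hstar : (⋃ w ∈ K, {x | ∃ z, X.Joins x w z}).Finite :=
    hfin.biUnion fun w _ => X.finite_star w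
  have hbound : ∀ D : Set E, D.Finite →
      ∃ f ∈ L, ∀ x ∈ D, x ∉ lowerBounds L → f < x := by
    intro D hD
    induction D, hD using Set.Finite.induction_on with
    | empty => exact ⟨hL.some, hL.some_mem, by simp⟩
    | @insert a D _ _ ih =>
      obtain ⟨f, hf, hfD⟩ := ih
      by_cases ha : a ∈ lowerBounds L
      · refine ⟨f, hf, fun x hx hxL => ?_⟩
        rcases hx with rfl | hx
        · exact absurd ha hxL
        · exact hfD x hx hxL
      · obtain ⟨f', hf', hlt⟩ : ∃ f' ∈ L, f' < a := by
          simpa [lowerBounds] using ha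
        refine ⟨min f f', by rcases min_choice f f' with h | h <;> rwa [h], fun x hx hxL => ?_⟩
        rcases hx with rfl | hx
        · exact (min_le_right _ _).trans_lt hlt
        · exact (min_le_left _ _).trans_lt (hfD x hx hxL)
  obtain ⟨f, hf, hfx⟩ := hbound _ hstar
  refine hv f hf (hfin.subset (cluster_subset_of_forall fun x hx a b ha hj => ⟨?_, hx.2⟩))
  by_contra hxL
  exact absurd hx.1 (hfx x (Set.mem_biUnion ha ⟨b, hj⟩) hxL).not_ge

/-- The two ends of an edge escape at different levels. -/
theorem exists_escapes_ne [Finite (orbitRel.Quotient H V)] [Finite (orbitRel.Quotient H E)]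
    (hinf : (X.cluster Set.univ v).Infinite) (hj : X.Joins e u v) :
    ∃ f, X.comp (X.src f) = X.comp (X.src e) ∧ ¬ (X.Escapes e u f ↔ X.Escapes e v f) := by
  by_contra! htie
  set T : Set E := {f | X.comp (X.src f) = X.comp (X.src e)}
  set L : Set E := {f ∈ T | X.Escapes e v f}
  have hcomp : X.comp u = X.comp v := comp_eq_of_joins hj
  have hsrc : X.comp (X.src e) = X.comp v := comp_src_eq_of_joins hj.symm
  have hclaim : ∀ a, a = u ∨ a = v → (X.cluster (lowerBounds L \ {e}) a).Infinite →
      ∃ f ∈ L, f ∈ lowerBounds L ∧ X.Conn (lowerBounds L \ {e}) a (X.src f) := by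
    intro a ha hinf
    obtain ⟨f, hf, hconn, hfinf⟩ := exists_infinite_cluster_Iic hinf
    have hfT : f ∈ T := by
      have h1 := comp_eq_of_conn hconn
      rcases ha with rfl | rfl
      · exact h1.symm.trans (hcomp.trans hsrc.symm)
      · exact h1.symm.trans hsrc.symm
    refine ⟨f, ⟨hfT, ?_⟩, hf.1, hconn⟩
    by_contra hnv
    have hnu : ¬ X.Escapes e u f := fun h => hnv ((htie f hfT).1 h)
    have hfin := (Set.not_infinite.1 hnv).union (Set.not_infinite.1 hnu)
    refine hfinf (hfin.subset fun z hz => ?_)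
    rcases ha with rfl | rfl
    · exact (Conn.sdiff_or hj hz).symm
    · exact Conn.sdiff_or hj.symm hz
  have hsub : lowerBounds L \ {e} ⊆ {e}ᶜ := fun x hx => hx.2
  rcases L.eq_empty_or_nonempty with hL | hL
  · have : ∃ a, (a = u ∨ a = v) ∧ (X.cluster (lowerBounds L \ {e}) a).Infinite := by
      by_contra! hno
      refine hinf (((hno v (Or.inr rfl)).union (hno u (Or.inl rfl))).subset fun z hz => ?_)
      rw [hL, lowerBounds_empty]
      exact Conn.sdiff_or hj.symm hz
    obtain ⟨a, ha, hainf⟩ := this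
    obtain ⟨f, hf, -⟩ := hclaim a ha hainf
    exact Set.notMem_empty f (hL ▸ hf)
  · obtain ⟨f, hf, hfL, hfu⟩ := hclaim u (Or.inl rfl)
      (infinite_cluster_lowerBounds hL fun f hf => (htie f hf.1).2 hf.2)
    obtain ⟨g, hg, hgL, hgv⟩ := hclaim v (Or.inr rfl)
      (infinite_cluster_lowerBounds hL fun f hf => hf.2)
    obtain rfl : f = g := le_antisymm (hfL hg) (hgL hf)
    exact X.isAcyclic.not_conn hj ((hfu.mono hsub).trans (hgv.mono hsub).symm)

variable (X) in
/-- The edge `e` is not a bridge and `v` is the end of `e` that is later to escape. -/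
def IsTail (e : E) (v : V) : Prop :=
  e ∉ X.bridges ∧ ∃ w f, X.Joins e v w ∧ X.comp (X.src f) = X.comp (X.src e) ∧
    X.Escapes e w f ∧ ¬ X.Escapes e v f

theorem existsUnique_isTail [Finite (orbitRel.Quotient H V)] [Finite (orbitRel.Quotient H E)]
    (hinf : ∀ v, (X.cluster Set.univ v).Infinite) (he : e ∉ X.bridges) : ∃! v, X.IsTail e v := by
  have huniq : ∀ a b, X.IsTail e a → X.IsTail e b → a = b := by
    rintro a b ⟨-, w, f, hj, -, hwf, haf⟩ ⟨-, w', f', hj', -, hwf', hbf'⟩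
    rcases hj.eq_or_eq hj' with ⟨rfl, rfl⟩ | ⟨rfl, rfl⟩
    · rfl
    · rcases le_total f f' with h | h
      · exact absurd (hwf.mono h) hbf'
      · exact absurd (hwf'.mono h) haf
  refine existsUnique_of_exists_of_unique ?_ fun a b => huniq a b
  have hj := X.joins_src_tgt e
  obtain ⟨f, hf, hne⟩ := exists_escapes_ne (hinf _) hj
  by_cases hs : X.Escapes e (X.src e) f
  · exact ⟨X.tgt e, he, X.src e, f, hj.symm, hf, hs, fun ht => hne (by simp [hs, ht])⟩
  · exact ⟨X.src e, he, X.tgt e, f, hj, hf, by_contra fun ht => hne (by simp [hs, ht]), hs⟩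

/-- Crossing the edge `e'` turns an escape at its far end into an escape at its near end. -/
theorem Escapes.of_adjacent (hj : X.Joins e u v) (hj' : X.Joins e' u w) (hne : e' ≠ e)
    (hle : e' ≤ g) (h : X.Escapes e' w g) : X.Escapes e u g := by
  refine Set.Infinite.mono (fun z hz => ?_) h
  have hsub : Set.Iic g \ {e'} ⊆ {e'}ᶜ := fun x hx => hx.2
  have key : X.Conn (Set.Iic g \ {e}) w z := by
    induction hz with
    | refl => exact Conn.refl w
    | @tail a b hwa hab ih =>
      obtain ⟨x, hx, hxj⟩ := hab
      refine ih.tail ⟨hx.1, fun hxe => ?_⟩ hxj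
      obtain rfl : x = e := hxe
      have hwa : X.Conn {e'}ᶜ w a := Conn.mono hsub hwa
      refine X.isAcyclic.not_conn hj'.symm ?_
      rcases hj.eq_or_eq hxj with ⟨rfl, rfl⟩ | ⟨rfl, rfl⟩
      · exact hwa
      · exact hwa.tail (e := x) (Ne.symm hne) hxj
  exact (Conn.of_joins (P := Set.Iic g \ {e}) ⟨hle, hne⟩ hj').trans key

theorem IsTail.not_lt (he : X.IsTail e u) (he' : X.IsTail e' u) : ¬ e' < e := by
  intro hlt
  obtain ⟨hN, v, f, hj, -, hvf, huf⟩ := he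
  obtain ⟨-, w, f', hj', -, hwf', huf'⟩ := he'
  have hi : ∀ g, e' ≤ g → X.Escapes e' w g → X.Escapes e u g := fun g =>
    Escapes.of_adjacent hj hj' hlt.ne
  have hi' : ∀ g, e ≤ g → X.Escapes e v g → X.Escapes e' u g := fun g =>
    Escapes.of_adjacent hj' hj hlt.ne'
  refine hN ((mem_bridges_iff hj).2 ?_)
  rcases le_total f f' with hff | hff
  · have h1 : f' < e := lt_of_not_ge fun h => huf' (hi' f' h (hvf.mono hff))
    exact ⟨hi e hlt.le (hwf'.mono h1.le), hvf.mono (hff.trans h1.le)⟩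
  · have h1 : f < e' := lt_of_not_ge fun h => huf (hi f h (hwf'.mono hff))
    exact ⟨hi e hlt.le (hwf'.mono (hff.trans (h1.trans hlt).le)), hvf.mono (h1.trans hlt).le⟩

theorem exists_infinite_star [Finite (orbitRel.Quotient H E)] (h : (X.cluster P v).Infinite) :
    ∃ x ∈ P, ∃ z, X.Joins x v z ∧ (X.cluster (P \ {x}) z).Infinite := by
  by_contra! hno
  have hstar : {x | x ∈ P ∧ ∃ z, X.Joins x v z}.Finite :=
    (X.finite_star v).subset fun x hx => hx.2
  refine h (((Set.finite_singleton v).union (hstar.biUnion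
    (t := fun x => ⋃ z ∈ {z | X.Joins x v z}, X.cluster (P \ {x}) z) fun x hx => ?_)).subset
    fun w hw => ?_)
  · refine Set.Finite.biUnion ?_ fun z hz => hno x hx.1 z hz
    exact Set.Subsingleton.finite fun a ha b hb => Joins.right_unique ha hb
  · rcases Conn.eq_or_exists_star hw with rfl | ⟨x, hx, z, hj, hconn⟩
    · exact Or.inl rfl
    · exact Or.inr (Set.mem_biUnion ⟨hx, z, hj⟩ (Set.mem_biUnion hj hconn))

theorem exists_isTail [Finite (orbitRel.Quotient H V)] [Finite (orbitRel.Quotient H E)]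
    (hinf : ∀ v, (X.cluster Set.univ v).Infinite) (v : V) : ∃ e, X.IsTail e v := by
  by_contra! hno
  set S : Set E := {e | ∃ w, X.Joins e v w}
  have hS : S.Finite := X.finite_star v
  have hlevel : ∀ e, e ∉ X.bridges → e ∈ S →
      ∃ f, X.Escapes e v f ∧ ∀ w, X.Joins e v w → ¬ X.Escapes e w f := by
    rintro e he ⟨w, hj⟩
    obtain ⟨f, hf, hne⟩ := exists_escapes_ne (hinf _) hj
    by_cases hw : X.Escapes e w f
    · exact absurd ⟨he, w, f, hj, hf, hw, fun hv => hne (by simp [hv, hw])⟩ (hno e)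
    · refine ⟨f, by_contra fun hv => hne (by simp [hv, hw]), fun w' hj' => ?_⟩
      rwa [← hj.right_unique hj']
  obtain ⟨e₀, ⟨w₀, hj₀⟩, hmin₀⟩ : ∃ e₀ ∈ S, ∀ x ∈ S, e₀ ≤ x := by
    obtain ⟨x, -, z, hj, -⟩ := exists_infinite_star (hinf v)
    exact Set.exists_min_image S id hS ⟨x, z, hj⟩
  have he₀ : e₀ ∉ X.bridges := by
    rw [mem_bridges_iff hj₀]
    rintro ⟨h, -⟩
    obtain ⟨x, hx, z, hj, -⟩ := exists_infinite_star h
    exact hx.2 (le_antisymm hx.1 (hmin₀ x ⟨z, hj⟩))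
  have : Nonempty E := ⟨e₀⟩
  choose! lev hlev using hlevel
  obtain ⟨e₁, ⟨⟨w₁, hj₁⟩, he₁⟩, hmin₁⟩ := Set.exists_min_image (S \ X.bridges) lev
    (hS.subset Set.sdiff_subset) ⟨e₀, ⟨w₀, hj₀⟩, he₀⟩
  have hfar : ∀ x ∉ X.bridges, ∀ z, X.Joins x v z → ¬ X.Escapes x z (lev e₁) :=
    fun x hx z hj hesc => (hlev x hx ⟨z, hj⟩).2 z hj (hesc.mono (hmin₁ x ⟨⟨z, hj⟩, hx⟩))
  set B : Set E := {x ∈ S | x ∈ X.bridges ∧ x ≤ lev e₁}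
  have hB : B.Nonempty := by
    obtain ⟨x, hx, z, hj, hz⟩ := exists_infinite_star (hlev e₁ he₁ ⟨w₁, hj₁⟩).1
    refine ⟨x, ⟨z, hj⟩, by_contra fun hxb => hfar x hxb z hj (hz.mono (cluster_mono ?_)), hx.1⟩
    exact fun y hy => ⟨hy.1.1, hy.2⟩
  obtain ⟨x, ⟨⟨z, hj⟩, hxb, hxle⟩, hmin⟩ :=
    Set.exists_min_image B id (hS.subset fun x hx => hx.1) hB
  obtain ⟨y, hy, z', hj', hz'⟩ := exists_infinite_star ((mem_bridges_iff hj).1 hxb).1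
  have hyx : y < x := lt_of_le_of_ne hy.1 hy.2
  have hyb : y ∉ X.bridges := fun hyb =>
    hyx.not_ge (hmin y ⟨⟨z', hj'⟩, hyb, hyx.le.trans hxle⟩)
  refine hfar y hyb z' hj' (hz'.mono (cluster_mono ?_))
  exact fun t ht => ⟨le_trans ht.1.1 hxle, ht.2⟩

end OrderedForest

namespace OrderedForest

open MulAction EdgeGraph

variable {H V E ι : Type*} [Group H] [MulAction H V] [MulAction H E] [MulAction H ι]
  [LinearOrder E] {X : OrderedForest H V E ι} {P Q : Set E} {e f : E} {u v : V}

theorem infinite_cluster_smul (h : H)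
    (hPQ : ∀ x ∈ P, X.comp (X.src x) = X.comp v → h • x ∈ Q) (hv : (X.cluster P v).Infinite) :
    (X.cluster Q (h • v)).Infinite := by
  refine (hv.image (f := fun w => h • w) (MulAction.injective h).injOn).mono ?_
  rintro _ ⟨w, hw, rfl⟩
  exact (conn_comp hw).map (fun v => h • v) (fun x => h • x) (X.src_smul h) (X.tgt_smul h)
    fun x hx => hPQ x hx.1 hx.2

theorem Escapes.smul (h : H) (hf : X.comp (X.src f) = X.comp v) (hv : X.Escapes e v f) :
    X.Escapes (h • e) (h • v) (h • f) :=
  infinite_cluster_smul h (fun _ hx hc => ⟨smul_le_smul h (hc.trans hf.symm) hx.1,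
    fun heq => hx.2 (MulAction.injective h heq)⟩) hv

theorem smul_mem_bridges (h : H) (he : e ∈ X.bridges) : h • e ∈ X.bridges := by
  have hj : X.Joins e _ _ := X.joins_src_tgt e
  rw [mem_bridges_iff hj] at he
  exact (mem_bridges_iff (joins_smul h hj)).2 ⟨he.1.smul h rfl, he.2.smul h (X.comp_tgt e).symm⟩

theorem IsTail.smul (h : H) (he : X.IsTail e v) : X.IsTail (h • e) (h • v) := by
  obtain ⟨hb, w, f, hj, hf, hwf, hvf⟩ := he
  refine ⟨fun hh => hb (by simpa using smul_mem_bridges h⁻¹ hh), h • w, h • f, joins_smul h hj,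
    ?_, hwf.smul h ?_, fun hh => hvf ?_⟩
  · rw [X.src_smul, X.src_smul, X.comp_smul, X.comp_smul, hf]
  · rw [hf, comp_src_eq_of_joins hj.symm]
  · simpa using hh.smul h⁻¹ (by
      rw [X.src_smul, X.comp_smul, X.comp_smul, hf, comp_src_eq_of_joins hj])

/-- Assigning to each vertex the edge of which it is the tail, the orbits of vertices correspond to
the orbits of edges which are not bridges. -/
theorem card_orbits_vertices_add [Finite (orbitRel.Quotient H V)] [Finite (orbitRel.Quotient H E)]
    (hinf : ∀ v, (X.cluster Set.univ v).Infinite) :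
    Nat.card (orbitRel.Quotient H V) +
      (Quotient.mk (orbitRel H E) '' X.bridges).ncard = Nat.card (orbitRel.Quotient H E) := by
  choose t ht using exists_isTail hinf
  have huniq : ∀ {e e' v}, X.IsTail e v → X.IsTail e' v → e = e' := fun h h' =>
    le_antisymm (le_of_not_gt (h.not_lt h')) (le_of_not_gt (h'.not_lt h))
  have hinj : ∀ {e v w}, X.IsTail e v → X.IsTail e w → v = w := fun h h' =>
    (existsUnique_isTail hinf h.1).unique h h'
  have hsmul : ∀ (h : H) v, t (h • v) = h • t v := fun h v =>
    huniq (ht _) ((ht v).smul h)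
  let φ : orbitRel.Quotient H V → orbitRel.Quotient H E :=
    Quotient.map (sa := orbitRel H V) (sb := orbitRel H E) t (by
      rintro a b ⟨h, rfl⟩
      exact ⟨h, (hsmul h b).symm⟩)
  have hφ : Function.Injective φ := by
    intro p q
    induction p using Quotient.inductionOn with | _ a
    induction q using Quotient.inductionOn with | _ b
    intro hab
    obtain ⟨h, hh⟩ : ∃ h : H, h • t b = t a := Quotient.exact hab
    refine Quotient.sound ⟨h, hinj (e := t a) ?_ (ht a)⟩
    rw [← hh, ← hsmul]
    exact ht _
  have hrange : Set.range φ = (Quotient.mk (orbitRel H E) '' X.bridges)ᶜ := by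
    ext q
    induction q using Quotient.inductionOn with | _ e
    constructor
    · rintro ⟨p, hp⟩ ⟨b, hb, hbe⟩
      induction p using Quotient.inductionOn with | _ a
      obtain ⟨h, hh⟩ : ∃ h : H, h • b = t a := Quotient.exact (hp.trans hbe.symm)
      exact (ht a).1 (hh ▸ smul_mem_bridges h hb)
    · intro he
      have heb : e ∉ X.bridges := fun h => he ⟨e, h, rfl⟩
      obtain ⟨v, hv, -⟩ := existsUnique_isTail hinf heb
      exact ⟨Quotient.mk _ v, congrArg (Quotient.mk _) (huniq (ht v) hv)⟩
  rw [← Set.ncard_add_ncard_compl (Quotient.mk (orbitRel H E) '' X.bridges), ← hrange,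
    ← Set.image_univ, Set.ncard_image_of_injective _ hφ, Set.ncard_univ, add_comm]

/-- If an infinite group acts with finitely many components then all components are infinite. -/
theorem infinite_cluster_univ [Infinite H] [Finite ι] (v : V) :
    (X.cluster Set.univ v).Infinite := by
  obtain ⟨c, hc⟩ := Finite.exists_infinite_fiber fun h : H => h⁻¹ • X.comp v
  obtain ⟨w, rfl⟩ := X.comp_surjective c
  have := Set.infinite_coe_iff.1 hc
  refine (this.image (f := fun h : H => h • w) ?_).mono ?_
  · intro g _ h _ hgh
    have h1 : h⁻¹ * g = 1 := X.eq_one_of_smul_eq _ w (by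
      rw [mul_smul]; exact inv_smul_eq_iff.2 hgh)
    exact (inv_mul_eq_one.1 h1).symm
  · rintro _ ⟨h, hh, rfl⟩
    refine X.conn _ _ ?_
    rw [X.comp_smul]
    exact inv_smul_eq_iff.1 hh

end OrderedForest

namespace FreeGroupBasis

open MulAction

variable {B H V : Type*} [Group H] [MulAction H V]

theorem closure_range (b : FreeGroupBasis B H) : Subgroup.closure (Set.range b) = ⊤ := by
  have h : Set.range b = b.repr.symm.toMonoidHom '' Set.range FreeGroup.of := by
    rw [← Set.range_comp]
    rfl
  rw [h, ← MonoidHom.map_closure, FreeGroup.closure_range_of, ← MonoidHom.range_eq_map]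
  exact MonoidHom.range_eq_top.2 b.repr.symm.surjective

/-- For a free action of a free group one can prescribe how a function changes under the
generators. -/
theorem exists_forall_smul_eq_add (b : FreeGroupBasis B H)
    (hfree : ∀ (h : H) (v : V), h • v = v → h = 1) (φ : B → V → ℚ) :
    ∃ f : V → ℚ, ∀ i v, f (b i • v) = f v + φ i v := by
  let step : B → Equiv.Perm (V × ℚ) := fun i =>
    { toFun := fun p => (b i • p.1, p.2 + φ i p.1)
      invFun := fun p => ((b i)⁻¹ • p.1, p.2 - φ i ((b i)⁻¹ • p.1))
      left_inv := fun p => by simp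
      right_inv := fun p => by simp }
  let Φ : H →* Equiv.Perm (V × ℚ) := b.lift step
  have hΦb : ∀ i, Φ (b i) = step i := fun i => by simp [Φ]
  have hΦ : ∀ h p, (Φ h p).1 = h • p.1 := by
    intro h
    have hh : h ∈ Subgroup.closure (Set.range b) := b.closure_range ▸ Subgroup.mem_top h
    induction hh using Subgroup.closure_induction with
    | mem x hx =>
      obtain ⟨i, rfl⟩ := hx
      intro p
      rw [hΦb]
      rfl
    | one => simp
    | mul x y _ _ hx hy =>
      intro p
      rw [map_mul, Equiv.Perm.mul_apply, hx, hy, mul_smul]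
    | inv x _ hx =>
      intro p
      rw [eq_inv_smul_iff, ← hx, ← Equiv.Perm.mul_apply, ← map_mul, mul_inv_cancel, map_one]
      rfl
  let r : V → V := fun v => (Quotient.mk (orbitRel H V) v).out
  have hr : ∀ v, ∃ h : H, h • r v = v := fun v =>
    Quotient.exact (s := orbitRel H V) (Quotient.out_eq (Quotient.mk (orbitRel H V) v)).symm
  have hrs : ∀ (h : H) v, r (h • v) = r v := fun h v =>
    congrArg Quotient.out (Quotient.sound (s := orbitRel H V) ⟨h, rfl⟩)
  choose t ht using hr
  refine ⟨fun v => (Φ (t v) (r v, 0)).2, fun i v => ?_⟩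
  have ht' : t (b i • v) = b i * t v := by
    rw [← inv_mul_eq_one]
    refine hfree _ (r v) ?_
    rw [mul_smul, inv_smul_eq_iff, mul_smul, ht, ← hrs (b i) v, ht]
  simp only [ht', hrs, map_mul, Equiv.Perm.mul_apply]
  have h1 : (Φ (t v) (r v, 0)).1 = v := by rw [hΦ, ht]
  rw [hΦb]
  simp [step, h1]

end FreeGroupBasis

theorem Module.finite_and_finrank_eq_of_exact {M P N : Type*} [AddCommGroup M] [Module ℚ M]
    [AddCommGroup P] [Module ℚ P] [AddCommGroup N] [Module ℚ N] [Module.Finite ℚ M]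
    [Module.Finite ℚ N] {i : M →ₗ[ℚ] P} {p : P →ₗ[ℚ] N} (hi : Function.Injective i)
    (hip : Function.Exact i p) (hp : Function.Surjective p) :
    Module.Finite ℚ P ∧ Module.finrank ℚ N + Module.finrank ℚ M = Module.finrank ℚ P := by
  have : Module.Finite ℚ P := Module.Finite.of_exact hip hp
  refine ⟨this, ?_⟩
  rw [← p.finrank_range_add_finrank_ker, LinearMap.range_eq_top.2 hp, finrank_top,
    hip.linearMap_ker_eq, LinearMap.finrank_range_of_inj hi]

namespace OrderedForest

open MulAction EdgeGraph

variable {B H V E ι : Type*} [Group H] [MulAction H V] [MulAction H E] [MulAction H ι]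
  [LinearOrder E] (X : OrderedForest H V E ι)

/-- The rational functions on the vertices whose differences along edges are `H`-invariant. -/
def invariantPotentials : Submodule ℚ (V → ℚ) where
  carrier := {f | ∀ (h : H) e,
    f (X.tgt (h • e)) - f (X.src (h • e)) = f (X.tgt e) - f (X.src e)}
  add_mem' {f g} hf hg h e := by
    have h1 := hf h e
    have h2 := hg h e
    simp only [Pi.add_apply]
    linarith
  zero_mem' h e := by simp
  smul_mem' c f hf h e := by
    have h1 := hf h e
    simp only [Pi.smul_apply, smul_eq_mul, ← mul_sub, h1]

theorem finite_invariantPotentials [Finite ι] [Finite (orbitRel.Quotient H E)] :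
    Module.Finite ℚ X.invariantPotentials ∧
      Nat.card (orbitRel.Quotient H E) + Nat.card ι = Module.finrank ℚ X.invariantPotentials := by
  cases nonempty_fintype ι
  cases nonempty_fintype (orbitRel.Quotient H E)
  let i : (ι → ℚ) →ₗ[ℚ] X.invariantPotentials :=
    LinearMap.codRestrict _ (LinearMap.funLeft ℚ ℚ X.comp) fun f h e => by
      simp [LinearMap.funLeft, X.comp_tgt]
  let p : X.invariantPotentials →ₗ[ℚ] (orbitRel.Quotient H E → ℚ) :=
    { toFun := fun f q => f.1 (X.tgt q.out) - f.1 (X.src q.out)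
      map_add' := fun f g => by ext q; simp; ring
      map_smul' := fun c f => by ext q; simp [mul_sub] }
  have hout : ∀ (f : X.invariantPotentials) e,
      p f (Quotient.mk (orbitRel H E) e) = f.1 (X.tgt e) - f.1 (X.src e) := by
    intro f e
    obtain ⟨h, hh⟩ : ∃ h : H, h • e = (Quotient.mk (orbitRel H E) e).out :=
      Quotient.exact (Quotient.out_eq (Quotient.mk (orbitRel H E) e))
    change f.1 (X.tgt (Quotient.mk (orbitRel H E) e).out) - f.1 (X.src _) = _
    rw [← hh]
    exact f.2 h e
  have hi : Function.Injective i := fun f g hfg => by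
    have h1 : f ∘ X.comp = g ∘ X.comp := congrArg Subtype.val hfg
    exact X.comp_surjective.injective_comp_right h1
  have hip : Function.Exact i p := by
    intro f
    constructor
    · intro hf
      have hconst : ∀ u v, X.comp u = X.comp v → f.1 u = f.1 v := fun u v huv =>
        eq_of_conn f.1 (fun e _ => by
          have := hout f e
          rw [hf] at this
          simp only [Pi.zero_apply] at this
          linarith) (X.conn u v huv)
      choose s hs using X.comp_surjective
      refine ⟨fun x => f.1 (s x), Subtype.ext (funext fun v => ?_)⟩
      exact hconst _ _ (hs _)
    · rintro ⟨g, rfl⟩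
      ext q
      simp [p, i, LinearMap.funLeft, X.comp_tgt]
  have hp : Function.Surjective p := by
    intro ω
    obtain ⟨f, hf⟩ := X.exists_potential fun e => ω (Quotient.mk (orbitRel H E) e)
    refine ⟨⟨f, fun h e => ?_⟩, ?_⟩
    · rw [hf, hf, show Quotient.mk (orbitRel H E) (h • e) = Quotient.mk _ e from
        Quotient.sound ⟨h, rfl⟩]
      ring
    · ext q
      simp [p, hf]
  simpa using Module.finite_and_finrank_eq_of_exact hi hip hp

/-- The Euler characteristic of a free action of a free group on a forest. -/
theorem card_orbits_edges_add (X : OrderedForest H V E ι) [Finite ι] [Nonempty ι]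
    [Finite (orbitRel.Quotient H V)] [Finite (orbitRel.Quotient H E)] (b : FreeGroupBasis B H) :
    Finite B ∧ Nat.card (orbitRel.Quotient H E) + Nat.card ι =
      Nat.card (orbitRel.Quotient H V) + Nat.card B * Nat.card ι := by
  obtain ⟨hP, hcard⟩ := X.finite_invariantPotentials
  cases nonempty_fintype (orbitRel.Quotient H V)
  choose s hs using X.comp_surjective
  have hcoc : ∀ (f : X.invariantPotentials) (h : H) v,
      f.1 (h • v) - f.1 v = f.1 (h • s (X.comp v)) - f.1 (s (X.comp v)) := by
    intro f h v
    refine eq_of_conn (fun v => f.1 (h • v) - f.1 v) (fun e _ => ?_)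
      (X.conn _ _ (hs (X.comp v)).symm)
    have := f.2 h e
    rw [X.src_smul, X.tgt_smul] at this
    linarith
  let p : X.invariantPotentials →ₗ[ℚ] (B × ι → ℚ) :=
    { toFun := fun f q => f.1 (b q.1 • s q.2) - f.1 (s q.2)
      map_add' := fun f g => by ext q; simp; ring
      map_smul' := fun c f => by ext q; simp [mul_sub] }
  have hp : Function.Surjective p := by
    intro φ
    obtain ⟨f, hf⟩ := b.exists_forall_smul_eq_add X.eq_one_of_smul_eq
      fun i v => φ (i, X.comp v)
    refine ⟨⟨f, fun h => ?_⟩, ?_⟩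
    · have hh : h ∈ Subgroup.closure (Set.range b) := b.closure_range ▸ Subgroup.mem_top h
      induction hh using Subgroup.closure_induction with
      | mem x hx =>
        obtain ⟨i, rfl⟩ := hx
        intro e
        rw [X.src_smul, X.tgt_smul, hf, hf, X.comp_tgt]
        ring
      | one => simp
      | mul x y _ _ hx hy =>
        intro e
        rw [mul_smul, hx, hy]
      | inv x _ hx =>
        intro e
        rw [← hx, smul_inv_smul]
    · ext q
      simp [p, hf, hs]
  have hB : Finite (B × ι) := by
    have : Module.Finite ℚ (B × ι → ℚ) := Module.Finite.of_surjective p hp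
    have : Module.Finite ℚ (B × ι →₀ ℚ) :=
      Module.Finite.of_injective (Finsupp.lcoeFun) DFunLike.coe_injective
    simpa [not_subsingleton ℚ] using this
  cases nonempty_fintype (B × ι)
  let i : (orbitRel.Quotient H V → ℚ) →ₗ[ℚ] X.invariantPotentials :=
    LinearMap.codRestrict _ (LinearMap.funLeft ℚ ℚ (Quotient.mk (orbitRel H V))) fun f h e => by
      have hq : ∀ v, Quotient.mk (orbitRel H V) (h • v) = Quotient.mk _ v := fun v =>
        Quotient.sound ⟨h, rfl⟩
      simp [LinearMap.funLeft, X.src_smul, X.tgt_smul, hq]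
  have hi : Function.Injective i := fun f g hfg => by
    have h1 : f ∘ Quotient.mk (orbitRel H V) = g ∘ Quotient.mk (orbitRel H V) :=
      congrArg Subtype.val hfg
    exact Quotient.mk_surjective.injective_comp_right h1
  have hip : Function.Exact i p := by
    intro f
    constructor
    · intro hf
      have hinv : ∀ (h : H) v, f.1 (h • v) = f.1 v := by
        intro h
        have hh : h ∈ Subgroup.closure (Set.range b) := b.closure_range ▸ Subgroup.mem_top h
        induction hh using Subgroup.closure_induction with
        | mem x hx =>
          obtain ⟨j, rfl⟩ := hx
          intro v
          have h1 := hcoc f (b j) v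
          have h2 : p f (j, X.comp v) = 0 := by rw [hf]; rfl
          exact sub_eq_zero.1 (h1.trans h2)
        | one => simp
        | mul x y _ _ hx hy =>
          intro v
          rw [mul_smul, hx, hy]
        | inv x _ hx =>
          intro v
          rw [← hx, smul_inv_smul]
      refine ⟨Quotient.lift (s := orbitRel H V) f.1 ?_, Subtype.ext (funext fun v => rfl)⟩
      rintro a c ⟨h, rfl⟩
      exact hinv h c
    · rintro ⟨g, rfl⟩
      ext q
      have hq : ∀ (h : H) v, Quotient.mk (orbitRel H V) (h • v) = Quotient.mk _ v := fun h v =>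
        Quotient.sound ⟨h, rfl⟩
      simp [p, i, LinearMap.funLeft, hq]
  refine ⟨Finite.of_surjective (Prod.fst : B × ι → B) Prod.fst_surjective, ?_⟩
  have := (Module.finite_and_finrank_eq_of_exact hi hip hp).2
  rw [hcard, ← this, ← Nat.card_prod]
  simp [add_comm]

/-- The number of orbits of bridges computes the rank of a free group. -/
theorem ncard_image_bridges_add [Finite ι] [Nonempty ι] [Finite (orbitRel.Quotient H V)]
    [Finite (orbitRel.Quotient H E)] [Infinite H] (b : FreeGroupBasis B H) :
    Finite B ∧ (Quotient.mk (orbitRel H E) '' X.bridges).ncard + Nat.card ι =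
      Nat.card B * Nat.card ι := by
  obtain ⟨hB, h⟩ := X.card_orbits_edges_add b
  have h' := card_orbits_vertices_add (X := X) fun v => infinite_cluster_univ v
  exact ⟨hB, by omega⟩

end OrderedForest

namespace FreeGroup

variable {S : Type*} [DecidableEq S]

/-- The operator `1 + c • D` on functions on words, where `D` is the square-zero operator that
prepends the letter `s` to words not starting with `s`. -/
def bump (s : S) (c : ℤ) (f : List S → ℤ) : List S → ℤ
  | [] => f []
  | t :: w => f (t :: w) + if t = s ∧ w.head? ≠ some s then c * f w else 0

theorem bump_of_head?_ne {s : S} (c : ℤ) (f : List S → ℤ) {w : List S} (hw : w.head? ≠ some s) :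
    bump s c f w = f w := by
  cases w with
  | nil => rfl
  | cons t w =>
    have : t ≠ s := by simpa using hw
    simp [bump, this]

theorem bump_cons {s : S} (c : ℤ) (f : List S → ℤ) {w : List S} (hw : w.head? ≠ some s) :
    bump s c f (s :: w) = f (s :: w) + c * f w := by
  simp [bump, hw]

theorem bump_ne_zero {s : S} {c : ℤ} {f : List S → ℤ} {w : List S} (h : bump s c f w ≠ 0) :
    f w ≠ 0 ∨ ∃ w', w = s :: w' ∧ w'.head? ≠ some s ∧ f w' ≠ 0 := by
  by_contra! hno
  apply h
  cases w with
  | nil => exact hno.1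
  | cons t w =>
    rw [bump, hno.1, zero_add]
    split_ifs with hts
    · rw [hno.2 w (by rw [hts.1]) hts.2, mul_zero]
    · rfl

theorem bump_neg_bump (s : S) (c : ℤ) (f : List S → ℤ) : bump s (-c) (bump s c f) = f := by
  funext w
  cases w with
  | nil => rfl
  | cons t w =>
    by_cases h : t = s ∧ w.head? ≠ some s
    · obtain ⟨rfl, hw⟩ := h
      rw [bump_cons _ _ hw, bump_cons _ _ hw, bump_of_head?_ne _ _ hw]
      ring
    · simp [bump, h]

section Order

variable [LinearOrder (List S)]

theorem bump_strictMono (hcons : ∀ (s : S) (w : List S), w < s :: w) (s : S) (c : ℤ) :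
    StrictMono fun f : Lex (List S → ℤ) => toLex (bump s c (ofLex f)) := by
  rintro f g ⟨i, hlt, hi⟩
  have key : ∀ j, (∀ k < j, f k = g k) →
      ∃ d, bump s c (ofLex f) j = f j + d ∧ bump s c (ofLex g) j = g j + d := by
    intro j hj
    cases j with
    | nil => exact ⟨0, (add_zero _).symm, (add_zero _).symm⟩
    | cons t w =>
      refine ⟨_, rfl, ?_⟩
      rw [bump, Pi.ofLex_apply, Pi.ofLex_apply, Pi.ofLex_apply, hj w (hcons t w)]
  refine ⟨i, fun j hj => ?_, ?_⟩
  · obtain ⟨d, h1, h2⟩ := key j fun k hk => hlt k (hk.trans hj)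
    exact h1.trans ((congrArg (· + d) (hlt j hj)).trans h2.symm)
  · obtain ⟨d, h1, h2⟩ := key i hlt
    change bump s c (ofLex f) i < bump s c (ofLex g) i
    rw [h1, h2]
    exact add_lt_add_left hi d

variable [WellFoundedLT (List S)]

/-- The operator `bump s c` as an order automorphism. -/
noncomputable def bumpIso (hcons : ∀ (s : S) (w : List S), w < s :: w) (s : S) (c : ℤ) :
    Lex (List S → ℤ) ≃o Lex (List S → ℤ) :=
  (bump_strictMono hcons s c).orderIsoOfRightInverse _
    (fun f => toLex (bump s (-c) (ofLex f))) fun f => by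
      have := bump_neg_bump s (-c) (ofLex f)
      rw [neg_neg] at this
      exact congrArg toLex this

/-- The action of the free group on functions on words by order automorphisms. -/
noncomputable def bumpAction (hcons : ∀ (s : S) (w : List S), w < s :: w) :
    FreeGroup S →* (Lex (List S → ℤ) ≃o Lex (List S → ℤ)) :=
  FreeGroup.lift fun s => bumpIso hcons s 1

theorem bumpAction_mk_cons (hcons : ∀ (s : S) (w : List S), w < s :: w) (s : S) (ε : Bool)
    (L : List (S × Bool)) (f : Lex (List S → ℤ)) :
    bumpAction hcons (mk ((s, ε) :: L)) f =
      toLex (bump s (cond ε 1 (-1)) (ofLex (bumpAction hcons (mk L) f))) := by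
  cases ε <;> rfl

/-- The leading word of the image of the delta function at the empty word under a reduced word. -/
theorem exists_leading_word (hcons : ∀ (s : S) (w : List S), w < s :: w) (L : List (S × Bool))
    (hL : IsReduced L) (f : List S → ℤ)
    (hf : f = ofLex (bumpAction hcons (mk L) (toLex (Pi.single [] 1)))) :
    ∃ W : List S, f W ≠ 0 ∧ (∀ w, f w ≠ 0 → w.Sublist W) ∧
      W.head? = L.head?.map Prod.fst ∧ ∀ s ε, L.head? = some (s, ε) → ∃ (W' : List S) (m : ℤ),
        W = s :: W' ∧ W'.head? ≠ some s ∧ 0 < m ∧ f W = cond ε 1 (-1) * m * f W' := by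
  induction L generalizing f with
  | nil =>
    have hf : f = Pi.single [] 1 := hf
    subst hf
    refine ⟨[], by simp, fun w hw => ?_, rfl, by simp⟩
    by_contra hne
    refine hw (Pi.single_eq_of_ne (fun h => hne ?_) _)
    rw [h]
  | cons p L ih =>
    obtain ⟨s, ε⟩ := p
    rw [bumpAction_mk_cons] at hf
    obtain ⟨W, hW, hsub, hhead, hlead⟩ := ih (hL.infix (List.suffix_cons _ _).isInfix) _ rfl
    set f' := ofLex (bumpAction hcons (mk L) (toLex (Pi.single [] 1)))
    have hf : f = bump s (cond ε 1 (-1)) f' := hf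
    by_cases hWs : W.head? = some s
    · obtain ⟨q, L', rfl⟩ : ∃ q L', L = q :: L' := by
        cases L with
        | nil => simp [hWs] at hhead
        | cons q L' => exact ⟨q, L', rfl⟩
      obtain ⟨t, η⟩ := q
      obtain rfl : s = t := by simpa [hWs] using hhead
      obtain rfl : ε = η := (isReduced_cons_cons.1 hL).1 rfl
      obtain ⟨W', m, rfl, hW', hm, hval⟩ := hlead s ε rfl
      have h1 : f W' = f' W' := by rw [hf, bump_of_head?_ne _ _ hW']
      have h2 : f (s :: W') = cond ε 1 (-1) * (m + 1) * f W' := by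
        rw [h1, hf, bump_cons _ _ hW', hval]
        ring
      have h3 : f W' ≠ 0 := by
        rw [h1]
        intro h0
        exact hW (by rw [hval, h0, mul_zero])
      refine ⟨s :: W', ?_, fun w hw => ?_, rfl, ?_⟩
      · rw [h2]
        refine mul_ne_zero (mul_ne_zero (by cases ε <;> simp) (by omega)) h3
      · rw [hf] at hw
        rcases bump_ne_zero hw with h | ⟨w', rfl, hw', h⟩
        · exact hsub w h
        · refine List.Sublist.cons_cons s ?_
          rcases List.sublist_cons_iff.1 (hsub w' h) with h | ⟨r, rfl, -⟩
          · exact h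
          · simp at hw'
      · rintro s' ε' h
        simp only [List.head?_cons, Option.some.injEq, Prod.mk.injEq] at h
        obtain ⟨rfl, rfl⟩ := h
        exact ⟨W', m + 1, rfl, hW', by omega, h2⟩
    · have h1 : f W = f' W := by rw [hf, bump_of_head?_ne _ _ hWs]
      have h0 : f' (s :: W) = 0 := by
        by_contra hne
        simpa using (hsub _ hne).length_le
      have h2 : f (s :: W) = cond ε 1 (-1) * 1 * f W := by
        rw [h1, hf, bump_cons _ _ hWs, h0]
        ring
      refine ⟨s :: W, ?_, fun w hw => ?_, rfl, ?_⟩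
      · rw [h2, h1]
        exact mul_ne_zero (by cases ε <;> simp) hW
      · rw [hf] at hw
        rcases bump_ne_zero hw with h | ⟨w', rfl, -, h⟩
        · exact (hsub w h).cons s
        · exact (hsub w' h).cons_cons s
      · rintro s' ε' h
        simp only [List.head?_cons, Option.some.injEq, Prod.mk.injEq] at h
        obtain ⟨rfl, rfl⟩ := h
        exact ⟨W, 1, rfl, hWs, one_pos, h2⟩

theorem eq_one_of_bumpAction_eq (hcons : ∀ (s : S) (w : List S), w < s :: w) (g : FreeGroup S)
    (hg : bumpAction hcons g (toLex (Pi.single [] 1)) = toLex (Pi.single [] 1)) : g = 1 := by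
  by_contra hne
  obtain ⟨⟨s, ε⟩, L, hL⟩ := List.exists_cons_of_ne_nil (mt toWord_eq_nil_iff.1 hne)
  obtain ⟨W, hW, -, -, hlead⟩ := exists_leading_word hcons g.toWord isReduced_toWord _ rfl
  obtain ⟨W', -, rfl, -⟩ := hlead s ε (by rw [hL]; rfl)
  rw [mk_toWord, hg] at hW
  exact hW (Pi.single_eq_of_ne (M := fun _ => ℤ) (List.cons_ne_nil s W') 1)

theorem exists_linearOrder_of_lt_cons (hcons : ∀ (s : S) (w : List S), w < s :: w) :
    ∃ _ : LinearOrder (FreeGroup S), ∀ a b c : FreeGroup S, b < c → a * b < a * c := by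
  let orb : FreeGroup S → Lex (List S → ℤ) := fun g =>
    bumpAction hcons g (toLex (Pi.single [] 1))
  have hmul : ∀ a b, orb (a * b) = bumpAction hcons a (orb b) := fun a b =>
    DFunLike.congr_fun ((bumpAction hcons).map_mul a b) _
  have horb : Function.Injective orb := by
    intro g h hgh
    rw [← inv_mul_eq_one]
    refine eq_one_of_bumpAction_eq hcons _ ((hmul g⁻¹ h).trans ?_)
    rw [← hgh, ← hmul, inv_mul_cancel]
    exact DFunLike.congr_fun (bumpAction hcons).map_one _
  refine ⟨LinearOrder.lift' orb horb, fun a b c h => ?_⟩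
  change orb (a * b) < orb (a * c)
  rw [hmul, hmul]
  exact (bumpAction hcons a).strictMono h

end Order

theorem _root_.List.exists_linearOrder_lt_cons (S : Type*) :
    ∃ _ : LinearOrder (List S), WellFoundedLT (List S) ∧ ∀ (s : S) (w : List S), w < s :: w := by
  let key : List S → ℕ ×ₗ Cardinal := fun w => toLex (w.length, embeddingToCardinal w)
  have hkey : Function.Injective key := fun v w h =>
    embeddingToCardinal.injective (congrArg (fun p => (ofLex p).2) h)
  refine ⟨LinearOrder.lift' key hkey, ⟨InvImage.wf key wellFounded_lt⟩, fun s w => ?_⟩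
  exact (Prod.Lex.toLex_lt_toLex.2 (Or.inl (by simp)) : key w < key (s :: w))

/-- Free groups are left-orderable. -/
theorem exists_linearOrder (S : Type*) :
    ∃ _ : LinearOrder (FreeGroup S), ∀ a b c : FreeGroup S, b < c → a * b < a * c := by
  classical
  obtain ⟨_, _, hcons⟩ := List.exists_linearOrder_lt_cons S
  exact exists_linearOrder_of_lt_cons hcons

end FreeGroup

namespace FreeGroupBasis

variable {G S : Type*} [Group G] {F : Subgroup G}

/-- The Cayley graph of `G` with respect to a basis of a free subgroup has potentials. -/
theorem exists_cayley_potential (s : FreeGroupBasis S F) (ω : G × S → ℚ) :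
    ∃ f : G → ℚ, ∀ e : G × S, f (e.1 * s e.2) = f e.1 + ω e := by
  let act : MulAction F G :=
    { smul := fun w g => g * (w : G)⁻¹
      one_smul := fun g => by change g * ((1 : F) : G)⁻¹ = g; simp
      mul_smul := fun v w g => by
        change g * ((v * w : F) : G)⁻¹ = g * (w : G)⁻¹ * (v : G)⁻¹
        simp [mul_assoc] }
  obtain ⟨f, hf⟩ := @exists_forall_smul_eq_add S F G _ act s
    (fun h g hg => by
      have hg : g * (h : G)⁻¹ = g := hg
      simpa using hg)
    (fun i g => - ω (g * (s i : G)⁻¹, i))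
  refine ⟨f, fun e => ?_⟩
  have h : f (e.1 * s e.2 * (s e.2 : G)⁻¹) =
      f (e.1 * s e.2) + - ω (e.1 * s e.2 * (s e.2 : G)⁻¹, e.2) := hf e.2 (e.1 * s e.2)
  rw [mul_inv_cancel_right] at h
  linarith

/-- Edges of the Cayley graph can be ordered invariantly on every component. -/
theorem exists_cayley_linearOrder (s : FreeGroupBasis S F) :
    ∃ _ : LinearOrder (G × S), ∀ (h : G) (e f : G × S),
      (e.1 : G ⧸ F) = f.1 → e < f → (h * e.1, e.2) < (h * f.1, f.2) := by
  obtain ⟨_, hmul⟩ := FreeGroup.exists_linearOrder S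
  have hrep : ∀ g : G, (g : G ⧸ F).out⁻¹ * g ∈ F := fun g =>
    QuotientGroup.eq.1 (Quotient.out_eq (g : G ⧸ F))
  let p : G → F := fun g => ⟨(g : G ⧸ F).out⁻¹ * g, hrep g⟩
  let key : G × S → Cardinal ×ₗ (FreeGroup S ×ₗ Cardinal) := fun e =>
    toLex (embeddingToCardinal (e.1 : G ⧸ F), toLex (s.repr (p e.1), embeddingToCardinal e.2))
  have hkey : Function.Injective key := by
    rintro ⟨g, i⟩ ⟨g', i'⟩ h
    have h1 : embeddingToCardinal (g : G ⧸ F) = embeddingToCardinal (g' : G ⧸ F) :=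
      congrArg (fun t => (ofLex t).1) h
    have h2 : s.repr (p g) = s.repr (p g') := congrArg (fun t => (ofLex (ofLex t).2).1) h
    have h3 : embeddingToCardinal i = embeddingToCardinal i' :=
      congrArg (fun t => (ofLex (ofLex t).2).2) h
    have h4 : (g : G ⧸ F).out⁻¹ * g = (g' : G ⧸ F).out⁻¹ * g' :=
      congrArg Subtype.val (s.repr.injective h2)
    rw [embeddingToCardinal.injective h1] at h4
    rw [mul_left_cancel h4, embeddingToCardinal.injective h3]
  refine ⟨LinearOrder.lift' key hkey, fun h e f hef hlt => ?_⟩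
  have hlt : key e < key f := hlt
  change key (h * e.1, e.2) < key (h * f.1, f.2)
  have hhef : ((h * e.1 : G) : G ⧸ F) = ((h * f.1 : G) : G ⧸ F) :=
    congrArg (fun q : G ⧸ F => h • q) hef
  have hp : ∃ a : F, p (h * e.1) = a * p e.1 ∧ p (h * f.1) = a * p f.1 := by
    refine ⟨p (h * e.1) * (p e.1)⁻¹, by simp, Subtype.ext ?_⟩
    simp only [p, Subgroup.coe_mul, Subgroup.coe_inv, hhef, hef]
    group
  obtain ⟨a, ha, hb⟩ := hp
  simp only [key, Prod.Lex.toLex_lt_toLex, hef, hhef, ha, hb, lt_irrefl, true_and, false_or,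
    map_mul, mul_right_inj] at hlt ⊢
  exact hlt.imp_left (hmul _ _ _)

end FreeGroupBasis

/-- A group with a free subgroup `F` acts on a disjoint union of copies of the Cayley tree of `F`,
indexed by the cosets of `F`. -/
theorem exists_orderedForest.{u} {G : Type u} [Group G] (F : Subgroup G) [IsFreeGroup F] :
    ∃ (E : Type u) (_ : MulAction G E) (_ : LinearOrder E),
      Nonempty (OrderedForest G G E (G ⧸ F)) := by
  let s := IsFreeGroup.basis F
  obtain ⟨o, ho⟩ := s.exists_cayley_linearOrder
  let act : MulAction G (G × IsFreeGroup.Generators F) :=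
    { smul := fun g e => (g * e.1, e.2)
      one_smul := fun e => Prod.ext (one_mul e.1) rfl
      mul_smul := fun g h e => Prod.ext (mul_assoc g h e.1) rfl }
  let X : EdgeGraph G (G × IsFreeGroup.Generators F) := ⟨Prod.fst, fun e => e.1 * s e.2⟩
  have hconn : ∀ w : F, ∀ u : G, X.Conn Set.univ u (u * w) := by
    intro w
    have hw : w ∈ Subgroup.closure (Set.range s) := s.closure_range ▸ Subgroup.mem_top w
    induction hw using Subgroup.closure_induction with
    | mem x hx =>
      obtain ⟨i, rfl⟩ := hx
      exact fun u => EdgeGraph.Conn.of_joins (e := (u, i)) (Set.mem_univ _) (Or.inl ⟨rfl, rfl⟩)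
    | one => exact fun u => by simpa using EdgeGraph.Conn.refl u
    | mul x y _ _ hx hy =>
      intro u
      simpa [mul_assoc] using (hx u).trans (hy (u * x))
    | inv x _ hx =>
      intro u
      simpa using (hx (u * (x : G)⁻¹)).symm
  exact ⟨G × IsFreeGroup.Generators F, act, o, ⟨
    { X with
      comp := fun g => g
      src_smul := fun _ _ => rfl
      tgt_smul := fun h e => mul_assoc h e.1 _
      comp_smul := fun _ _ => rfl
      comp_tgt := fun e => QuotientGroup.mk_mul_of_mem e.1 (s e.2).2
      comp_surjective := QuotientGroup.mk_surjective
      conn := fun u v huv => by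
        simpa using hconn ⟨u⁻¹ * v, QuotientGroup.eq.1 huv⟩ u
      eq_one_of_smul_eq := fun h v hv => by simpa using hv
      exists_potential := fun ω => s.exists_cayley_potential ω
      smul_lt_smul := ho }⟩⟩

namespace SubMulAction

open MulAction

variable {H M : Type*} [Group H] [MulAction H M]

/-- The inclusion of an invariant subset, on the level of orbits. -/
def orbitQuotientMap (p : SubMulAction H M) : orbitRel.Quotient H p → orbitRel.Quotient H M :=
  Quotient.map (sa := orbitRel H p) (sb := orbitRel H M) Subtype.val (by
    rintro a b ⟨h, rfl⟩
    exact ⟨h, rfl⟩)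

theorem orbitQuotientMap_injective (p : SubMulAction H M) :
    Function.Injective p.orbitQuotientMap := by
  intro q r
  induction q using Quotient.inductionOn with | _ a
  induction r using Quotient.inductionOn with | _ b
  intro hab
  obtain ⟨h, hh⟩ : ∃ h : H, h • (b : M) = a := Quotient.exact hab
  exact Quotient.sound ⟨h, Subtype.ext hh⟩

theorem finite_orbitQuotient (p : SubMulAction H M)
    (hp : (Quotient.mk (orbitRel H M) '' p).Finite) : Finite (orbitRel.Quotient H p) := by
  refine Set.finite_range_iff p.orbitQuotientMap_injective |>.1 (hp.subset ?_)
  rintro _ ⟨q, rfl⟩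
  induction q using Quotient.inductionOn with | _ a
  exact ⟨a, a.2, rfl⟩

end SubMulAction

/-- The edges of `P` both of whose ends lie in infinite clusters of smaller edges of `P`. -/
def EdgeGraph.bridgesIn {V E : Type*} [LinearOrder E] (X : EdgeGraph V E) (P : Set E) : Set E :=
  {e ∈ P | (X.cluster (P ∩ Set.Iio e) (X.src e)).Infinite ∧
    (X.cluster (P ∩ Set.Iio e) (X.tgt e)).Infinite}

theorem EdgeGraph.bridgesIn_mono {V E : Type*} [LinearOrder E] {X : EdgeGraph V E} {P Q : Set E}
    (hPQ : P ⊆ Q) : X.bridgesIn P ⊆ X.bridgesIn Q := fun _ he =>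
  ⟨hPQ he.1, he.2.1.mono (cluster_mono (Set.inter_subset_inter_left _ hPQ)),
    he.2.2.mono (cluster_mono (Set.inter_subset_inter_left _ hPQ))⟩

namespace OrderedForest

open MulAction EdgeGraph

variable {G V E ι : Type*} [Group G] [MulAction G V] [MulAction G E] [MulAction G ι]
  [LinearOrder E] (X : OrderedForest G V E ι) (σ : ι → V)

/-- The set of edges `P` spans, in every component, an `H`-invariant subtree containing the chosen
base points and having finitely many orbits of edges. -/
structure IsCore (H : Subgroup G) (P : Set E) : Prop where
  smul_mem : ∀ h ∈ H, ∀ e ∈ P, h • e ∈ P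
  conn_section : ∀ h ∈ H, ∀ x, X.Conn P (σ (h • x)) (h • σ x)
  conn_src : ∀ e ∈ P, X.Conn P (σ (X.comp (X.src e))) (X.src e)
  finite : (Quotient.mk (orbitRel H E) '' P).Finite

variable {X σ} {H : Subgroup G} {P : Set E}

theorem conn_smul {Q : Set E} (h : G) (hPQ : ∀ e ∈ P, h • e ∈ Q) {u v : V} (huv : X.Conn P u v) :
    X.Conn Q (h • u) (h • v) :=
  huv.map (fun v => h • v) (fun e => h • e) (X.src_smul h) (X.tgt_smul h) hPQ

namespace IsCore

/-- The edges of a core as an invariant set. -/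
def edges (hP : X.IsCore σ H P) : SubMulAction H E where
  carrier := P
  smul_mem' h _ he := hP.smul_mem h h.2 _ he

/-- The vertices of a core as an invariant set. -/
def vertices (hP : X.IsCore σ H P) : SubMulAction H V where
  carrier := {v | X.Conn P (σ (X.comp v)) v}
  smul_mem' h v hv := by
    change X.Conn P (σ (X.comp ((h : G) • v))) ((h : G) • v)
    rw [X.comp_smul]
    exact (hP.conn_section h h.2 _).trans (conn_smul _ (hP.smul_mem h h.2) hv)

theorem src_mem (hP : X.IsCore σ H P) (e : hP.edges) : X.src e ∈ hP.vertices := hP.conn_src e e.2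

theorem mem_of_conn (hP : X.IsCore σ H P) {u v : V} (hu : u ∈ hP.vertices) (h : X.Conn P u v) :
    v ∈ hP.vertices := by
  change X.Conn P (σ (X.comp v)) v
  rw [← comp_eq_of_conn h]
  exact Conn.trans hu h

theorem tgt_mem (hP : X.IsCore σ H P) (e : hP.edges) : X.tgt e ∈ hP.vertices :=
  hP.mem_of_conn (hP.src_mem e) (Conn.of_joins e.2 (joins_src_tgt _))

/-- The graph spanned by a core. -/
def graph (hP : X.IsCore σ H P) : EdgeGraph hP.vertices hP.edges where
  src e := ⟨X.src e, hP.src_mem e⟩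
  tgt e := ⟨X.tgt e, hP.tgt_mem e⟩

theorem graph_conn (hP : X.IsCore σ H P) {Q : Set E} (u : hP.vertices) {v : V}
    (h : X.Conn (P ∩ Q) u v) :
    ∃ hv : v ∈ hP.vertices, hP.graph.Conn (Subtype.val ⁻¹' Q) u ⟨v, hv⟩ := by
  induction h with
  | refl => exact ⟨u.2, Conn.refl _⟩
  | tail _ hbc ih =>
    obtain ⟨e, he, hj⟩ := hbc
    obtain ⟨hb, hub⟩ := ih
    refine ⟨hP.mem_of_conn hb (Conn.of_joins he.1 hj), hub.tail (e := ⟨e, he.1⟩) he.2 ?_⟩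
    rcases hj with ⟨rfl, rfl⟩ | ⟨rfl, rfl⟩
    · exact Or.inl ⟨rfl, rfl⟩
    · exact Or.inr ⟨rfl, rfl⟩

theorem image_cluster (hP : X.IsCore σ H P) (Q : Set E) (v : hP.vertices) :
    Subtype.val '' hP.graph.cluster (Subtype.val ⁻¹' Q) v = X.cluster (P ∩ Q) v := by
  refine Set.Subset.antisymm ?_ fun w hw => ?_
  · rintro _ ⟨w, hw, rfl⟩
    exact Conn.map Subtype.val Subtype.val (fun _ => rfl) (fun _ => rfl)
      (fun e he => ⟨e.2, he⟩) hw
  · obtain ⟨hw', hconn⟩ := hP.graph_conn v hw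
    exact ⟨⟨w, hw'⟩, hconn, rfl⟩

/-- The forest spanned by a core. -/
def forest (hP : X.IsCore σ H P) (hσ : ∀ x, X.comp (σ x) = x) :
    OrderedForest H hP.vertices hP.edges ι where
  toEdgeGraph := hP.graph
  comp v := X.comp v
  src_smul h e := Subtype.ext (X.src_smul h e)
  tgt_smul h e := Subtype.ext (X.tgt_smul h e)
  comp_smul h v := X.comp_smul h v
  comp_tgt e := X.comp_tgt e
  comp_surjective x := ⟨⟨σ x, by
    change X.Conn P (σ (X.comp (σ x))) (σ x)
    rw [hσ]
    exact Conn.refl _⟩, hσ x⟩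
  conn u v huv := by
    have hu : X.Conn P (σ (X.comp u)) u := u.2
    have hv : X.Conn P (σ (X.comp v)) v := v.2
    rw [← huv] at hv
    obtain ⟨_, h⟩ := hP.graph_conn (Q := Set.univ) u (v := v) (by
      rw [Set.inter_univ]
      exact hu.symm.trans hv)
    exact h
  eq_one_of_smul_eq h v hv := Subtype.ext (X.eq_one_of_smul_eq h v (congrArg Subtype.val hv))
  exists_potential ω := by
    classical
    obtain ⟨f, hf⟩ := X.exists_potential fun e => if he : e ∈ P then ω ⟨e, he⟩ else 0
    refine ⟨fun v => f v, fun e => ?_⟩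
    have he : (e : E) ∈ P := e.2
    have := hf e
    rw [dif_pos he] at this
    exact this
  smul_lt_smul h e f hef hlt := X.smul_lt_smul h e f hef hlt

theorem image_bridges (hP : X.IsCore σ H P) (hσ : ∀ x, X.comp (σ x) = x) :
    Subtype.val '' (hP.forest hσ).bridges = X.bridgesIn P := by
  have key : ∀ (e : hP.edges) (v : hP.vertices),
      (hP.graph.cluster (Set.Iio e) v).Infinite ↔ (X.cluster (P ∩ Set.Iio (e : E)) v).Infinite := by
    intro e v
    rw [← hP.image_cluster, Set.infinite_image_iff Subtype.val_injective.injOn]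
    rfl
  ext e
  constructor
  · rintro ⟨e, ⟨hs, ht⟩, rfl⟩
    exact ⟨e.2, (key e _).1 hs, (key e _).1 ht⟩
  · rintro ⟨he, hs, ht⟩
    exact ⟨⟨e, he⟩, ⟨(key ⟨e, he⟩ ⟨_, hP.src_mem ⟨e, he⟩⟩).2 hs,
      (key ⟨e, he⟩ ⟨_, hP.tgt_mem ⟨e, he⟩⟩).2 ht⟩, rfl⟩

theorem finite_vertices [Finite ι] (hP : X.IsCore σ H P) :
    (Quotient.mk (orbitRel H V) '' hP.vertices).Finite := by
  have key : ∀ p : E → V, (∀ (h : G) e, p (h • e) = h • p e) →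
      (Quotient.mk (orbitRel H V) '' (p '' P)).Finite := by
    intro p hp
    refine (hP.finite.image (Quotient.map (sa := orbitRel H E) (sb := orbitRel H V) p ?_)).subset ?_
    · rintro a b ⟨h, rfl⟩
      exact ⟨h, (hp h b).symm⟩
    · rintro _ ⟨_, ⟨e, he, rfl⟩, rfl⟩
      exact ⟨_, ⟨e, he, rfl⟩, rfl⟩
  refine (((Set.finite_range σ).image (Quotient.mk (orbitRel H V))).union
    ((key X.src X.src_smul).union (key X.tgt X.tgt_smul))).subset ?_
  rintro _ ⟨v, hv, rfl⟩
  rcases Relation.ReflTransGen.cases_tail (show X.Conn P (σ (X.comp v)) v from hv) with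
    h | ⟨w, -, e, he, ⟨-, h⟩ | ⟨h, -⟩⟩
  · exact Or.inl ⟨v, ⟨X.comp v, h.symm⟩, rfl⟩
  · exact Or.inr (Or.inr ⟨v, ⟨e, he, h⟩, rfl⟩)
  · exact Or.inr (Or.inl ⟨v, ⟨e, he, h⟩, rfl⟩)

/-- The number of orbits of bridges of a core computes the rank of a free group. -/
theorem ncard_image_bridgesIn_add {B : Type*} [Finite ι] [Nonempty ι] [Infinite H]
    (hP : X.IsCore σ H P) (hσ : ∀ x, X.comp (σ x) = x) (b : FreeGroupBasis B H) :
    Finite B ∧ (Quotient.mk (orbitRel H E) '' X.bridgesIn P).ncard + Nat.card ι =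
      Nat.card B * Nat.card ι := by
  have : Finite (orbitRel.Quotient H hP.vertices) :=
    hP.vertices.finite_orbitQuotient hP.finite_vertices
  have : Finite (orbitRel.Quotient H hP.edges) := hP.edges.finite_orbitQuotient hP.finite
  have hcard : (Quotient.mk (orbitRel H E) '' X.bridgesIn P).ncard =
      (Quotient.mk (orbitRel H hP.edges) '' (hP.forest hσ).bridges).ncard := by
    rw [← Set.ncard_image_of_injective _ hP.edges.orbitQuotientMap_injective,
      ← hP.image_bridges hσ, Set.image_image, Set.image_image]
    rfl
  rw [hcard]
  exact (hP.forest hσ).ncard_image_bridges_add b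

end IsCore

/-- Finitely generated subgroups have cores. -/
theorem exists_isCore [Finite ι] (hσ : ∀ x, X.comp (σ x) = x) (hH : H.FG) :
    ∃ P, X.IsCore σ H P := by
  obtain ⟨T, rfl⟩ := hH
  have hpath : ∀ (t : G) (x : ι), ∃ Q : Set E, Q.Finite ∧ X.Conn Q (σ (t • x)) (t • σ x) := by
    intro t x
    obtain ⟨Q, -, hQ⟩ := (X.conn (σ (t • x)) (t • σ x) (by
      rw [X.comp_smul, hσ, hσ])).exists_finite
    exact ⟨Q, hQ⟩
  choose Q hQ hconn using hpath
  set H := Subgroup.closure (T : Set G)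
  set E₀ : Set E := ⋃ t ∈ T, ⋃ x, Q t x
  have hE₀ : E₀.Finite := T.finite_toSet.biUnion fun t _ => Set.finite_iUnion (hQ t)
  set P₀ : Set E := {e | ∃ h ∈ H, ∃ e₀ ∈ E₀, h • e₀ = e}
  have hP₀ : ∀ h ∈ H, ∀ e ∈ P₀, h • e ∈ P₀ := by
    rintro h hh _ ⟨g, hg, e₀, he₀, rfl⟩
    exact ⟨h * g, H.mul_mem hh hg, e₀, he₀, mul_smul h g e₀⟩
  have hE₀P₀ : E₀ ⊆ P₀ := fun e he => ⟨1, H.one_mem, e, he, one_smul G e⟩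
  have hsec : ∀ h ∈ H, ∀ x, X.Conn P₀ (σ (h • x)) (h • σ x) := by
    intro h hh
    induction hh using Subgroup.closure_induction with
    | mem t ht =>
      exact fun x => (hconn t x).mono fun e he =>
        hE₀P₀ (Set.mem_biUnion ht (Set.mem_iUnion.2 ⟨x, he⟩))
    | one => exact fun x => by simpa using Conn.refl _
    | mul a b ha _ hca hcb =>
      intro x
      rw [mul_smul, mul_smul]
      exact (hca (b • x)).trans (conn_smul a (hP₀ a ha) (hcb x))
    | inv a ha hca =>
      intro x
      have := conn_smul a⁻¹ (hP₀ a⁻¹ (H.inv_mem ha)) (hca (a⁻¹ • x))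
      simpa using this.symm
  set P : Set E := {e ∈ P₀ | X.Conn P₀ (σ (X.comp (X.src e))) (X.src e)}
  have hP : ∀ {x v}, X.Conn P₀ (σ x) v → X.Conn P (σ x) v := by
    intro x v h
    induction h with
    | refl => exact Conn.refl _
    | @tail a b hxa hab ih =>
      obtain ⟨e, he, hj⟩ := hab
      have hxa : X.Conn P₀ (σ x) a := hxa
      have hsrc : X.Conn P₀ (σ x) (X.src e) := by
        rcases hj with ⟨rfl, -⟩ | ⟨rfl, rfl⟩
        · exact hxa
        · exact hxa.tail he (joins_src_tgt e).symm
      refine ih.tail ⟨he, ?_⟩ hj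
      rwa [← comp_eq_of_conn hsrc, hσ]
  refine ⟨P, ?_, fun h hh x => hP (hsec h hh x), fun e he => hP he.2, ?_⟩
  · rintro h hh e ⟨he, hconn⟩
    refine ⟨hP₀ h hh e he, ?_⟩
    rw [X.src_smul, X.comp_smul]
    exact (hsec h hh _).trans (conn_smul h (hP₀ h hh) hconn)
  · refine (hE₀.image (Quotient.mk (orbitRel H E))).subset ?_
    rintro _ ⟨_, ⟨⟨h, hh, e₀, he₀, rfl⟩, -⟩, rfl⟩
    exact ⟨e₀, he₀, Quotient.sound ⟨⟨h⁻¹, H.inv_mem hh⟩, inv_smul_smul h e₀⟩⟩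

/-- The pair of orbits under two subgroups of an orbit under their intersection. -/
def orbitQuotientProd (E : Type*) [MulAction G E] (A B : Subgroup G) :
    orbitRel.Quotient ↥(A ⊓ B) E → orbitRel.Quotient A E × orbitRel.Quotient B E :=
  Quotient.lift (s := orbitRel ↥(A ⊓ B) E)
    (fun e => (Quotient.mk (orbitRel A E) e, Quotient.mk (orbitRel B E) e)) (by
      rintro a b ⟨h, rfl⟩
      exact Prod.ext (Quotient.sound ⟨⟨h, h.2.1⟩, rfl⟩) (Quotient.sound ⟨⟨h, h.2.2⟩, rfl⟩))

theorem orbitQuotientProd_injective (X : OrderedForest G V E ι) (A B : Subgroup G) :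
    Function.Injective (orbitQuotientProd E A B) := by
  intro q r
  induction q using Quotient.inductionOn with | _ e
  induction r using Quotient.inductionOn with | _ f
  intro h
  obtain ⟨a, ha⟩ : ∃ a : A, a • f = e := Quotient.exact (congrArg Prod.fst h)
  obtain ⟨b, hb⟩ : ∃ b : B, b • f = e := Quotient.exact (congrArg Prod.snd h)
  have hab : (b : G)⁻¹ * a = 1 := X.eq_one_of_smul_edge_eq _ f (by
    rw [mul_smul, inv_smul_eq_iff]
    exact ha.trans hb.symm)
  have hmem : (a : G) ∈ A ⊓ B := ⟨a.2, by rw [← inv_mul_eq_one.1 hab]; exact b.2⟩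
  exact Quotient.sound ⟨⟨a, hmem⟩, ha⟩

theorem image_orbitQuotientProd_subset {E : Type*} [MulAction G E] (A B : Subgroup G)
    {R P Q : Set E} (hP : R ⊆ P) (hQ : R ⊆ Q) :
    orbitQuotientProd E A B '' (Quotient.mk (orbitRel ↥(A ⊓ B) E) '' R) ⊆
      (Quotient.mk (orbitRel A E) '' P) ×ˢ (Quotient.mk (orbitRel B E) '' Q) := by
  rintro _ ⟨_, ⟨e, he, rfl⟩, rfl⟩
  exact ⟨⟨e, hP he, rfl⟩, ⟨e, hQ he, rfl⟩⟩

/-- The intersection of cores of two subgroups is a core of the intersection of the subgroups. -/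
theorem IsCore.inter {A B : Subgroup G} {Q : Set E} (hP : X.IsCore σ A P) (hQ : X.IsCore σ B Q) :
    X.IsCore σ (A ⊓ B) (P ∩ Q) where
  smul_mem h hh e he := ⟨hP.smul_mem h hh.1 e he.1, hQ.smul_mem h hh.2 e he.2⟩
  conn_section h hh x :=
    X.isAcyclic.conn_inter (hP.conn_section h hh.1 x) (hQ.conn_section h hh.2 x)
  conn_src e he := X.isAcyclic.conn_inter (hP.conn_src e he.1) (hQ.conn_src e he.2)
  finite := Set.Finite.of_finite_image ((hP.finite.prod hQ.finite).subset
    (image_orbitQuotientProd_subset A B Set.inter_subset_left Set.inter_subset_right))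
    (X.orbitQuotientProd_injective A B).injOn

theorem IsCore.ncard_image_bridgesIn_inter_le {A B : Subgroup G} {Q : Set E}
    (hP : X.IsCore σ A P) (hQ : X.IsCore σ B Q) :
    (Quotient.mk (orbitRel ↥(A ⊓ B) E) '' X.bridgesIn (P ∩ Q)).ncard ≤
      (Quotient.mk (orbitRel A E) '' X.bridgesIn P).ncard *
        (Quotient.mk (orbitRel B E) '' X.bridgesIn Q).ncard := by
  rw [← Set.ncard_image_of_injective _ (X.orbitQuotientProd_injective A B), ← Set.ncard_prod]
  refine Set.ncard_le_ncard (image_orbitQuotientProd_subset A B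
    (bridgesIn_mono Set.inter_subset_left) (bridgesIn_mono Set.inter_subset_right)) ?_
  exact (hP.finite.subset (Set.image_mono fun _ he => he.1)).prod
    (hQ.finite.subset (Set.image_mono fun _ he => he.1))

end OrderedForest

theorem FreeGroupBasis.card_le_of_closure_eq_top {B H : Type*} [Group H] [Finite B]
    (b : FreeGroupBasis B H) (s : Finset H) (hs : Subgroup.closure (s : Set H) = ⊤) :
    Nat.card B ≤ s.card := by
  classical
  cases nonempty_fintype B
  let ε : H →* Multiplicative (B → ℚ) := b.lift fun i => Multiplicative.ofAdd (Pi.single i 1)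
  have hε : ∀ i, ε (b i) = Multiplicative.ofAdd (Pi.single i 1) := fun i => by simp [ε]
  have hmem : ∀ h, (ε h).toAdd ∈ Submodule.span ℚ
      ((s.image fun h => (ε h).toAdd : Finset (B → ℚ)) : Set (B → ℚ)) := by
    intro h
    have hh : h ∈ Subgroup.closure (s : Set H) := hs ▸ Subgroup.mem_top h
    induction hh using Subgroup.closure_induction with
    | mem x hx => exact Submodule.subset_span (Finset.mem_coe.2 (Finset.mem_image_of_mem _ hx))
    | one => simp
    | mul x y _ _ hx hy => simpa using Submodule.add_mem _ hx hy
    | inv x _ hx => simpa using hx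
  have htop : Submodule.span ℚ
      ((s.image fun h => (ε h).toAdd : Finset (B → ℚ)) : Set (B → ℚ)) = ⊤ := by
    rw [eq_top_iff, ← (Pi.basisFun ℚ B).span_eq, Submodule.span_le]
    rintro _ ⟨i, rfl⟩
    simpa [hε] using hmem (b i)
  have h1 := finrank_span_finset_le_card (R := ℚ) (s.image fun h => (ε h).toAdd)
  rw [Set.finrank, htop, finrank_top, Module.finrank_pi] at h1
  rw [Nat.card_eq_fintype_card]
  exact h1.trans Finset.card_image_le

theorem FreeGroupBasis.card_le_grank {B H : Type*} [Group H] [Finite B] (b : FreeGroupBasis B H) :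
    (Nat.card B : ℕ∞) ≤ grank H := by
  refine le_sInf ?_
  rintro _ ⟨s, hs, rfl⟩
  exact_mod_cast b.card_le_of_closure_eq_top s hs

theorem FreeGroupBasis.grank_le_card {B H : Type*} [Group H] [Finite B] (b : FreeGroupBasis B H) :
    grank H ≤ Nat.card B := by
  classical
  cases nonempty_fintype B
  have h1 : grank H ≤ (Finset.univ.image b).card :=
    sInf_le ⟨Finset.univ.image b, by simpa using b.closure_range, rfl⟩
  refine h1.trans ?_
  rw [Nat.card_eq_fintype_card]
  exact_mod_cast Finset.card_image_le

theorem FreeGroupBasis.infinite {B H : Type*} [Group H] [Nontrivial H] (b : FreeGroupBasis B H) :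
    Infinite H := by
  have : Nonempty B := by
    by_contra hB
    have : IsEmpty B := not_nonempty_iff.1 hB
    exact not_subsingleton H b.repr.toEquiv.subsingleton
  exact Infinite.of_injective b.repr.symm b.repr.symm.injective

/-- If `G` contains a free subgroup `F` of finite index, and `A, B` are finitely generated
free subgroups of `G`, then `r̄ank(A ∩ B) ≤ [G:F] ⬝ r̄ank(A) ⬝ r̄ank(B)`, where
`r̄ank(H) = max (0, rank H - 1)`. -/
theorem virtually_free_hanna_neumann_free_subgroups
    {G : Type*} [Group G] (F : Subgroup G) [IsFreeGroup F] [F.FiniteIndex]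
    (A B : Subgroup G) [IsFreeGroup A] [IsFreeGroup B] [Group.FG A] [Group.FG B] :
    grank ↥(A ⊓ B) - 1 ≤ (F.index : ℕ∞) * (grank A - 1) * (grank B - 1) := by
  cases subsingleton_or_nontrivial ↥(A ⊓ B) with
  | inl h =>
    have h0 : grank ↥(A ⊓ B) ≤ 0 := sInf_le ⟨∅, Subsingleton.elim _ _, by simp⟩
    simp [nonpos_iff_eq_zero.1 h0]
  | inr h =>
    have : IsFreeGroup ↥(A ⊓ B) :=
      IsFreeGroup.ofMulEquiv (Subgroup.subgroupOfEquivOfLe (inf_le_left : A ⊓ B ≤ A))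
    have hC : Infinite ↥(A ⊓ B) := (IsFreeGroup.basis ↥(A ⊓ B)).infinite
    have hA : Infinite A :=
      Infinite.of_injective _ (Subgroup.inclusion_injective (inf_le_left : A ⊓ B ≤ A))
    have hB : Infinite B :=
      Infinite.of_injective _ (Subgroup.inclusion_injective (inf_le_right : A ⊓ B ≤ B))
    obtain ⟨E, _, _, ⟨X⟩⟩ := exists_orderedForest F
    have hσ : ∀ x : G ⧸ F, X.comp (Function.surjInv X.comp_surjective x) = x :=
      Function.surjInv_eq X.comp_surjective
    obtain ⟨P, hP⟩ := OrderedForest.exists_isCore hσ ((Group.fg_iff_subgroup_fg A).1 ‹_›)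
    obtain ⟨Q, hQ⟩ := OrderedForest.exists_isCore hσ ((Group.fg_iff_subgroup_fg B).1 ‹_›)
    obtain ⟨_, hcA⟩ := hP.ncard_image_bridgesIn_add hσ (IsFreeGroup.basis A)
    obtain ⟨_, hcB⟩ := hQ.ncard_image_bridgesIn_add hσ (IsFreeGroup.basis B)
    obtain ⟨_, hcC⟩ := (hP.inter hQ).ncard_image_bridgesIn_add hσ (IsFreeGroup.basis ↥(A ⊓ B))
    have hle := hP.ncard_image_bridgesIn_inter_le hQ
    have hn : Nat.card (G ⧸ F) = F.index := rfl
    have hpos : 0 < F.index := Nat.pos_of_ne_zero Subgroup.FiniteIndex.index_ne_zero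
    rw [hn] at hcA hcB hcC
    set a := Nat.card (IsFreeGroup.Generators A)
    set b := Nat.card (IsFreeGroup.Generators B)
    set c := Nat.card (IsFreeGroup.Generators ↥(A ⊓ B))
    have hnat : c - 1 ≤ F.index * (a - 1) * (b - 1) := by
      refine Nat.le_of_mul_le_mul_right ?_ hpos
      rw [show F.index * (a - 1) * (b - 1) * F.index =
        ((a - 1) * F.index) * ((b - 1) * F.index) by ring]
      rw [Nat.sub_one_mul, Nat.sub_one_mul, Nat.sub_one_mul, ← hcA, ← hcB, ← hcC]
      simpa using hle
    calc grank ↥(A ⊓ B) - 1 ≤ (c : ℕ∞) - 1 :=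
          tsub_le_tsub_right (IsFreeGroup.basis ↥(A ⊓ B)).grank_le_card 1
      _ ≤ (F.index : ℕ∞) * ((a : ℕ∞) - 1) * ((b : ℕ∞) - 1) := by exact_mod_cast hnat
      _ ≤ (F.index : ℕ∞) * (grank A - 1) * (grank B - 1) := by
          gcongr
          · exact (IsFreeGroup.basis A).card_le_grank
          · exact (IsFreeGroup.basis B).card_le_grank
end
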